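/- Let n ≥ 1, let ν > −1/2 be real, and let ã ∈ (0,∞)ⁿ have pairwise distinct entries. Set Z := ∫_{M_{2n}(ℝ)} (det g gᵀ)^ν · exp(−Tr(g gᵀ)/2) dg (a finite positive number). Then, for every invariant test function φ, (1/Z) · ∫_{M_{2n}(ℝ)} φ(g · D(ã) · gᵀ) · (det g gᵀ)^ν · exp(−Tr(g gᵀ)/2) dg = ∫_{(0,∞)ⁿ} φ(D(a)) · p(a) da, where p(a) = (1/n!) · (∏_{l=0}^{n−1} 1/Γ(2ν+2l+1)) · (Δ_n(a²)/Δ_n(ã²)) · (∏_j a_j^{2ν} / ∏_j ã_j^{2ν+1}) · det[exp(−a_j/ã_k)]_{j,k=1,…,n}. -/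

import Mathlib

open MeasureTheory Matrix
open scoped BigOperators

noncomputable section

instance matrixMeasurableSpace {l : Type*} [Fintype l] : MeasurableSpace (Matrix l l ℝ) :=
  inferInstanceAs (MeasurableSpace (l → l → ℝ))

/-- The `2n × 2n` real antisymmetric matrix `D(a) = diag(a₁ J, …, aₙ J)`,
`J = [[0,1],[-1,0]]`. -/
def Dmat {n : ℕ} (a : Fin n → ℝ) : Matrix (Fin (2 * n)) (Fin (2 * n)) ℝ :=
  Matrix.of fun i j =>
    if i.val / 2 = j.val / 2 then
      a ⟨i.val / 2, by have := i.isLt; omega⟩ *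
        (if i.val % 2 = 0 ∧ j.val % 2 = 1 then 1
          else if i.val % 2 = 1 ∧ j.val % 2 = 0 then -1 else 0)
    else 0

/-- Vandermonde product `Δ_m(x) = ∏_{j<k} (x_k - x_j)`. -/
def vdm {m : ℕ} {R : Type*} [CommRing R] (x : Fin m → R) : R :=
  ∏ p ∈ Finset.univ.filter (fun p : Fin m × Fin m => p.1 < p.2), (x p.2 - x p.1)

/-- A bounded measurable `O(m)`-invariant test function on antisymmetric matrices. -/
def IsInvTest (m : ℕ) (φ : Matrix (Fin m) (Fin m) ℝ → ℝ) : Prop :=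
  Measurable φ ∧ (∃ C, ∀ X, |φ X| ≤ C) ∧
    ∀ X : Matrix (Fin m) (Fin m) ℝ, Xᵀ = -X →
      ∀ k ∈ Matrix.orthogonalGroup (Fin m) ℝ, φ (k * X * kᵀ) = φ X

/-- The (unnormalized) induced real Ginibre density `(det ggᵀ)^ν e^{-Tr ggᵀ/2}` in
coordinates. -/
def ginDens (n : ℕ) (ν : ℝ) (u : Fin (2 * n) → Fin (2 * n) → ℝ) : ℝ :=
  ((Matrix.of u * (Matrix.of u)ᵀ).det) ^ ν *
    Real.exp (-(Matrix.of u * (Matrix.of u)ᵀ).trace / 2)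

namespace GinP
open MvPolynomial ProbabilityTheory

/-- standard Gaussian product measure -/
def gam (κ : Type*) [Fintype κ] : Measure (κ → ℝ) := Measure.pi (fun _ => gaussianReal 0 1)

instance (κ : Type*) [Fintype κ] : IsProbabilityMeasure (gam κ) := by
  unfold gam; infer_instance

def gmom (k : ℕ) : ℝ := ∫ x, x ^ k ∂(gaussianReal 0 1)

lemma gint (k : ℕ) : Integrable (fun x : ℝ => x ^ k) (gaussianReal 0 1) := by
  have := (memLp_id_gaussianReal (μ := 0) (v := 1) k)
  by_cases hk : k = 0
  · subst hk; simp
  · exact (this.integrable_norm_pow hk).mono' (by fun_prop) (by simp)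

variable {κ : Type*} [Fintype κ]

lemma eval_monomial_prod (v : κ → ℝ) (s : κ →₀ ℕ) (c : ℝ) :
    eval v (monomial s c) = c * ∏ i, v i ^ s i := by
  rw [eval_monomial, Finsupp.prod_fintype]; simp

lemma integrable_poly (p : MvPolynomial κ ℝ) : Integrable (fun v => eval v p) (gam κ) := by
  induction p using MvPolynomial.induction_on' with
  | monomial s c =>
    simp_rw [eval_monomial_prod]
    exact (Integrable.fintype_prod (f := fun i x => x ^ s i) (fun i => gint (s i))).const_mul c
  | add p q hp hq => simp only [map_add]; exact hp.add hq

def Ex : MvPolynomial κ ℝ →ₗ[ℝ] ℝ where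
  toFun p := ∫ v, eval v p ∂(gam κ)
  map_add' p q := by simp [integral_add (integrable_poly p) (integrable_poly q)]
  map_smul' c p := by simp [integral_const_mul]

lemma Ex_apply (p : MvPolynomial κ ℝ) : Ex p = ∫ v, eval v p ∂(gam κ) := rfl

lemma Ex_monomial (s : κ →₀ ℕ) (c : ℝ) : Ex (monomial s c) = c * ∏ i, gmom (s i) := by
  rw [Ex_apply]; simp_rw [eval_monomial_prod]
  rw [integral_const_mul]
  congr 1
  exact integral_fintype_prod_eq_prod (𝕜 := ℝ) (f := fun i x => x ^ s i)

@[simp] lemma Ex_one : Ex (1 : MvPolynomial κ ℝ) = 1 := by simp [Ex_apply]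

@[simp] lemma Ex_C (c : ℝ) : Ex (C c : MvPolynomial κ ℝ) = c := by simp [Ex_apply]

lemma Ex_C_mul (c : ℝ) (p : MvPolynomial κ ℝ) : Ex (C c * p) = c * Ex p := by
  rw [← smul_eq_C_mul]; simp

lemma gmom_zero : gmom 0 = 1 := by simp [gmom]
lemma gmom_one : gmom 1 = 0 := by simp [gmom]

lemma gauss_hasDerivAt (x : ℝ) : HasDerivAt (gaussianPDFReal 0 1) (-x * gaussianPDFReal 0 1 x) x := by
  have : gaussianPDFReal 0 1 = fun x => (√(2 * Real.pi * 1))⁻¹ * Real.exp (-x^2/2) := by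
    ext x; simp [gaussianPDFReal]
  rw [this]
  have h : HasDerivAt (fun x : ℝ => -x^2/2) (-x) x := by
    have := ((hasDerivAt_pow 2 x).neg.div_const 2)
    refine this.congr_deriv ?_; simp; ring
  have := (h.exp.const_mul ((√(2 * Real.pi * 1))⁻¹))
  refine this.congr_deriv ?_; ring

lemma gint' (k : ℕ) : Integrable (fun x : ℝ => x ^ k * gaussianPDFReal 0 1 x) := by
  have h := gint k
  rw [gaussianReal_of_var_ne_zero 0 one_ne_zero] at h
  have := (integrable_withDensity_iff_integrable_smul₀' (by fun_prop)
    (ae_of_all _ (fun x => by simp [gaussianPDF]))).1 h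
  refine this.congr (ae_of_all _ fun x => ?_)
  simp [gaussianPDF, ENNReal.toReal_ofReal (gaussianPDFReal_nonneg _ _ _), mul_comm]

lemma gmom_eq (k : ℕ) : gmom k = ∫ x : ℝ, x ^ k * gaussianPDFReal 0 1 x := by
  rw [gmom, integral_gaussianReal_eq_integral_smul one_ne_zero]
  simp [mul_comm]

lemma gmom_succ (k : ℕ) : gmom (k + 2) = (k + 1) * gmom k := by
  rw [gmom_eq, gmom_eq]
  have key := integral_mul_deriv_eq_deriv_mul_of_integrable (u := fun x : ℝ => x ^ (k+1))
    (v := gaussianPDFReal 0 1) (u' := fun x => (k + 1) * x ^ k)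
    (v' := fun x => -x * gaussianPDFReal 0 1 x)
    (fun x _ => by simpa using hasDerivAt_pow (k+1) x) (fun x _ => gauss_hasDerivAt x)
    ?_ ?_ ?_
  · have h1 : (fun x : ℝ => x ^ (k+1) * (-x * gaussianPDFReal 0 1 x))
        = fun x => - (x ^ (k+2) * gaussianPDFReal 0 1 x) := by ext x; ring
    rw [h1, integral_neg] at key
    rw [← integral_const_mul]
    have := neg_injective key
    rw [this]; congr 1; ext x; ring
  · refine (gint' (k+2)).neg.congr (ae_of_all _ fun x => ?_)
    simp; ring
  · refine ((gint' k).const_mul (k+1)).congr (ae_of_all _ fun x => ?_)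
    simp; ring
  · exact gint' (k+1)

lemma gmom_succ' (k : ℕ) : gmom (k + 1) = k * gmom (k - 1) := by
  cases k with
  | zero => simp [gmom_one]
  | succ k => simpa using gmom_succ k

variable [DecidableEq κ]

/-- Gaussian integration by parts -/
lemma Ex_X_mul (i : κ) (p : MvPolynomial κ ℝ) : Ex (X i * p) = Ex (pderiv i p) := by
  induction p using MvPolynomial.induction_on' with
  | monomial s c =>
    rw [pderiv_monomial, X, monomial_mul, Ex_monomial, Ex_monomial,
      ← Finset.mul_prod_erase _ _ (Finset.mem_univ i), ← Finset.mul_prod_erase _ _ (Finset.mem_univ i)]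
    have h : ∀ j ∈ Finset.univ.erase i, gmom ((Finsupp.single i 1 + s : κ →₀ ℕ) j)
        = gmom ((s - Finsupp.single i 1 : κ →₀ ℕ) j) := by
      intro j hj
      have : i ≠ j := (Finset.ne_of_mem_erase hj).symm
      simp [this]
    rw [Finset.prod_congr rfl h]
    have h2 : (Finsupp.single i 1 + s : κ →₀ ℕ) i = s i + 1 := by simp [add_comm]
    have h3 : (s - Finsupp.single i 1 : κ →₀ ℕ) i = s i - 1 := by simp
    rw [h2, h3, gmom_succ']; ring
  | add p q hp hq => simp [mul_add, hp, hq]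

/-- uniqueness -/
lemma Ex_unique (L : MvPolynomial κ ℝ →ₗ[ℝ] ℝ) (h1 : L 1 = 1)
    (h : ∀ i p, L (X i * p) = L (pderiv i p)) (p : MvPolynomial κ ℝ) : L p = Ex p := by
  suffices H : ∀ N (s : κ →₀ ℕ), s.degree = N → L (monomial s 1) = Ex (monomial s 1) by
    induction p using MvPolynomial.induction_on' with
    | monomial s c =>
      have : monomial s c = c • monomial s (1:ℝ) := by simp [smul_monomial]
      rw [this, map_smul, map_smul, H _ s rfl]
    | add p q hp hq => simp [hp, hq]
  intro N
  induction N using Nat.strong_induction_on with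
  | _ N ih =>
    intro s hs
    by_cases h0 : s = 0
    · subst h0; simpa using h1
    · obtain ⟨i, hi⟩ : ∃ i, s i ≠ 0 := by
        by_contra hc; push Not at hc; exact h0 (Finsupp.ext hc)
      obtain ⟨t, rfl⟩ : ∃ t, s = Finsupp.single i 1 + t :=
        ⟨s - Finsupp.single i 1, by
          rw [add_tsub_cancel_of_le]; simpa using Nat.one_le_iff_ne_zero.2 hi⟩
      have e : monomial (Finsupp.single i 1 + t) (1:ℝ) = X i * monomial t 1 := by
        rw [X, monomial_mul, one_mul]
      rw [e, h, Ex_X_mul, pderiv_monomial]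
      have e2 : monomial (t - Finsupp.single i 1) (1 * (t i : ℝ))
          = (t i : ℝ) • monomial (t - Finsupp.single i 1) (1:ℝ) := by simp [smul_monomial]
      rw [e2, map_smul, map_smul]
      by_cases ht : t i = 0
      · simp [ht]
      · congr 1
        refine ih _ ?_ _ rfl
        have hle : (t - Finsupp.single i 1).degree ≤ t.degree := by
          apply Finsupp.degree_mono; exact tsub_le_self
        rw [← hs]; simp; omega

end GinP

namespace GinP
open MvPolynomial ProbabilityTheory

section det
variable {κ : Type*} [Fintype κ] [DecidableEq κ]

def dl (p q r s : κ) : MvPolynomial κ ℝ := X p * X s - X q * X r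

lemma Ex_dl_pow (p q r s : κ) (hpq : p ≠ q) (hpr : p ≠ r) (hps : p ≠ s) (hqr : q ≠ r) (hqs : q ≠ s)
    (hrs : r ≠ s) (F : MvPolynomial κ ℝ) (hp : pderiv p F = 0) (hq : pderiv q F = 0)
    (hr : pderiv r F = 0) (hs : pderiv s F = 0) (k : ℕ) :
    Ex (F * dl p q r s ^ (k + 1)) = k * (k + 1) * Ex (F * dl p q r s ^ (k - 1)) := by
  set δ := dl p q r s with hδ
  have dp : pderiv p δ = X s := by
    simp [hδ, dl, pderiv_X, Pi.single_apply, hpq.symm, hpr.symm, hps.symm]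
  have dq : pderiv q δ = - X r := by
    simp [hδ, dl, pderiv_X, Pi.single_apply, hpq, hqr.symm, hqs.symm]
  have dr : pderiv r δ = - X q := by
    simp [hδ, dl, pderiv_X, Pi.single_apply, hpr, hqr, hrs.symm]
  have ds : pderiv s δ = X p := by
    simp [hδ, dl, pderiv_X, Pi.single_apply, hps, hqs, hrs]
  have e1 : F * δ ^ (k+1) = X p * (X s * F * δ ^ k) - X q * (X r * F * δ ^ k) := by
    rw [pow_succ]; conv_lhs => rw [hδ]
    nth_rewrite 2 [dl]; ring
  have e2 : Ex (F * δ ^ (k+1)) = k * (Ex (X s * (X s * F * δ ^ (k-1)))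
      + Ex (X r * (X r * F * δ ^ (k-1)))) := by
    rw [e1, map_sub, Ex_X_mul, Ex_X_mul]
    have a1 : pderiv p (X s * F * δ ^ k) = C (k:ℝ) * (X s * (X s * F * δ ^ (k-1))) := by
      simp [Derivation.leibniz_pow, hp, dp, pderiv_X, Pi.single_apply, hps.symm]; ring
    have a2 : pderiv q (X r * F * δ ^ k) = - (C (k:ℝ) * (X r * (X r * F * δ ^ (k-1)))) := by
      simp [Derivation.leibniz_pow, hq, dq, pderiv_X, Pi.single_apply, hqr.symm]; ring
    rw [a1, a2, map_neg, Ex_C_mul, Ex_C_mul]; ring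
  rw [e2]
  cases k with
  | zero => simp
  | succ m =>
    simp only [Nat.add_sub_cancel]
    rw [Ex_X_mul, Ex_X_mul]
    have a1 : pderiv s (X s * F * δ ^ m) = F * δ ^ m + C (m:ℝ) * (X p * X s * F * δ ^ (m-1)) := by
      simp [Derivation.leibniz_pow, hs, ds, pderiv_X]; ring
    have a2 : pderiv r (X r * F * δ ^ m) = F * δ ^ m - C (m:ℝ) * (X q * X r * F * δ ^ (m-1)) := by
      simp [Derivation.leibniz_pow, hr, dr, pderiv_X]; ring
    have a3 : pderiv s (X s * F * δ ^ m) + pderiv r (X r * F * δ ^ m) = C ((m:ℝ) + 2) * (F * δ ^ m) := by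
      have hC2 : (C (2:ℝ) : MvPolynomial κ ℝ) = 2 := by simp [map_ofNat]
      rw [a1, a2, C_add, hC2]
      cases m with
      | zero => simp; ring
      | succ j =>
        have : δ ^ (j+1) = δ ^ j * (X p * X s - X q * X r) := by rw [pow_succ]; rfl
        simp only [Nat.add_sub_cancel, this]; simp; ring
    rw [← map_add, a3, Ex_C_mul]; push_cast; ring

def em (k : ℕ) : ℝ := if Even k then (k.factorial : ℝ) else 0

lemma Ex_dl_pow' (p q r s : κ) (hpq : p ≠ q) (hpr : p ≠ r) (hps : p ≠ s) (hqr : q ≠ r) (hqs : q ≠ s)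
    (hrs : r ≠ s) (F : MvPolynomial κ ℝ) (hp : pderiv p F = 0) (hq : pderiv q F = 0)
    (hr : pderiv r F = 0) (hs : pderiv s F = 0) (k : ℕ) :
    Ex (F * dl p q r s ^ k) = em k * Ex F := by
  induction k using Nat.strong_induction_on with
  | _ k ih =>
    match k with
    | 0 => simp [em]
    | 1 =>
      have := Ex_dl_pow p q r s hpq hpr hps hqr hqs hrs F hp hq hr hs 0
      simp only [zero_add, Nat.cast_zero, zero_mul] at this
      rw [this]; simp [em]
    | k+2 =>
      rw [Ex_dl_pow p q r s hpq hpr hps hqr hqs hrs F hp hq hr hs (k+1)]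
      simp only [Nat.add_sub_cancel]
      rw [ih k (by omega), em, em]
      have : Even (k+2) ↔ Even k := by simp [Nat.even_add]
      simp only [this]
      split_ifs
      · rw [Nat.factorial_succ, Nat.factorial_succ]; push_cast; ring
      · simp
end det

abbrev Io (n : ℕ) := Fin n × Fin 2
abbrev Rg (n : ℕ) := MvPolynomial (Io n × Io n) ℝ

def Dm {n : ℕ} {R : Type*} [CommRing R] (a : Fin n → R) : Matrix (Io n) (Io n) R :=
  Matrix.of fun p q => if p.1 = q.1 then a p.1 * (!![0,1;-1,0] : Matrix (Fin 2) (Fin 2) R) p.2 q.2 else 0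

def gX (n : ℕ) : Matrix (Io n) (Io n) (Rg n) := Matrix.of fun p q => X (p, q)

variable {n : ℕ}

def blk (b : Fin n × Fin n) : Rg n :=
  dl ((b.1,0),(b.2,0)) ((b.1,0),(b.2,1)) ((b.1,1),(b.2,0)) ((b.1,1),(b.2,1))

lemma pderiv_blk (b : Fin n × Fin n) (p : Io n × Io n) (h : (p.1.1, p.2.1) ≠ b) :
    pderiv p (blk b) = 0 := by
  obtain ⟨⟨i, r⟩, ⟨j, s⟩⟩ := p
  obtain ⟨k, l⟩ := b
  have : ∀ t u, (((k,t),(l,u)) : Io n × Io n) ≠ ((i,r),(j,s)) := by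
    intro t u he; simp at he; apply h; simp; tauto
  simp only [blk, dl, map_sub, Derivation.leibniz, pderiv_X, Pi.single_apply]
  simp [this]

lemma pderiv_prod_zero {κ β : Type*} [DecidableEq β] (i : κ) (S : Finset β) (f : β → MvPolynomial κ ℝ)
    (h : ∀ c ∈ S, pderiv i (f c) = 0) : pderiv i (∏ c ∈ S, f c) = 0 := by
  induction S using Finset.induction_on with
  | empty => simp
  | insert b S hb ih =>
    rw [Finset.prod_insert hb, Derivation.leibniz, ih (fun c hc => h c (Finset.mem_insert_of_mem hc)),
      h b (Finset.mem_insert_self _ _)]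
    simp

lemma Ex_prod_blk (S : Finset (Fin n × Fin n)) (k : Fin n × Fin n → ℕ) :
    Ex (∏ b ∈ S, blk b ^ k b) = ∏ b ∈ S, em (k b) := by
  induction S using Finset.induction_on with
  | empty => simp
  | insert b S hb ih =>
    rw [Finset.prod_insert hb, Finset.prod_insert hb, mul_comm, ← ih]
    have hd : ∀ t u, pderiv (((b.1,t),(b.2,u)) : Io n × Io n) (∏ c ∈ S, blk c ^ k c) = 0 := by
      intro t u
      apply pderiv_prod_zero
      intro c hc
      rw [Derivation.leibniz_pow, pderiv_blk]
      · simp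
      · rintro rfl; exact hb hc
    apply Ex_dl_pow' <;> first | exact hd _ _ | simp

lemma trace_DD {R : Type*} [CommRing R] (g : Matrix (Io n) (Io n) R) (a b : Fin n → R) :
    trace (g * Dm a * gᵀ * Dm b) = -2 * ∑ c : Fin n × Fin n, a c.2 * b c.1 *
      (g (c.1,0) (c.2,0) * g (c.1,1) (c.2,1) - g (c.1,0) (c.2,1) * g (c.1,1) (c.2,0)) := by
  have h1 : ∀ (M : Matrix (Io n) (Io n) R) (c : Fin n → R) p i,
      (M * Dm c) p (i, 0) = - (c i * M p (i, 1)) ∧ (M * Dm c) p (i, 1) = c i * M p (i, 0) := by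
    intro M c p i
    simp [Matrix.mul_apply, Dm, Fintype.sum_prod_type, Finset.sum_ite_eq', mul_comm]
  simp only [trace, diag_apply, Fintype.sum_prod_type, Fin.sum_univ_two, (h1 _ _ _ _).1, (h1 _ _ _ _).2]
  rw [Finset.mul_sum]
  refine Finset.sum_congr rfl fun i _ => ?_
  rw [Matrix.mul_apply (M := g * Dm a), Matrix.mul_apply (M := g * Dm a)]
  simp only [Fintype.sum_prod_type, Fin.sum_univ_two, (h1 _ _ _ _).1, (h1 _ _ _ _).2,
    Matrix.transpose_apply, Finset.mul_sum]
  rw [← Finset.sum_neg_distrib, ← Finset.sum_add_distrib]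
  refine Finset.sum_congr rfl fun j _ => ?_
  ring

/-- `½ tr (g X gᵀ Y)` -/
def qf (A B : Matrix (Io n) (Io n) ℝ) : Rg n :=
  C (1/2) * trace (gX n * A.map C * (gX n)ᵀ * B.map C)

lemma Dm_map {R S : Type*} [CommRing R] [CommRing S] (f : R →+* S) (a : Fin n → R) :
    (Dm a).map f = Dm (fun j => f (a j)) := by
  ext p q
  rcases p with ⟨i, r⟩; rcases q with ⟨j, s⟩
  simp only [Dm, Matrix.map_apply, Matrix.of_apply]
  split_ifs
  · rw [map_mul]; fin_cases r <;> fin_cases s <;> simp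
  · simp

lemma qf_DD (a b : Fin n → ℝ) : qf (Dm a) (Dm b) = ∑ c : Fin n × Fin n, C (-(a c.2 * b c.1)) * blk c := by
  rw [qf, Dm_map, Dm_map, trace_DD, ← mul_assoc, Finset.mul_sum]
  refine Finset.sum_congr rfl fun c _ => ?_
  simp only [gX, Matrix.of_apply, blk, dl, map_neg, map_mul]
  have : (C (1/2 : ℝ) * -2 : Rg n) = -1 := by
    rw [show (-2 : Rg n) = C (-2) by rw [map_neg, map_ofNat], ← C_mul]; norm_num
  rw [this]; ring

def hS (m : ℕ) {ι : Type*} [Fintype ι] [DecidableEq ι] {R : Type*} [CommRing R] (x : ι → R) : R :=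
  ∑ l ∈ Finset.piAntidiag (Finset.univ : Finset ι) m, ∏ i, x i ^ l i

lemma Ex_qf_DD (a b : Fin n → ℝ) (d : ℕ) :
    Ex (qf (Dm a) (Dm b) ^ (2 * d)) = (2*d).factorial * hS d (fun c : Fin n × Fin n => a c.2 ^ 2 * b c.1 ^ 2) := by
  rw [qf_DD, Finset.sum_pow_eq_sum_piAntidiag, map_sum]
  have h1 : ∀ k ∈ Finset.piAntidiag (Finset.univ : Finset (Fin n × Fin n)) (2*d),
      Ex ((Nat.multinomial Finset.univ k : Rg n) * ∏ c, (C (-(a c.2 * b c.1)) * blk c) ^ k c)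
      = (2*d).factorial * ∏ c, ((-(a c.2 * b c.1)) ^ k c * (if Even (k c) then 1 else 0)) := by
    intro k hk
    have hk' : ∑ i, k i = 2 * d := (Finset.mem_piAntidiag.1 hk).1
    have e1 : (Nat.multinomial Finset.univ k : Rg n) * ∏ c, (C (-(a c.2 * b c.1)) * blk c) ^ k c
        = C ((Nat.multinomial Finset.univ k : ℝ) * ∏ c, (-(a c.2 * b c.1)) ^ k c) * ∏ c, blk c ^ k c := by
      simp_rw [mul_pow, Finset.prod_mul_distrib, map_mul, map_prod, map_pow, map_natCast]; ring
    rw [e1, Ex_C_mul, Ex_prod_blk]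
    have e2 : ∀ c, em (k c) = ((k c).factorial : ℝ) * (if Even (k c) then 1 else 0) := by
      intro c; simp [em]
    simp_rw [e2, Finset.prod_mul_distrib]
    have e3 : (Nat.multinomial Finset.univ k : ℝ) * ∏ c, ((k c).factorial : ℝ) = (2*d).factorial := by
      rw [← hk', ← Nat.multinomial_spec]; push_cast; ring
    rw [← e3]; ring
  rw [Finset.sum_congr rfl h1, ← Finset.mul_sum]
  congr 1
  rw [hS]
  have h2 := Finset.map_nsmul_piAntidiag (Finset.univ : Finset (Fin n × Fin n)) d (two_ne_zero)
  symm
  rw [← Finset.sum_filter_add_sum_filter_not (Finset.piAntidiag (Finset.univ : Finset (Fin n × Fin n)) (2*d)) (fun k => ∀ i ∈ Finset.univ, 2 ∣ k i)]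
  rw [Finset.sum_eq_zero (s := Finset.filter (fun k => ¬ _) _), add_zero]
  · have h3 := Finset.map_nsmul_piAntidiag (Finset.univ : Finset (Fin n × Fin n)) d (two_ne_zero)
    refine Eq.trans ?_ (Finset.sum_congr (h3.trans (by congr)) (fun _ _ => rfl))
    rw [Finset.sum_map]
    refine Finset.sum_congr rfl fun l _ => ?_
    refine Finset.prod_congr rfl fun c _ => ?_
    simp only [Function.Embedding.coeFn_mk, Pi.smul_apply, smul_eq_mul, even_two, Even.mul_right, if_true, pow_mul]
    rw [neg_sq]; ring
  · intro k hk
    simp only [Finset.mem_filter, Finset.mem_univ, true_implies, not_forall] at hk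
    obtain ⟨c, hc⟩ := hk.2
    apply Finset.prod_eq_zero (Finset.mem_univ c)
    rw [if_neg (by rwa [even_iff_two_dvd]), mul_zero]

end GinP

namespace GinP
open MvPolynomial ProbabilityTheory

section orth
variable {κ : Type*} [Fintype κ] [DecidableEq κ]

def lsub (M : Matrix κ κ ℝ) : MvPolynomial κ ℝ →ₐ[ℝ] MvPolynomial κ ℝ :=
  aeval (fun i => ∑ j, C (M i j) * X j)

lemma pderiv_lsub (M : Matrix κ κ ℝ) (j : κ) (P : MvPolynomial κ ℝ) :
    pderiv j (lsub M P) = ∑ i, C (M i j) * lsub M (pderiv i P) := by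
  induction P using MvPolynomial.induction_on with
  | C c => simp [lsub, algebraMap_eq]
  | add p q hp hq => simp only [map_add, hp, hq, mul_add, Finset.sum_add_distrib]
  | mul_X p m hp =>
    have h1 : pderiv j (lsub M (X m)) = C (M m j) := by
      simp [lsub, Derivation.leibniz, pderiv_X, Pi.single_apply]
    have h2 : ∀ i, lsub M (pderiv i (X m : MvPolynomial κ ℝ)) = if m = i then 1 else 0 := by
      intro i; rw [pderiv_X, Pi.single_apply]; split_ifs <;> simp_all
    rw [map_mul, Derivation.leibniz, hp, h1]
    simp only [Derivation.leibniz, map_add, smul_eq_mul, map_mul, h2, mul_add, Finset.sum_add_distrib,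
      Finset.mul_sum]
    simp [mul_left_comm, mul_comm]

lemma Ex_lsub (M : Matrix κ κ ℝ) (hM : M * Mᵀ = 1) (P : MvPolynomial κ ℝ) :
    Ex (lsub M P) = Ex P := by
  refine Ex_unique (Ex ∘ₗ (lsub M).toLinearMap) (by simp) ?_ P
  intro i p
  simp only [LinearMap.comp_apply, AlgHom.toLinearMap_apply, map_mul]
  have : lsub M (X i) = ∑ j, C (M i j) * X j := by simp [lsub]
  rw [this, Finset.sum_mul, map_sum]
  simp only [mul_assoc, Ex_C_mul, Ex_X_mul, pderiv_lsub, map_sum, Finset.mul_sum]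
  rw [Finset.sum_comm]
  have h2 : ∀ l, ∑ j, M i j * M l j = if i = l then 1 else 0 := by
    intro l
    have := congrFun (congrFun hM i) l
    simpa [Matrix.mul_apply, Matrix.one_apply] using this
  simp only [← mul_assoc, ← Finset.sum_mul, h2]
  simp
end orth

variable {n : ℕ}

def lk (k : Matrix (Io n) (Io n) ℝ) : Matrix (Io n) (Io n) (Rg n) := k.map C * gX n

open scoped Kronecker in
lemma Ex_left (k : Matrix (Io n) (Io n) ℝ) (hk : k * kᵀ = 1) (P : Rg n) :
    Ex (aeval (fun pq : Io n × Io n => lk k pq.1 pq.2) P) = Ex P := by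
  have := Ex_lsub (k ⊗ₖ (1 : Matrix (Io n) (Io n) ℝ))
    (by rw [← Matrix.kroneckerMap_transpose, ← Matrix.mul_kronecker_mul, hk]; simp) P
  rw [← this, lsub]
  have h : (fun pq : Io n × Io n => lk k pq.1 pq.2) =
      fun i => ∑ j, C ((k ⊗ₖ (1 : Matrix (Io n) (Io n) ℝ)) i j) * X j := by
    funext a
    simp only [lk, Matrix.mul_apply, Matrix.map_apply, gX, Matrix.of_apply, Matrix.kroneckerMap_apply]
    rw [Fintype.sum_prod_type (fun j : Io n × Io n => _)]
    refine Finset.sum_congr rfl fun r _ => ?_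
    rw [Finset.sum_eq_single a.2]
    · simp
    · intro b _ hb; simp [Matrix.one_apply, hb.symm]
    · simp
  rw [h]

lemma qf_lk (A B k : Matrix (Io n) (Io n) ℝ) :
    aeval (fun pq : Io n × Io n => lk kᵀ pq.1 pq.2) (qf A B) = qf A (k * B * kᵀ) := by
  obtain ⟨s, hs⟩ : ∃ s : Rg n →ₐ[ℝ] Rg n, s = aeval (fun pq : Io n × Io n => lk kᵀ pq.1 pq.2) := ⟨_, rfl⟩
  rw [← hs]
  have hg : (gX n).map s = kᵀ.map C * gX n := by
    ext1 p q; simp [hs, gX, lk]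
  have hCC : ∀ c, s (C c) = C c := fun c => by rw [← algebraMap_eq]; exact s.commutes c
  have hC : ∀ M : Matrix (Io n) (Io n) ℝ, (M.map (C : ℝ →+* Rg n)).map s = M.map C := by
    intro M; ext1 p q; simp [hCC]
  have h4 : ∀ M : Matrix (Io n) (Io n) (Rg n), s (trace M) = trace (M.map s) := by
    intro M; simp only [trace, map_sum, Matrix.diag_apply, Matrix.map_apply]
  rw [qf, map_mul s, hCC, h4, Matrix.map_mul, Matrix.map_mul, Matrix.map_mul, hC, hC, Matrix.transpose_map, hg, qf]
  have h5 : (k * B * kᵀ).map (C : ℝ →+* Rg n) = k.map C * B.map C * kᵀ.map C := by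
    rw [Matrix.map_mul, Matrix.map_mul]
  rw [h5, Matrix.transpose_mul]
  generalize gX n = G
  rw [Matrix.transpose_map, Matrix.transpose_transpose]
  refine congrArg (C (1/2) * ·) ?_
  calc _ = trace ((k.map C)ᵀ * (G * A.map C * Gᵀ * k.map C * B.map C)) := by
        simp only [Matrix.mul_assoc]
    _ = _ := by rw [Matrix.trace_mul_comm]; simp only [Matrix.mul_assoc, Matrix.transpose_map]

lemma Ex_qf_conj (A B k : Matrix (Io n) (Io n) ℝ) (hk : kᵀ * k = 1) (d : ℕ) :
    Ex (qf A (k * B * kᵀ) ^ d) = Ex (qf A B ^ d) := by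
  rw [← qf_lk, ← map_pow (aeval _), Ex_left _ (by simpa using hk)]

lemma Ex_qf (a b : Fin n → ℝ) (k : Matrix (Io n) (Io n) ℝ) (hk : kᵀ * k = 1) (d : ℕ) :
    Ex (qf (Dm a) (k * Dm b * kᵀ) ^ (2 * d)) =
      (2*d).factorial * hS d (fun c : Fin n × Fin n => a c.2 ^ 2 * b c.1 ^ 2) := by
  rw [Ex_qf_conj _ _ _ hk, Ex_qf_DD]

end GinP

namespace GinP
open MvPolynomial ProbabilityTheory

section fischer
variable {κ : Type*} [Fintype κ] [DecidableEq κ]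

def sfac (s : κ →₀ ℕ) : ℝ := ∏ i, ((s i).factorial : ℝ)

def fis (F G : MvPolynomial κ ℝ) : ℝ := ∑ s ∈ F.support, coeff s F * (coeff s G * sfac s)

lemma fis_eq (F G : MvPolynomial κ ℝ) (S : Finset (κ →₀ ℕ)) (h : F.support ⊆ S) :
    fis F G = ∑ s ∈ S, coeff s F * (coeff s G * sfac s) := by
  rw [fis]; apply Finset.sum_subset h
  intro s _ hs; rw [notMem_support_iff.1 hs, zero_mul]

lemma fis_eq' (F G : MvPolynomial κ ℝ) (S : Finset (κ →₀ ℕ)) (h : G.support ⊆ S) :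
    fis F G = ∑ s ∈ S, coeff s F * (coeff s G * sfac s) := by
  rw [fis_eq F G (F.support ∪ S) Finset.subset_union_left]; symm
  apply Finset.sum_subset Finset.subset_union_right
  intro s _ hs; rw [notMem_support_iff.1 (fun h' => hs (h h')), zero_mul, mul_zero]

lemma fis_comm (F G : MvPolynomial κ ℝ) : fis F G = fis G F := by
  rw [fis_eq F G (F.support ∪ G.support) Finset.subset_union_left,
    fis_eq G F (F.support ∪ G.support) Finset.subset_union_right]
  refine Finset.sum_congr rfl fun s _ => by ring

lemma fis_add_right (F G H : MvPolynomial κ ℝ) : fis F (G + H) = fis F G + fis F H := by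
  simp only [fis, coeff_add, ← Finset.sum_add_distrib]
  refine Finset.sum_congr rfl fun s _ => by ring

lemma fis_smul_right (c : ℝ) (F G : MvPolynomial κ ℝ) : fis F (c • G) = c * fis F G := by
  simp only [fis, coeff_smul, Finset.mul_sum, smul_eq_mul]
  refine Finset.sum_congr rfl fun s _ => by ring

def fisL (F : MvPolynomial κ ℝ) : MvPolynomial κ ℝ →ₗ[ℝ] ℝ where
  toFun := fis F
  map_add' := fis_add_right F
  map_smul' c G := by simpa using fis_smul_right c F G

lemma fisL_apply (F G : MvPolynomial κ ℝ) : fisL F G = fis F G := rfl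

lemma fis_add_left (F G H : MvPolynomial κ ℝ) : fis (F + G) H = fis F H + fis G H := by
  rw [fis_comm, fis_add_right, fis_comm H, fis_comm H]

lemma fis_monomial_left (s : κ →₀ ℕ) (c : ℝ) (G : MvPolynomial κ ℝ) :
    fis (monomial s c) G = c * (coeff s G * sfac s) := by
  rw [fis_eq _ _ {s} support_monomial_subset]; simp

lemma fis_sum_right {β : Type*} (S : Finset β) (F : MvPolynomial κ ℝ) (G : β → MvPolynomial κ ℝ) :
    fis F (∑ b ∈ S, G b) = ∑ b ∈ S, fis F (G b) := by
  simp only [← fisL_apply, map_sum]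

lemma fis_one (G : MvPolynomial κ ℝ) : fis 1 G = coeff 0 G := by
  rw [← C_1, ← monomial_zero', fis_monomial_left]; simp [sfac]

lemma fis_X_mul (i : κ) (F G : MvPolynomial κ ℝ) : fis (X i * F) G = fis F (pderiv i G) := by
  induction F using MvPolynomial.induction_on' with
  | add p q hp hq => rw [mul_add, fis_add_left, fis_add_left, hp, hq]
  | monomial s c =>
    rw [X, monomial_mul, fis_monomial_left, fis_monomial_left, coeff_pderiv, one_mul, add_comm (Finsupp.single i 1)]
    have : sfac (s + Finsupp.single i 1) = (s i + 1) * sfac s := by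
      rw [sfac, sfac, ← Finset.mul_prod_erase Finset.univ _ (Finset.mem_univ i),
        ← Finset.mul_prod_erase Finset.univ (fun j => ((s j).factorial : ℝ)) (Finset.mem_univ i)]
      rw [Finset.prod_congr rfl (g := fun j => ((s j).factorial : ℝ))]
      · simp [Nat.factorial_succ]; ring
      · intro j hj; simp [Finsupp.single_apply, (Finset.ne_of_mem_erase hj).symm]
    rw [this]; ring

lemma fis_self_pos (F : MvPolynomial κ ℝ) (h : F ≠ 0) : 0 < fis F F := by
  rw [fis]
  apply Finset.sum_pos
  · intro s hs
    have h1 : 0 < sfac s := Finset.prod_pos fun i _ => by positivity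
    have h2 : coeff s F ≠ 0 := mem_support_iff.1 hs
    have : coeff s F * (coeff s F * sfac s) = coeff s F ^ 2 * sfac s := by ring
    rw [this]; positivity
  · rwa [Finset.nonempty_iff_ne_empty, Ne, support_eq_empty]

abbrev EndP (κ : Type*) := Module.End ℝ (MvPolynomial κ ℝ)

def pd (i : κ) : EndP κ := (pderiv i).toLinearMap
def Lap : EndP κ := ∑ i, pd i * pd i
def mulE (F : MvPolynomial κ ℝ) : EndP κ := LinearMap.mulLeft ℝ F

@[simp] lemma pd_apply (i : κ) (F : MvPolynomial κ ℝ) : pd i F = pderiv i F := rfl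
@[simp] lemma mulE_apply (F G : MvPolynomial κ ℝ) : mulE F G = F * G := rfl
lemma Lap_apply (F : MvPolynomial κ ℝ) : Lap F = ∑ i, pderiv i (pderiv i F) := by
  simp [Lap, LinearMap.sum_apply, Module.End.mul_apply]

lemma pd_comm (i j : κ) : (pd i * pd j : EndP κ) = pd j * pd i := by
  ext1 s
  ext m
  simp [coeff_pderiv, Module.End.mul_apply, add_right_comm, Finsupp.single_apply]
  by_cases h : i = j
  · subst h; ring
  · simp [h, Ne.symm h]; ring

lemma Lap_pd (i : κ) : (Lap * pd i : EndP κ) = pd i * Lap := by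
  rw [Lap, Finset.sum_mul, Finset.mul_sum]
  refine Finset.sum_congr rfl fun j _ => ?_
  rw [mul_assoc, pd_comm j i, ← mul_assoc, pd_comm j i, mul_assoc]

lemma Lap_mul (F G : MvPolynomial κ ℝ) :
    Lap (F * G) = Lap F * G + 2 * ∑ i, pderiv i F * pderiv i G + F * Lap G := by
  simp only [Lap_apply, Derivation.leibniz, map_add, smul_eq_mul, Finset.sum_mul, Finset.mul_sum,
    ← Finset.sum_add_distrib]
  refine Finset.sum_congr rfl fun j _ => by ring

def adL {V : Type*} [AddCommGroup V] [Module ℝ V] (L T : Module.End ℝ V) : Module.End ℝ V := L * T - T * L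

lemma Lap_X (i : κ) : adL Lap (mulE (X i : MvPolynomial κ ℝ)) = (2:ℝ) • pd i := by
  refine LinearMap.ext fun F => ?_
  simp only [adL, LinearMap.sub_apply, Module.End.mul_apply, mulE_apply, Lap_mul, LinearMap.smul_apply, pd_apply]
  have : (Lap (X i) : MvPolynomial κ ℝ) = 0 := by
    rw [Lap_apply]; apply Finset.sum_eq_zero; intro j _
    rw [pderiv_X, Pi.single_apply]; split_ifs <;> simp
  rw [this]
  have h2 : ∑ j, pderiv j (X i : MvPolynomial κ ℝ) * pderiv j F = pderiv i F := by
    simp [pderiv_X, Pi.single_apply]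
  rw [h2, smul_eq_C_mul, map_ofNat]; ring

lemma adL_mul {V : Type*} [AddCommGroup V] [Module ℝ V] (L S T : Module.End ℝ V) :
    adL L (S * T) = adL L S * T + S * adL L T := by
  simp only [adL]; noncomm_ring

lemma adL_pd (i : κ) : adL Lap (pd i : EndP κ) = 0 := by rw [adL, Lap_pd, sub_self]

def adLL {V : Type*} [AddCommGroup V] [Module ℝ V] (L : Module.End ℝ V) : Module.End ℝ (Module.End ℝ V) where
  toFun := adL L
  map_add' S T := by simp only [adL]; noncomm_ring
  map_smul' c T := by simp [adL, smul_sub]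

lemma adLL_apply {V : Type*} [AddCommGroup V] [Module ℝ V] (L T : Module.End ℝ V) : adLL L T = adL L T := rfl

lemma ad_iter_X (i : κ) (B : EndP κ) (k : ℕ) :
    (adLL Lap ^ (k+1)) (mulE (X i) * B) = mulE (X i) * (adLL Lap ^ (k+1)) B
      + (2 * (k+1) : ℝ) • (pd i * (adLL Lap ^ k) B) := by
  induction k with
  | zero =>
    simp only [zero_add, pow_one, pow_zero, adLL_apply, adL_mul, Lap_X, Module.End.one_apply]
    simp [add_comm]
  | succ k ih =>
    have hs : ∀ m, adL Lap ((adLL Lap ^ m) B) = (adLL Lap ^ (m+1)) B := by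
      intro m; rw [pow_succ', Module.End.mul_apply, adLL_apply]
    rw [pow_succ' _ (k+1), Module.End.mul_apply, ih, map_add, adLL_apply, adL_mul, Lap_X, LinearMap.map_smul,
      adLL_apply, adL_mul, adL_pd, zero_mul, zero_add, hs, hs, ← pow_succ']
    rw [smul_mul_assoc]
    push_cast; module

lemma mulE_mul (F G : MvPolynomial κ ℝ) : mulE (F * G) = mulE F * mulE G := by
  ext1; ext1; simp [mul_assoc, Module.End.mul_apply]

def mulEL : MvPolynomial κ ℝ →ₗ[ℝ] EndP κ where
  toFun := mulE
  map_add' F G := by refine LinearMap.ext fun H => ?_; simp [add_mul]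
  map_smul' c F := by refine LinearMap.ext fun H => ?_; simp

lemma fis_smul_left (c : ℝ) (F G : MvPolynomial κ ℝ) : fis (c • F) G = c * fis F G := by
  rw [fis_comm, fis_smul_right, fis_comm]

lemma ad_monomial (s : κ →₀ ℕ) (c : ℝ) : (adLL Lap ^ (s.degree + 1)) (mulE (monomial s c)) = 0 ∧
    ∀ F G : MvPolynomial κ ℝ, 2 ^ s.degree * s.degree.factorial * fis (monomial s c * F) G
      = fis F ((adLL Lap ^ s.degree) (mulE (monomial s c)) G) := by
  obtain ⟨m, hm⟩ : ∃ m, m = s.degree := ⟨_, rfl⟩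
  induction m generalizing s with
  | zero =>
    have hs : s = 0 := by rwa [eq_comm, Finsupp.degree_eq_zero_iff] at hm
    subst hs
    constructor
    · simp only [map_zero, zero_add, pow_one, adLL_apply]
      refine LinearMap.ext fun F => ?_
      simp only [adL, LinearMap.sub_apply, Module.End.mul_apply, mulE_apply, monomial_zero', ← smul_eq_C_mul,
        map_smul, sub_self, LinearMap.zero_apply]
    · intro F G
      simp only [map_zero, pow_zero, Module.End.one_apply, mulE_apply, monomial_zero', ← smul_eq_C_mul,
        fis_smul_left, fis_smul_right]
      simp
  | succ m ih =>
    have hs : s ≠ 0 := by rintro rfl; simp at hm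
    obtain ⟨i, hi⟩ : ∃ i, s i ≠ 0 := by
      by_contra hh; push Not at hh; exact hs (Finsupp.ext hh)
    obtain ⟨t, rfl⟩ : ∃ t, s = Finsupp.single i 1 + t := by
      refine ⟨s - Finsupp.single i 1, ?_⟩
      rw [add_tsub_cancel_of_le]
      rw [Finsupp.single_le_iff]; omega
    rw [map_add, Finsupp.degree_single] at hm
    have hd : t.degree = m := by omega
    have hmon : monomial (Finsupp.single i 1 + t) c = X i * monomial t c := by
      rw [X, monomial_mul, one_mul]
    obtain ⟨i1, i2⟩ := ih t hd.symm
    rw [map_add, Finsupp.degree_single, add_comm 1, hd, hmon, mulE_mul]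
    rw [hd] at i1 i2
    have e0 := ad_iter_X i (mulE (monomial t c)) m
    rw [i1, mul_zero, zero_add] at e0
    constructor
    · rw [pow_succ', Module.End.mul_apply, e0, map_smul, adLL_apply, adL_mul, adL_pd, zero_mul, zero_add,
        ← adLL_apply, ← Module.End.mul_apply (adLL Lap), ← pow_succ', i1, mul_zero, smul_zero]
    · intro F G
      rw [e0, LinearMap.smul_apply, Module.End.mul_apply, pd_apply, fis_smul_right, ← fis_X_mul, ← i2,
        Nat.factorial_succ]
      push_cast
      rw [show X i * monomial t c * F = monomial t c * (X i * F) by ring]; ring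

lemma homog_deg (s : κ →₀ ℕ) : Finsupp.weight (1 : κ → ℕ) s = s.degree := by
  rw [Finsupp.degree_eq_weight_one]; rfl

lemma ad_homog (m : ℕ) (F : MvPolynomial κ ℝ) (hF : F.IsHomogeneous m) (H G : MvPolynomial κ ℝ) :
    2 ^ m * m.factorial * fis (F * H) G = fis H ((adLL Lap ^ m) (mulE F) G) := by
  have key : ∀ s ∈ F.support, 2 ^ m * m.factorial * fis (monomial s (coeff s F) * H) G
      = fis H ((adLL Lap ^ m) (mulE (monomial s (coeff s F))) G) := by
    intro s hs
    have : s.degree = m := by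
      have := hF (mem_support_iff.1 hs)
      rwa [homog_deg s] at this
    have h2 := (ad_monomial s (coeff s F)).2 H G
    rwa [this] at h2
  have e1 : fis (F * H) G = ∑ s ∈ F.support, fis (monomial s (coeff s F) * H) G := by
    conv_lhs => rw [F.as_sum, Finset.sum_mul, fis_comm, fis_sum_right]
    exact Finset.sum_congr rfl fun s _ => fis_comm _ _
  have e2 : (adLL Lap ^ m) (mulE F) G = ∑ s ∈ F.support, (adLL Lap ^ m) (mulE (monomial s (coeff s F))) G := by
    have : mulE F = ∑ s ∈ F.support, mulE (monomial s (coeff s F)) := by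
      conv_lhs => rw [F.as_sum]
      exact map_sum mulEL _ _
    rw [this, map_sum, LinearMap.sum_apply]
  rw [e1, e2, fis_sum_right, Finset.mul_sum]
  exact Finset.sum_congr rfl key

/-- homogeneous of integer degree -/
def hd (d : ℤ) (F : MvPolynomial κ ℝ) : Prop := F.IsWeightedHomogeneous (fun _ => (1:ℤ)) d

def od (e : ℤ) (T : EndP κ) : Prop := ∀ d F, hd d F → hd (d + e) (T F)

lemma od_pd (i : κ) : od (-1) (pd i : EndP κ) := fun d F h =>
  IsWeightedHomogeneous.pderiv h (by ring)

lemma od_mul {e f : ℤ} {S T : EndP κ} (hS : od e S) (hT : od f T) : od (e + f) (S * T) := by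
  intro d F h
  rw [Module.End.mul_apply, show d + (e + f) = d + f + e by ring]
  exact hS _ _ (hT _ _ h)

lemma od_sub {e : ℤ} {S T : EndP κ} (hS : od e S) (hT : od e T) : od e (S - T) := by
  intro d F h
  exact Submodule.sub_mem (weightedHomogeneousSubmodule ℝ (fun _ : κ => (1:ℤ)) (d + e)) (hS _ _ h) (hT _ _ h)

lemma od_Lap : od (-2) (Lap : EndP κ) := by
  intro d F h
  rw [Lap, LinearMap.sum_apply]
  exact Submodule.sum_mem (weightedHomogeneousSubmodule ℝ (fun _ : κ => (1:ℤ)) (d + -2))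
    (fun i _ => od_mul (od_pd i) (od_pd i) d F h)

lemma od_ad {e : ℤ} {T : EndP κ} (hT : od e T) (k : ℕ) : od (e - 2 * k) ((adLL Lap ^ k) T) := by
  induction k with
  | zero => simpa using hT
  | succ k ih =>
    rw [pow_succ', Module.End.mul_apply, adLL_apply, adL]
    have h1 := od_mul od_Lap ih
    have h2 := od_mul ih od_Lap
    rw [show (e - 2 * ((k+1 : ℕ):ℤ)) = -2 + (e - 2 * (k:ℤ)) by push_cast; ring]
    refine od_sub h1 ?_
    rwa [add_comm] at h2

lemma hd_of_homog {m : ℕ} {F : MvPolynomial κ ℝ} (h : F.IsHomogeneous m) : hd m F := by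
  intro s hs
  have := h hs
  rw [homog_deg s] at this
  rw [← this, Finsupp.weight_apply, Finsupp.sum, Finsupp.degree_apply]; simp

lemma od_mulE {e : ℤ} {F : MvPolynomial κ ℝ} (h : hd e F) : od e (mulE F) := by
  intro d G hG
  rw [add_comm]; exact IsWeightedHomogeneous.mul h hG

lemma hd_zero_const {F : MvPolynomial κ ℝ} (h : hd 0 F) : F = C (coeff 0 F) := by
  ext s
  rw [coeff_C]
  split_ifs with hs
  · rw [hs]
  · by_contra hh
    have := h hh
    rw [Finsupp.weight_apply, Finsupp.sum] at this
    simp at this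
    apply hs
    have h3 : ∑ x ∈ s.support, s x = 0 := by exact_mod_cast this
    rw [eq_comm, ← Finsupp.degree_eq_zero_iff]; exact h3

lemma ad_const (m : ℕ) (F G : MvPolynomial κ ℝ) (hF : F.IsHomogeneous m) (hG : G.IsHomogeneous m) :
    (adLL Lap ^ m) (mulE F) G = C (2 ^ m * m.factorial * fis F G) := by
  have h1 := od_ad (od_mulE (hd_of_homog hF)) m _ _ (hd_of_homog hG)
  rw [show (m:ℤ) + (m - 2 * m) = 0 by ring] at h1
  have h2 := ad_homog m F hF 1 G
  rw [fis_one, mul_one] at h2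
  rw [h2]; exact hd_zero_const h1

end fischer
end GinP

namespace GinP
open MvPolynomial ProbabilityTheory

section gen
variable {R ι : Type*} [CommRing R] [Algebra ℝ R] [Fintype ι] [DecidableEq ι]

lemma dmap_mul (D : Derivation ℝ R R) (M N : Matrix ι ι R) :
    (M * N).map D = M.map D * N + M * N.map D := by
  ext i j
  simp only [Matrix.map_apply, Matrix.mul_apply, Matrix.add_apply, map_sum, Derivation.leibniz, smul_eq_mul,
    ← Finset.sum_add_distrib]
  exact Finset.sum_congr rfl fun k _ => by ring

lemma dmap_pow (D : Derivation ℝ R R) (M : Matrix ι ι R) (m : ℕ) :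
    (M ^ (m+1)).map D = ∑ i ∈ Finset.range (m+1), M ^ i * M.map D * M ^ (m - i) := by
  induction m with
  | zero => simp
  | succ m ih =>
    rw [pow_succ' M (m+1), dmap_mul, ih, Finset.sum_range_succ' _ (m+1), Finset.mul_sum, add_comm]
    congr 1
    · refine Finset.sum_congr rfl fun i _ => ?_
      rw [Nat.add_sub_add_right, pow_succ' M i]; simp only [Matrix.mul_assoc]
    · simp

lemma dtrace_pow (D : Derivation ℝ R R) (M : Matrix ι ι R) (m : ℕ) :
    D (trace (M ^ (m+1))) = (m + 1) * trace (M ^ m * M.map D) := by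
  have : D (trace (M ^ (m+1))) = trace ((M ^ (m+1)).map D) := by
    simp [trace, map_sum]
  rw [this, dmap_pow, trace_sum, Finset.sum_congr rfl (g := fun _ => trace (M ^ m * M.map D))]
  · simp
  · intro i hi
    rw [Matrix.trace_mul_comm, ← Matrix.mul_assoc, ← pow_add, Nat.sub_add_cancel]
    simp at hi; omega

lemma sum_even (f : ℕ → R) (h : ∀ i, f (2*i+1) = 0) (j : ℕ) :
    ∑ i ∈ Finset.range (2*j+1), f i = ∑ i ∈ Finset.range (j+1), f (2*i) := by
  induction j with
  | zero => simp
  | succ j ih =>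
    rw [show 2*(j+1)+1 = 2*j+1+1+1 by ring, Finset.sum_range_succ, Finset.sum_range_succ, ih, h,
      Finset.sum_range_succ _ (j+1)]
    simp [mul_add]

lemma sum_alt (j : ℕ) : ∑ i ∈ Finset.range (2*j+1), (-1 : R) ^ i = 1 := by
  induction j with
  | zero => simp
  | succ j ih =>
    rw [show 2*(j+1)+1 = 2*j+1+1+1 by ring, Finset.sum_range_succ, Finset.sum_range_succ, ih]
    ring

lemma sum_mul_eq_trace (M N : Matrix ι ι R) : ∑ p, ∑ q, M p q * N p q = trace (M * Nᵀ) := by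
  simp [trace, Matrix.mul_apply]
end gen

variable {n : ℕ}

def Am (n : ℕ) : Matrix (Io n) (Io n) (Rg n) := gX n - (gX n)ᵀ

def Pk (n k : ℕ) : Rg n := trace (Am n ^ (2 * k))

lemma Am_t : (Am n)ᵀ = - Am n := by simp [Am]

lemma Am_pow_t (k : ℕ) : (Am n ^ k)ᵀ = (-1) ^ k * Am n ^ k := by
  rw [Matrix.transpose_pow, Am_t, neg_pow]

lemma Am_pow_odd (k : ℕ) : (Am n ^ (2*k+1))ᵀ = - Am n ^ (2*k+1) := by
  rw [Am_pow_t]; simp [pow_add, pow_mul]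

lemma tr_odd (k : ℕ) : trace (Am n ^ (2*k+1)) = 0 := by
  have h := congrArg trace (Am_pow_odd (n := n) k)
  rw [trace_transpose, trace_neg] at h
  exact self_eq_neg.1 h

lemma Am_d (p q : Io n) : (Am n).map (pderiv (R := ℝ) (p, q)) = Matrix.single p q 1 - Matrix.single q p 1 := by
  ext1 i j
  simp only [Am, Matrix.map_apply, Matrix.sub_apply, Matrix.transpose_apply, gX, Matrix.of_apply, map_sub,
    pderiv_X, Pi.single_apply, Matrix.single_apply, Prod.mk.injEq]
  congr 1
  · simp [eq_comm]
  · simp [eq_comm, and_comm]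

lemma Pk_d (j : ℕ) (p q : Io n) : pderiv (p, q) (Pk n (j+1)) = -(4 * (j+1)) * (Am n ^ (2*j+1)) p q := by
  rw [Pk, show 2 * (j+1) = (2*j+1)+1 by ring, dtrace_pow, Am_d, Matrix.mul_sub, trace_sub,
    Matrix.trace_mul_single, Matrix.trace_mul_single]
  have h : (Am n ^ (2*j+1)) q p = - (Am n ^ (2*j+1)) p q := by
    have := congrFun (congrFun (Am_pow_odd (n := n) j) p) q
    simpa using this
  rw [h]; push_cast; simp; ring

lemma Pk_grad (j l : ℕ) : ∑ i, pderiv i (Pk n (j+1)) * pderiv i (Pk n (l+1)) =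
    -(16 * (j+1) * (l+1)) * Pk n (j+l+1) := by
  rw [Fintype.sum_prod_type]
  simp only [Pk_d]
  have h := sum_mul_eq_trace (Am n ^ (2*j+1)) (Am n ^ (2*l+1))
  rw [Am_pow_odd, mul_neg, ← pow_add, trace_neg, show 2*j+1+(2*l+1) = 2*(j+l+1) by ring] at h
  have h2 : trace (Am n ^ (2*(j+l+1))) = Pk n (j+l+1) := rfl
  rw [h2] at h
  rw [neg_mul_comm, ← h, Finset.mul_sum]
  refine Finset.sum_congr rfl fun p _ => ?_
  rw [Finset.mul_sum]
  refine Finset.sum_congr rfl fun q _ => by ring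

lemma Pk_lap (j : ℕ) : Lap (Pk n (j+1)) =
    -(4 * (j+1)) * (∑ i ∈ Finset.range (j+1), Pk n i * Pk n (j - i) - Pk n j) := by
  rw [Lap_apply, Fintype.sum_prod_type]
  have h0 : ∀ p q : Io n, pderiv (p,q) ((Am n ^ (2*j+1)) p q) =
      ∑ i ∈ Finset.range (2*j+1), ((Am n ^ i) p p * (Am n ^ (2*j-i)) q q
        - (Am n ^ i) p q * (Am n ^ (2*j-i)) p q) := by
    intro p q
    have := congrFun (congrFun (dmap_pow (pderiv (R := ℝ) (p,q)) (Am n) (2*j)) p) q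
    rw [Matrix.map_apply, Am_d, Matrix.sum_apply] at this
    rw [this]
    refine Finset.sum_congr rfl fun i _ => ?_
    rw [Matrix.mul_sub, Matrix.sub_mul, Matrix.sub_apply]
    congr 1
    · simp [Matrix.mul_apply, Matrix.single_apply, ite_and]
    · simp [Matrix.mul_apply, Matrix.single_apply, ite_and]
  have h1 : ∀ p q : Io n, pderiv (p,q) (pderiv (p,q) (Pk n (j+1))) =
      -(4 * (j+1)) * ∑ i ∈ Finset.range (2*j+1), ((Am n ^ i) p p * (Am n ^ (2*j-i)) q q
        - (Am n ^ i) p q * (Am n ^ (2*j-i)) p q) := by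
    intro p q
    rw [Pk_d, ← h0, Derivation.leibniz]
    have : pderiv (p,q) (-(4 * ((j:Rg n)+1))) = 0 := by
      rw [show (-(4 * ((j:Rg n)+1))) = C (-(4 * ((j:ℝ)+1))) by simp [map_ofNat]]; simp
    rw [this]; simp
  simp only [h1, ← Finset.mul_sum]
  congr 1
  have h2 : ∀ i ∈ Finset.range (2*j+1), ∑ p : Io n, ∑ q : Io n, ((Am n ^ i) p p * (Am n ^ (2*j-i)) q q
        - (Am n ^ i) p q * (Am n ^ (2*j-i)) p q) =
      trace (Am n ^ i) * trace (Am n ^ (2*j-i)) - (-1) ^ i * Pk n j := by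
    intro i hi
    have hi' : i ≤ 2*j := by simp at hi; omega
    simp only [Finset.sum_sub_distrib]
    rw [sum_mul_eq_trace, Am_pow_t]
    congr 1
    · simp only [trace, Matrix.diag_apply]; rw [Finset.sum_mul_sum]
    · have : ((-1 : Matrix (Io n) (Io n) (Rg n)) ^ (2*j-i)) = ((-1 : Rg n) ^ i) • 1 := by
        obtain ⟨r, hr⟩ := Nat.exists_eq_add_of_le hi'
        rw [hr, Nat.add_sub_cancel_left]
        have : Even r ↔ Even i := by
          have : Even (i + r) := by rw [← hr]; simp
          rw [Nat.even_add] at this; tauto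
        rcases Nat.even_or_odd i with h | h
        · rw [h.neg_one_pow, (this.2 h).neg_one_pow, one_smul]
        · have h' : Odd r := by rw [← Nat.not_even_iff_odd] at h ⊢; tauto
          rw [h.neg_one_pow, h'.neg_one_pow, neg_smul, one_smul]
      rw [this, Matrix.smul_mul, Matrix.one_mul, Matrix.mul_smul, trace_smul, ← pow_add,
        Nat.add_sub_cancel' hi']
      rfl
  have h3 : ∑ p : Io n, ∑ q : Io n, ∑ i ∈ Finset.range (2*j+1), ((Am n ^ i) p p * (Am n ^ (2*j-i)) q q
        - (Am n ^ i) p q * (Am n ^ (2*j-i)) p q) = ∑ i ∈ Finset.range (2*j+1),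
      (trace (Am n ^ i) * trace (Am n ^ (2*j-i)) - (-1) ^ i * Pk n j) := by
    rw [← Finset.sum_congr rfl h2]
    simp_rw [Finset.sum_comm (s := Finset.univ) (t := Finset.range (2*j+1))]
  rw [h3, Finset.sum_sub_distrib, ← Finset.sum_mul, sum_alt, one_mul]
  congr 1
  rw [sum_even (fun i => trace (Am n ^ i) * trace (Am n ^ (2*j-i)))]
  · refine Finset.sum_congr rfl fun i _ => ?_
    rw [← Nat.mul_sub]; rfl
  · intro i; simp [tr_odd]

end GinP

namespace GinP
open MvPolynomial ProbabilityTheory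
variable {n : ℕ}

abbrev Ra (n : ℕ) := MvPolynomial (Fin n) ℝ

def rho (n : ℕ) : Rg n →ₐ[ℝ] Ra n := aeval (fun pq => C (1/2) * Dm (fun j => (X j : Ra n)) pq.1 pq.2)

def qk (n k : ℕ) : Ra n := ∑ j, X j ^ (2 * k)

lemma Dm_t {R : Type*} [CommRing R] (a : Fin n → R) : (Dm a)ᵀ = - Dm a := by
  ext ⟨i, r⟩ ⟨j, s⟩
  simp only [Dm, Matrix.transpose_apply, Matrix.of_apply, Matrix.neg_apply]
  by_cases h : i = j
  · subst h; fin_cases r <;> fin_cases s <;> simp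
  · simp [h, Ne.symm h]

lemma Dm_sq {R : Type*} [CommRing R] (a : Fin n → R) :
    Dm a ^ 2 = Matrix.diagonal (fun p : Io n => - a p.1 ^ 2) := by
  ext ⟨i, r⟩ ⟨j, s⟩
  rw [pow_two, Matrix.mul_apply, Fintype.sum_prod_type]
  simp only [Dm, Matrix.of_apply, Fin.sum_univ_two, Matrix.diagonal_apply, Prod.mk.injEq]
  rw [Finset.sum_eq_single i]
  · by_cases h : i = j
    · subst h; fin_cases r <;> fin_cases s <;> simp <;> ring
    · simp [h]
  · intro b _ hb; simp [hb.symm]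
  · simp

lemma tr_Dm {R : Type*} [CommRing R] (a : Fin n → R) (k : ℕ) :
    trace (Dm a ^ (2*k)) = 2 * (-1) ^ k * ∑ j, a j ^ (2*k) := by
  rw [pow_mul, Dm_sq, Matrix.diagonal_pow, trace_diagonal, Fintype.sum_prod_type]
  simp only [Pi.pow_apply, Finset.sum_const, Finset.card_univ, Fintype.card_fin, Finset.mul_sum]
  refine Finset.sum_congr rfl fun j _ => ?_
  rw [neg_pow, ← pow_mul, nsmul_eq_mul]; push_cast; ring

lemma rho_Am : (Am n).map (rho n) = Dm (fun j => (X j : Ra n)) := by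
  ext1 p q
  have h : Dm (fun j => (X j : Ra n)) q p = - Dm (fun j => (X j : Ra n)) p q := by
    have := congrFun (congrFun (Dm_t (fun j => (X j : Ra n))) p) q
    simpa using this
  simp only [Am, Matrix.map_apply, Matrix.sub_apply, Matrix.transpose_apply, gX, Matrix.of_apply, map_sub,
    rho, aeval_X, h]
  rw [mul_neg, sub_neg_eq_add, ← add_mul, ← C_add]; norm_num

lemma rho_Pk (k : ℕ) : rho n (Pk n k) = 2 * (-1) ^ k * qk n k := by
  rw [Pk, qk, ← tr_Dm, ← rho_Am]
  have : (Am n ^ (2*k)).map (rho n) = ((Am n).map (rho n)) ^ (2*k) := by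
    exact map_pow (RingHom.mapMatrix (rho n : Rg n →+* Ra n)) (Am n) (2*k)
  rw [← this]
  simp only [trace, map_sum, Matrix.diag_apply, Matrix.map_apply]

def Del (n : ℕ) : Ra n := vdm (fun j => (X j : Ra n) ^ 2)

/-- alternant -/
def alt (m : Fin n → ℕ) : Ra n := (Matrix.of fun i j => (X i : Ra n) ^ m j).det

lemma alt_eq (m : Fin n → ℕ) : alt m = ∑ σ : Equiv.Perm (Fin n),
    (Equiv.Perm.sign σ : ℤ) • monomial (Finsupp.equivFunOnFinite.symm (fun i => m (σ.symm i))) (1:ℝ) := by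
  rw [alt, Matrix.det_apply]
  refine Finset.sum_congr rfl fun σ _ => ?_
  rw [Units.smul_def]
  congr 1
  rw [monomial_eq, C_1, one_mul, Finsupp.prod_fintype _ _ (by simp)]
  conv_rhs => rw [← Equiv.prod_comp σ]
  simp

lemma alt_zero (m : Fin n → ℕ) (i j : Fin n) (hij : i ≠ j) (h : m i = m j) : alt m = 0 := by
  rw [alt]; exact Matrix.det_zero_of_column_eq hij (fun k => by simp [h])

lemma Lap_monomial {κ : Type*} [Fintype κ] [DecidableEq κ] (s : κ →₀ ℕ) :
    Lap (monomial s (1:ℝ)) = ∑ i, monomial (s - Finsupp.single i 2) ((s i : ℝ) * ((s i - 1 : ℕ) : ℝ)) := by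
  rw [Lap_apply]
  refine Finset.sum_congr rfl fun i _ => ?_
  rw [pderiv_monomial, pderiv_monomial, tsub_tsub, ← Finsupp.single_add]
  simp

lemma Lap_alt (m : Fin n → ℕ) : Lap (alt m) =
    ∑ i, C ((m i : ℝ) * ((m i - 1 : ℕ) : ℝ)) * alt (fun j => if j = i then m j - 2 else m j) := by
  simp only [alt_eq, map_sum, map_zsmul, Lap_monomial, Finset.smul_sum, Finset.mul_sum]
  conv_rhs => rw [Finset.sum_comm]
  refine Finset.sum_congr rfl fun σ _ => ?_
  rw [← Equiv.sum_comp σ]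
  refine Finset.sum_congr rfl fun i _ => ?_
  rw [mul_smul_comm, C_mul_monomial, mul_one]
  have e1 : ∀ f : Fin n → ℕ, ∀ j, (Finsupp.equivFunOnFinite.symm f) j = f j := fun f j => rfl
  rw [e1, Equiv.symm_apply_apply]
  congr 1
  refine congrArg (fun u => monomial u _) ?_
  ext j
  rw [Finsupp.tsub_apply, e1, e1, Finsupp.single_apply]
  by_cases h : σ i = j
  · subst h; simp
  · have : σ.symm j ≠ i := by rintro rfl; simp at h
    simp [h, this]

lemma vdm_eq {R : Type*} [CommRing R] (x : Fin n → R) : vdm x = (Matrix.vandermonde x).det := by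
  rw [Matrix.det_vandermonde, vdm, Finset.prod_filter, ← Finset.univ_product_univ, Finset.prod_product]
  refine Finset.prod_congr rfl fun i _ => ?_
  rw [← Finset.prod_filter]
  refine Finset.prod_congr ?_ fun _ _ => rfl
  ext j; simp

lemma Del_alt : Del n = alt (fun j => 2 * (j : ℕ)) := by
  rw [Del, vdm_eq, alt]
  congr 1
  ext1 i j
  simp [Matrix.vandermonde_apply, pow_mul]

lemma Lap_Del : Lap (Del n) = 0 := by
  rw [Del_alt, Lap_alt]
  apply Finset.sum_eq_zero
  intro i _
  by_cases hi : (i : ℕ) = 0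
  · simp [hi]
  · have hlt : (i : ℕ) - 1 < n := by omega
    rw [alt_zero _ i ⟨i - 1, hlt⟩, mul_zero]
    · intro h; have := congrArg Fin.val h; simp at this; omega
    · have : (⟨i - 1, hlt⟩ : Fin n) ≠ i := by
        intro h; have := congrArg Fin.val h; simp at this; omega
      simp [this]; omega

/-- gradient pairing -/
def Gam {κ : Type*} [Fintype κ] (F G : MvPolynomial κ ℝ) : MvPolynomial κ ℝ := ∑ i, pderiv i F * pderiv i G

lemma qk_d (j : ℕ) (i : Fin n) : pderiv i (qk n (j+1)) = (2*((j:Ra n)+1)) * X i ^ (2*j+1) := by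
  rw [qk, map_sum, Finset.sum_eq_single i]
  · rw [Derivation.leibniz_pow]; simp; rw [show 2*(j+1)-1 = 2*j+1 by omega]; left; ring
  · intro b _ hb; rw [Derivation.leibniz_pow]; simp [pderiv_X, hb.symm]
  · simp

lemma qk_lap (j : ℕ) : Lap (qk n (j+1)) = ((2*((j:Ra n)+1)) * (2*(j:Ra n)+1)) * qk n j := by
  rw [Lap_apply]
  simp only [qk_d]
  rw [qk, Finset.mul_sum]
  refine Finset.sum_congr rfl fun i _ => ?_
  rw [Derivation.leibniz, Derivation.leibniz_pow]
  have : pderiv i (2 * ((j:Ra n)+1)) = 0 := by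
      rw [show (2 * ((j:Ra n)+1)) = C (2 * ((j:ℝ)+1)) by simp [map_ofNat]]; simp
  rw [this]; simp; ring

lemma dprod_log {R β : Type*} [CommRing R] [Algebra ℝ R] [DecidableEq β] (D : Derivation ℝ R R) (S : Finset β) (f h : β → R)
    (hf : ∀ b ∈ S, D (f b) = f b * h b) : D (∏ b ∈ S, f b) = (∏ b ∈ S, f b) * ∑ b ∈ S, h b := by
  induction S using Finset.induction_on with
  | empty => simp
  | insert b S hb ih =>
    rw [Finset.prod_insert hb, Finset.sum_insert hb, Derivation.leibniz,
      ih (fun c hc => hf c (Finset.mem_insert_of_mem hc)), hf b (Finset.mem_insert_self _ _)]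
    simp only [smul_eq_mul]; ring

lemma Gam_Del (j : ℕ) : Gam (Del n) (qk n (j+1)) = (2*((j:Ra n)+1)) *
    (Del n * (∑ i ∈ Finset.range (j+1), qk n i * qk n (j-i) - ((j:Ra n)+1) * qk n j)) := by
  let D : Derivation ℝ (Ra n) (Ra n) := ∑ i, (X i : Ra n) ^ (2*j+1) • pderiv i
  have hD : ∀ F, D F = ∑ i, pderiv i F * X i ^ (2*j+1) := by
    intro F
    simp only [D, ← Derivation.coeFnAddMonoidHom_apply, map_sum, Finset.sum_apply]
    simp [mul_comm]
  have hDX : ∀ i, D (X i) = X i ^ (2*j+1) := by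
    intro i; rw [hD, Finset.sum_eq_single i]
    · simp
    · intro b _ hb; simp [pderiv_X, hb]
    · simp
  let hh : Fin n × Fin n → Ra n := fun p => ∑ i ∈ Finset.range (j+1), X p.2 ^ (2*i) * X p.1 ^ (2*(j-i))
  have h1 : D (Del n) = Del n * ∑ p ∈ Finset.univ.filter (fun p : Fin n × Fin n => p.1 < p.2), 2 * hh p := by
    rw [Del, vdm]
    apply dprod_log
    intro p _
    have := (Commute.all (X p.2 ^ 2 : Ra n) (X p.1 ^ 2)).geom_sum₂_mul (j+1)
    have e : hh p * (X p.2 ^ 2 - X p.1 ^ 2) = (X p.2 ^ 2) ^ (j+1) - (X p.1 ^ 2) ^ (j+1) := by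
      rw [← this]; simp only [hh, pow_mul, Nat.add_sub_cancel]
    simp only [map_sub, Derivation.leibniz_pow, hDX]
    rw [mul_left_comm, mul_comm _ (hh p), e]; simp; ring
  have h2 : ∑ p ∈ Finset.univ.filter (fun p : Fin n × Fin n => p.1 < p.2), 2 * hh p =
      ∑ i ∈ Finset.range (j+1), qk n i * qk n (j-i) - ((j:Ra n)+1) * qk n j := by
    have hsym : ∀ p : Fin n × Fin n, hh p.swap = hh p := by
      intro p; simp only [hh, Prod.fst_swap, Prod.snd_swap]
      rw [← Finset.sum_range_reflect]
      refine Finset.sum_congr rfl fun i hi => ?_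
      have := Finset.mem_range.1 hi
      rw [show j + 1 - 1 - i = j - i by omega, show j - (j - i) = i by omega, mul_comm]
    have hall : ∑ p, hh p = ∑ i ∈ Finset.range (j+1), qk n i * qk n (j-i) := by
      simp only [hh]; rw [Finset.sum_comm]
      refine Finset.sum_congr rfl fun i hi => ?_
      rw [qk, qk, Finset.sum_mul_sum, Fintype.sum_prod_type, Finset.sum_comm]
    have hdiag : ∑ p ∈ Finset.univ.filter (fun p : Fin n × Fin n => p.1 = p.2), hh p = ((j:Ra n)+1) * qk n j := by
      rw [Finset.sum_filter, Fintype.sum_prod_type, qk, Finset.mul_sum]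
      refine Finset.sum_congr rfl fun a _ => ?_
      rw [Finset.sum_ite_eq]; simp only [Finset.mem_univ, if_true, hh]
      rw [Finset.sum_congr rfl (g := fun _ => X a ^ (2*j))]
      · simp
      · intro i hi; have := Finset.mem_range.1 hi
        rw [← pow_add]; congr 1; omega
    have hgt : ∑ p ∈ Finset.univ.filter (fun p : Fin n × Fin n => p.2 < p.1), hh p =
        ∑ p ∈ Finset.univ.filter (fun p : Fin n × Fin n => p.1 < p.2), hh p := by
      rw [Finset.sum_filter, Finset.sum_filter, ← Equiv.sum_comp (Equiv.prodComm _ _)]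
      refine Finset.sum_congr rfl fun p _ => ?_
      simp only [Equiv.prodComm_apply, Prod.fst_swap, Prod.snd_swap, hsym]
    have htot : ∑ p, hh p = ∑ p ∈ Finset.univ.filter (fun p : Fin n × Fin n => p.1 < p.2), hh p
       + ∑ p ∈ Finset.univ.filter (fun p : Fin n × Fin n => p.1 = p.2), hh p
       + ∑ p ∈ Finset.univ.filter (fun p : Fin n × Fin n => p.2 < p.1), hh p := by
      rw [Finset.sum_filter, Finset.sum_filter, Finset.sum_filter, ← Finset.sum_add_distrib, ← Finset.sum_add_distrib]
      refine Finset.sum_congr rfl fun p _ => ?_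
      rcases lt_trichotomy p.1 p.2 with h | h | h
      · simp [h, h.ne, h.le.not_gt]
      · simp [h]
      · simp [h, h.ne', h.le.not_gt]
    rw [← Finset.mul_sum, ← hall, ← hdiag, htot, hgt]; ring
  rw [Gam, ← h2, ← h1, hD, Finset.mul_sum]
  refine Finset.sum_congr rfl fun i _ => ?_
  rw [qk_d]; ring

end GinP

namespace GinP
open MvPolynomial ProbabilityTheory
variable {n : ℕ}

section
variable {κ : Type*} [Fintype κ]
lemma Gam_comm (F G : MvPolynomial κ ℝ) : Gam F G = Gam G F := by
  simp only [Gam]; exact Finset.sum_congr rfl fun i _ => mul_comm _ _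
lemma Gam_add (F G H : MvPolynomial κ ℝ) : Gam (F + G) H = Gam F H + Gam G H := by
  simp only [Gam, map_add, add_mul, Finset.sum_add_distrib]
lemma Gam_add' (F G H : MvPolynomial κ ℝ) : Gam H (F + G) = Gam H F + Gam H G := by
  rw [Gam_comm, Gam_add, Gam_comm F, Gam_comm G]
lemma Gam_mul (F G H : MvPolynomial κ ℝ) : Gam (F * G) H = F * Gam G H + G * Gam F H := by
  simp only [Gam, Derivation.leibniz, Finset.mul_sum, ← Finset.sum_add_distrib, smul_eq_mul]
  exact Finset.sum_congr rfl fun i _ => by ring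
lemma Gam_mul' (F G H : MvPolynomial κ ℝ) : Gam H (F * G) = F * Gam H G + G * Gam H F := by
  rw [Gam_comm, Gam_mul, Gam_comm F, Gam_comm G]
lemma Gam_C (c : ℝ) (H : MvPolynomial κ ℝ) : Gam (C c) H = 0 := by simp [Gam]
lemma Gam_C' (c : ℝ) (H : MvPolynomial κ ℝ) : Gam H (C c) = 0 := by simp [Gam]
lemma Gam_C_mul (c : ℝ) (F H : MvPolynomial κ ℝ) : Gam (C c * F) H = C c * Gam F H := by
  rw [Gam_mul, Gam_C]; simp
lemma Gam_C_mul' (c : ℝ) (F H : MvPolynomial κ ℝ) : Gam H (C c * F) = C c * Gam H F := by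
  rw [Gam_mul', Gam_C']; simp
lemma Lap_mul' [DecidableEq κ] (F G : MvPolynomial κ ℝ) : Lap (F*G) = Lap F*G + 2*Gam F G + F*Lap G := Lap_mul F G
lemma Lap_C [DecidableEq κ] (c : ℝ) : Lap (C c : MvPolynomial κ ℝ) = 0 := by simp [Lap_apply]
end

def Al (n : ℕ) : Subalgebra ℝ (Rg n) := Algebra.adjoin ℝ (Set.range (Pk n))

lemma Pk_mem (k : ℕ) : Pk n k ∈ Al n := Algebra.subset_adjoin ⟨k, rfl⟩

lemma Pk_zero : Pk n 0 = C (2 * (n:ℝ)) := by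
  simp [Pk, Matrix.trace_one, Io, map_ofNat]; ring

lemma C_mem (c : ℝ) : (C c : Rg n) ∈ Al n := (Al n).algebraMap_mem c

lemma rho_C (c : ℝ) : rho n (C c) = C c := (rho n).commutes c

lemma rho_Pk' (k : ℕ) : rho n (Pk n k) = C (2 * (-1) ^ k) * qk n k := by
  rw [rho_Pk]; simp [map_ofNat]

lemma qk_Gam (j l : ℕ) : Gam (qk n (j+1)) (qk n (l+1)) = C (4 * ((j:ℝ)+1) * ((l:ℝ)+1)) * qk n (j+l+1) := by
  simp only [Gam, qk_d]
  rw [qk, Finset.mul_sum]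
  refine Finset.sum_congr rfl fun i _ => ?_
  simp only [map_mul, map_add, map_natCast, map_ofNat, map_one]
  ring

lemma rad_G (f g : Rg n) (hf : f ∈ Al n) (hg : g ∈ Al n) : Gam f g ∈ Al n ∧ rho n (Gam f g) = 2 * Gam (rho n f) (rho n g) := by
  induction hf using Algebra.adjoin_induction with
  | algebraMap r => change Gam (C r) g ∈ _ ∧ rho n (Gam (C r) g) = 2 * Gam (rho n (C r)) _; rw [rho_C, Gam_C, Gam_C]; simp [zero_mem]
  | add x y _ _ hx hy => 
    rw [Gam_add, map_add, map_add, Gam_add, hx.2, hy.2]; exact ⟨add_mem hx.1 hy.1, by ring⟩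
  | mul x y hx' hy' hx hy => 
    rw [Gam_mul, map_add, map_mul, map_mul, map_mul, Gam_mul, hx.2, hy.2]
    exact ⟨add_mem (mul_mem hx' hy.1) (mul_mem hy' hx.1), by ring⟩
  | mem x hx =>
    obtain ⟨j, rfl⟩ := hx
    rcases j with _ | j
    · rw [Pk_zero, rho_C, Gam_C, Gam_C]; simp [zero_mem]
    induction hg using Algebra.adjoin_induction with
    | algebraMap r => change Gam _ (C r) ∈ _ ∧ rho n (Gam _ (C r)) = 2 * Gam _ (rho n (C r)); rw [rho_C, Gam_C', Gam_C']; simp [zero_mem]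
    | add x y _ _ hx hy => 
      rw [Gam_add', map_add, map_add, Gam_add', hx.2, hy.2]; exact ⟨add_mem hx.1 hy.1, by ring⟩
    | mul x y hx' hy' hx hy => 
      rw [Gam_mul', map_add, map_mul, map_mul, map_mul, Gam_mul', hx.2, hy.2]
      exact ⟨add_mem (mul_mem hx' hy.1) (mul_mem hy' hx.1), by ring⟩
    | mem x hx =>
      obtain ⟨l, rfl⟩ := hx
      rcases l with _ | l
      · rw [Pk_zero, rho_C, Gam_C', Gam_C']; simp [zero_mem]
      have h : Gam (Pk n (j+1)) (Pk n (l+1)) = C (-(16*((j:ℝ)+1)*(l+1))) * Pk n (j+l+1) := by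
        rw [Gam, Pk_grad]; simp [map_ofNat]
      rw [h]
      refine ⟨mul_mem (C_mem _) (Pk_mem _), ?_⟩
      rw [map_mul, rho_C, rho_Pk', rho_Pk', rho_Pk', Gam_C_mul, Gam_C_mul', qk_Gam]
      simp only [map_mul, map_neg, map_add, map_natCast, map_ofNat, map_one, map_pow]
      ring

lemma rad_L (F : Rg n) (hF : F ∈ Al n) : Lap F ∈ Al n ∧
    Del n * rho n (Lap F) = 4 * Gam (Del n) (rho n F) + 2 * (Del n * Lap (rho n F)) := by
  induction hF using Algebra.adjoin_induction with
  | algebraMap r =>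
    change Lap (C r) ∈ _ ∧ Del n * rho n (Lap (C r)) = 4 * Gam _ (rho n (C r)) + 2 * (Del n * Lap (rho n (C r)))
    rw [rho_C, Gam_C', Lap_C, Lap_C]; simp [zero_mem]
  | add x y _ _ hx hy => 
    refine ⟨by rw [map_add]; exact add_mem hx.1 hy.1, ?_⟩
    simp only [map_add, Gam_add', mul_add, hx.2, hy.2]; ring
  | mul x y hx' hy' hx hy =>
    have hG := rad_G x y hx' hy'
    have h2 : (2 : Rg n) = C 2 := by simp [map_ofNat]
    refine ⟨?_, ?_⟩
    · rw [Lap_mul', h2]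
      exact add_mem (add_mem (mul_mem hx.1 hy') (mul_mem (C_mem _) hG.1)) (mul_mem hx' hy.1)
    · rw [Lap_mul', h2]
      simp only [map_add, map_mul, rho_C, hG.2, Lap_mul', Gam_mul']
      rw [show (C 2 : Ra n) = 2 by simp [map_ofNat]]
      linear_combination (rho n y) * hx.2 + (rho n x) * hy.2
  | mem x hx =>
    obtain ⟨j, rfl⟩ := hx
    rcases j with _ | j
    · rw [Pk_zero, rho_C, Gam_C', Lap_C, Lap_C]; simp [zero_mem]
    have h : Lap (Pk n (j+1)) = C (-(4*((j:ℝ)+1))) * (∑ i ∈ Finset.range (j+1), Pk n i * Pk n (j-i) - Pk n j) := by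
      rw [Pk_lap]; simp [map_ofNat]
    rw [h]
    refine ⟨mul_mem (C_mem _) (sub_mem (sum_mem fun i _ => mul_mem (Pk_mem _) (Pk_mem _)) (Pk_mem _)), ?_⟩
    rw [map_mul, rho_C, map_sub, map_sum, rho_Pk', rho_Pk', Gam_C_mul', Gam_Del, Lap_mul', Gam_C, Lap_C, qk_lap]
    have hs : ∑ i ∈ Finset.range (j+1), rho n (Pk n i * Pk n (j-i)) =
        C (4 * (-1)^j) * ∑ i ∈ Finset.range (j+1), qk n i * qk n (j-i) := by
      rw [Finset.mul_sum]
      refine Finset.sum_congr rfl fun i hi => ?_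
      have := Finset.mem_range.1 hi
      rw [map_mul, rho_Pk', rho_Pk']
      have h2 : (-1:ℝ)^j = (-1)^i * (-1)^(j-i) := by rw [← pow_add]; congr 1; omega
      rw [h2]; simp only [map_mul, map_ofNat]; ring
    rw [hs]
    simp only [map_mul, map_neg, map_add, map_natCast, map_ofNat, map_one, map_pow]
    ring

def Itw (T : EndP (Io n × Io n)) (T' : EndP (Fin n)) : Prop :=
  ∀ G ∈ Al n, T G ∈ Al n ∧ Del n * rho n (T G) = T' (Del n * rho n G)

lemma Itw_mul {S T : EndP (Io n × Io n)} {S' T' : EndP (Fin n)} (hS : Itw S S') (hT : Itw T T') : Itw (S * T) (S' * T') := by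
  intro G hG
  obtain ⟨h1, h2⟩ := hT G hG
  obtain ⟨h3, h4⟩ := hS _ h1
  exact ⟨h3, by rw [Module.End.mul_apply, h4, h2, Module.End.mul_apply]⟩

lemma Itw_sub {S T : EndP (Io n × Io n)} {S' T' : EndP (Fin n)} (hS : Itw S S') (hT : Itw T T') : Itw (S - T) (S' - T') := by
  intro G hG
  obtain ⟨h1, h2⟩ := hT G hG
  obtain ⟨h3, h4⟩ := hS G hG
  exact ⟨sub_mem h3 h1, by rw [LinearMap.sub_apply, map_sub, mul_sub, h4, h2, LinearMap.sub_apply]⟩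

lemma Itw_mulE (F : Rg n) (hF : F ∈ Al n) : Itw (mulE F) (mulE (rho n F)) := by
  intro G hG
  refine ⟨mul_mem hF hG, ?_⟩
  change Del n * rho n (F * G) = rho n F * (Del n * rho n G)
  rw [map_mul]; ring

lemma Itw_Lap : Itw (n := n) Lap ((2:ℝ) • Lap) := by
  intro G hG
  obtain ⟨h1, h2⟩ := rad_L G hG
  refine ⟨h1, ?_⟩
  rw [h2, LinearMap.smul_apply, Lap_mul', Lap_Del, smul_eq_C_mul]
  simp only [map_ofNat]; ring

lemma Itw_ad {T : EndP (Io n × Io n)} {T' : EndP (Fin n)} (hT : Itw T T') (m : ℕ) :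
    Itw ((adLL Lap ^ m) T) ((2:ℝ)^m • (adLL Lap ^ m) T') := by
  induction m with
  | zero => simpa using hT
  | succ m ih =>
    have := Itw_sub (Itw_mul Itw_Lap ih) (Itw_mul ih Itw_Lap)
    rw [pow_succ' (adLL Lap), Module.End.mul_apply, pow_succ' (adLL Lap), Module.End.mul_apply, adLL_apply, adLL_apply, adL, adL]
    convert this using 1
    simp only [smul_mul_assoc, mul_smul_comm, smul_sub, smul_smul, pow_succ]
    simp only [mul_comm]

lemma rho_homog (F : Rg n) (m : ℕ) (hF : F.IsHomogeneous m) : (rho n F).IsHomogeneous m := by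
  have := hF.aeval (fun pq : Io n × Io n => C (1/2 : ℝ) * Dm (fun j => (X j : Ra n)) pq.1 pq.2) (n := 1) ?_
  · simpa [rho] using this
  rintro ⟨⟨i, r⟩, ⟨j, s⟩⟩
  refine (IsHomogeneous.C_mul · _) ?_
  simp only [Dm, Matrix.of_apply]
  split_ifs
  · fin_cases r <;> fin_cases s <;> simp [isHomogeneous_X, isHomogeneous_zero, IsHomogeneous.neg]
  · exact isHomogeneous_zero _ _ _

theorem fis_rad (m : ℕ) (F G : Rg n) (hF : F ∈ Al n) (hG : G ∈ Al n) (hFm : F.IsHomogeneous m) (hGm : G.IsHomogeneous m) :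
    fis F G * fis (Del n) (Del n) = 2^m * fis (Del n * rho n F) (Del n * rho n G) := by
  have h := (Itw_ad (Itw_mulE F hF) m G hG).2
  rw [ad_const m F G hFm hGm, rho_C, LinearMap.smul_apply] at h
  have h2 := congrArg (fis (Del n)) h
  rw [fis_smul_right, ← ad_homog m _ (rho_homog F m hFm), mul_comm (Del n) (C _), ← smul_eq_C_mul, fis_smul_right,
    mul_comm (rho n F)] at h2
  have : (2:ℝ)^m * m.factorial ≠ 0 := by positivity
  apply mul_left_cancel₀ this
  linear_combination h2
end GinP

namespace GinP
open MvPolynomial ProbabilityTheory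

section cauchy
variable {R : Type*} [CommRing R]

lemma vdm_succ {n : ℕ} (x : Fin (n+1) → R) :
    vdm x = (∏ i : Fin n, (x i.succ - x 0)) * vdm (fun i : Fin n => x i.succ) := by
  rw [vdm_eq, vdm_eq, Matrix.det_vandermonde, Matrix.det_vandermonde, Fin.prod_univ_succ]
  simp only [Fin.prod_Ioi_zero, Fin.prod_Ioi_succ]

lemma cauchy_det (n : ℕ) (x y : Fin n → R) (u : Fin n → Fin n → R) (hu : ∀ i j, u i j * (1 - x i * y j) = 1) :
    (Matrix.of u).det = vdm x * vdm y * ∏ i, ∏ j, u i j := by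
  induction n with
  | zero => simp [vdm]
  | succ n ih =>
    let Cm : Matrix (Fin (n+1)) (Fin (n+1)) R := Matrix.of fun i j => Fin.cases 1 (fun i' => y j * u i'.succ j) i
    let r : Fin (n+1) → R := fun i => Fin.cases 1 (fun i' => x i'.succ - x 0) i
    have key : ∀ i i' j, u i j - u i' j = (x i - x i') * y j * u i j * u i' j := by
      intro i i' j
      linear_combination (-u i j) * hu i' j + (u i' j) * hu i j 
    have h1 : (Matrix.of u).det = (Matrix.of fun i j => r i * (u 0 j * Cm i j)).det := by
      apply Matrix.det_eq_of_forall_row_eq_smul_add_const (fun i => Fin.cases 0 (fun _ => 1) i) 0 (by simp)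
      intro i j
      refine Fin.cases ?_ (fun i' => ?_) i
      · simp [Cm, r]
      · simp only [Cm, r, Matrix.of_apply, Fin.cases_succ, Fin.cases_zero]
        linear_combination key i'.succ 0 j
    let Em : Matrix (Fin (n+1)) (Fin (n+1)) R := Matrix.of fun i j => Fin.cases (Cm i 0) (fun j' => Cm i j'.succ - Cm i 0) j
    have h2 : Cm.det = Em.det := by
      rw [← Matrix.det_transpose, ← Matrix.det_transpose Em]
      apply Matrix.det_eq_of_forall_row_eq_smul_add_const (fun i => Fin.cases 0 (fun _ => 1) i) 0 (by simp)
      intro i j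
      refine Fin.cases ?_ (fun i' => ?_) i
      · simp [Em]
      · simp [Em]
    have h3 : Em.det = (Matrix.of fun i j : Fin n => u i.succ 0 * ((y j.succ - y 0) * u i.succ j.succ)).det := by
      rw [Matrix.det_succ_row_zero, Fin.sum_univ_succ, Finset.sum_eq_zero, add_zero]
      · have : Em 0 0 = 1 := by simp [Em, Cm]
        rw [this]; simp only [Fin.val_zero, pow_zero, one_mul]
        congr 1
        ext i j
        simp only [Em, Cm, Matrix.submatrix_apply, Matrix.of_apply, Fin.zero_succAbove, Fin.cases_succ]
        linear_combination (-(u i.succ j.succ) * y j.succ) * hu i.succ 0 + (u i.succ 0 * y 0) * hu i.succ j.succ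
      · intro j _
        have : Em 0 j.succ = 0 := by simp [Em, Cm]
        rw [this]; ring
    have ih' := ih (fun i => x i.succ) (fun i => y i.succ) (fun i j => u i.succ j.succ) (fun i j => hu _ _)
    have h4 := Matrix.det_mul_row (fun j => y (Fin.succ j) - y 0) (Matrix.of fun i j : Fin n => u i.succ j.succ)
    have h5 := Matrix.det_mul_column (fun i : Fin n => u i.succ 0) (Matrix.of fun i j : Fin n => (y j.succ - y 0) * u i.succ j.succ)
    have h6 := Matrix.det_mul_column r (Matrix.of fun i j => u 0 j * Cm i j)
    have h7 := Matrix.det_mul_row (fun j => u 0 j) Cm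
    simp only [Matrix.of_apply] at h4 h5 h6 h7
    rw [h1, h6, h7, h2, h3, h5, h4, ih', vdm_succ x, vdm_succ y]
    have h8 : ∏ i, r i = ∏ i : Fin n, (x i.succ - x 0) := by rw [Fin.prod_univ_succ]; simp [r]
    rw [h8, Fin.prod_univ_succ (fun i => ∏ j, u i j)]
    simp only [Fin.prod_univ_succ, Finset.prod_mul_distrib]
    ring

/-- geometric series -/
def geo (x : R) : PowerSeries R := PowerSeries.mk fun k => x ^ k

lemma geo_mul (x : R) : geo x * (1 - PowerSeries.C x * PowerSeries.X) = 1 := by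
  ext k
  rw [mul_sub, mul_one, ← mul_assoc, map_sub]
  rcases k with _ | k
  · simp [geo]
  · rw [PowerSeries.coeff_succ_mul_X, PowerSeries.coeff_mul_C]; simp [geo, pow_succ, PowerSeries.coeff_one]

lemma coeff_geo_prod {ι : Type*} [Fintype ι] [DecidableEq ι] (x : ι → R) (d : ℕ) :
    PowerSeries.coeff d (∏ i, geo (x i)) = hS d x := by
  rw [PowerSeries.coeff_prod, hS]
  refine Finset.sum_bij' (fun l _ => (l : ι → ℕ)) (fun l _ => Finsupp.equivFunOnFinite.symm l) ?_ ?_ ?_ ?_ ?_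
  · intro l hl; rw [Finset.mem_finsuppAntidiag] at hl; simpa [Finset.mem_piAntidiag] using hl.1
  · intro l hl; rw [Finset.mem_piAntidiag] at hl; simpa [Finset.mem_finsuppAntidiag] using hl.1
  · intro l _; ext; rfl
  · intro l _; rfl
  · intro l _; simp [geo]

lemma geo_d (x : R) : PowerSeries.derivative R (geo x) = geo x * (PowerSeries.C x * geo x) := by
  have h := congrArg (PowerSeries.derivative R) (geo_mul x)
  rw [Derivation.leibniz] at h
  have h1 : PowerSeries.derivative R (1 - PowerSeries.C x * PowerSeries.X) = - PowerSeries.C x := by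
    rw [map_sub, Derivation.leibniz]; simp [PowerSeries.derivative_C]
  rw [h1] at h
  simp only [smul_eq_mul, map_one_eq_zero] at h
  have h2 : PowerSeries.derivative R (1 : PowerSeries R) = 0 := by simp
  rw [h2] at h
  linear_combination (geo x) * h - (PowerSeries.derivative R (geo x)) * geo_mul x

lemma dprod_log' {A R β : Type*} [CommRing A] [CommRing R] [Algebra A R] [DecidableEq β] (D : Derivation A R R) (S : Finset β) (f h : β → R)
    (hf : ∀ b ∈ S, D (f b) = f b * h b) : D (∏ b ∈ S, f b) = (∏ b ∈ S, f b) * ∑ b ∈ S, h b := by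
  induction S using Finset.induction_on with
  | empty => simp
  | insert b S hb ih =>
    rw [Finset.prod_insert hb, Finset.sum_insert hb, Derivation.leibniz,
      ih (fun c hc => hf c (Finset.mem_insert_of_mem hc)), hf b (Finset.mem_insert_self _ _)]
    simp only [smul_eq_mul]; ring

lemma hS_newton {ι : Type*} [Fintype ι] [DecidableEq ι] (x : ι → R) (d : ℕ) :
    ((d:R) + 1) * hS (d+1) x = ∑ p ∈ Finset.HasAntidiagonal.antidiagonal d, hS p.1 x * ∑ i, x i ^ (p.2 + 1) := by
  have h := dprod_log' (PowerSeries.derivative R) Finset.univ (fun i => geo (x i)) (fun i => PowerSeries.C (x i) * geo (x i))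
    (fun i _ => geo_d (x i))
  have h2 := congrArg (PowerSeries.coeff d) h
  rw [PowerSeries.coeff_derivative, coeff_geo_prod, PowerSeries.coeff_mul, mul_comm] at h2
  rw [h2]
  refine Finset.sum_congr rfl fun p _ => ?_
  rw [coeff_geo_prod, map_sum]
  congr 1
  refine Finset.sum_congr rfl fun i _ => ?_
  rw [PowerSeries.coeff_C_mul]; simp [geo, pow_succ, mul_comm]

lemma vdm_map {S : Type*} [CommRing S] (f : R →+* S) {n : ℕ} (x : Fin n → R) : f (vdm x) = vdm (fun i => f (x i)) := by
  simp [vdm, map_prod]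

lemma vdm_mul {n : ℕ} (c : R) (x : Fin n → R) : vdm (fun i => x i * c) = vdm x * c ^ (Finset.univ.filter (fun p : Fin n × Fin n => p.1 < p.2)).card := by
  simp only [vdm, ← sub_mul, Finset.prod_mul_distrib, Finset.prod_const]

def ntri (n : ℕ) : ℕ := (Finset.univ.filter (fun p : Fin n × Fin n => p.1 < p.2)).card

theorem cauchy_id {n : ℕ} (x y : Fin n → R) (d : ℕ) :
    vdm x * vdm y * hS d (fun c : Fin n × Fin n => x c.1 * y c.2) =
      ∑ σ : Equiv.Perm (Fin n), (Equiv.Perm.sign σ : ℤ) • hS (d + ntri n) (fun i => x (σ i) * y i) := by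
  have h := cauchy_det n (fun i => PowerSeries.C (x i) * PowerSeries.X) (fun j => PowerSeries.C (y j)) (fun i j => geo (x i * y j))
    (fun i j => by have := geo_mul (x i * y j); rw [map_mul] at this; linear_combination this)
  rw [vdm_mul, ← vdm_map, ← vdm_map] at h
  have h2 := congrArg (PowerSeries.coeff (d + ntri n)) h
  rw [Matrix.det_apply, map_sum] at h2
  have h3 : ∏ i, ∏ j, geo (x i * y j) = ∏ c : Fin n × Fin n, geo (x c.1 * y c.2) := by rw [Fintype.prod_prod_type]
  rw [h3] at h2
  symm
  convert h2 using 1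
  · refine Finset.sum_congr rfl fun σ _ => ?_
    rw [Units.smul_def, map_zsmul, ← coeff_geo_prod]; rfl
  · rw [← coeff_geo_prod (fun c : Fin n × Fin n => x c.1 * y c.2)]
    rw [show ∀ a b c e : PowerSeries R, a * b * c * e = (a * (c * e)) * b from fun a b c e => by ring, ← ntri,
      PowerSeries.coeff_mul_X_pow, PowerSeries.coeff_C_mul, PowerSeries.coeff_C_mul, mul_assoc]
end cauchy
end GinP

namespace GinP
open MvPolynomial ProbabilityTheory

lemma skew_nf (n : ℕ) : ∀ (E : Type) [NormedAddCommGroup E] [InnerProductSpace ℝ E] [FiniteDimensional ℝ E] (T : E →ₗ[ℝ] E)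
    (_ : ∀ x y, inner ℝ (T x) y = - inner ℝ x (T y)) (_ : Function.Injective T) (_ : Module.finrank ℝ E = 2 * n),
    ∃ (b : Fin n × Fin 2 → E) (a : Fin n → ℝ), Orthonormal ℝ b ∧ ∀ i, 0 < a i ∧ T (b (i, 0)) = - a i • b (i, 1) ∧
      T (b (i, 1)) = a i • b (i, 0) := by
  induction n with
  | zero =>
    intro E _ _ _ T _ _ _
    exact ⟨fun p => p.1.elim0, fun i => i.elim0, ⟨fun p => p.1.elim0, fun p => p.1.elim0⟩, fun i => i.elim0⟩
  | succ n ih =>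
    intro E _ _ _ T hT hinj hdim
    have hsym : (T ∘ₗ T).IsSymmetric := by
      intro x y; simp only [LinearMap.comp_apply]; rw [hT, hT]; simp
    have hpos : 0 < Module.finrank ℝ E := by omega
    haveI : Nontrivial E := Module.nontrivial_of_finrank_pos hpos
    let v := hsym.eigenvectorBasis rfl ⟨0, hpos⟩
    have hv : ‖v‖ = 1 := (hsym.eigenvectorBasis rfl).norm_eq_one _
    obtain ⟨μ, hμ⟩ : ∃ μ : ℝ, T (T v) = μ • v := ⟨_, hsym.apply_eigenvectorBasis rfl ⟨0, hpos⟩⟩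
    have hv0 : v ≠ 0 := by intro h; rw [h] at hv; simp at hv
    have hTv : T v ≠ 0 := by intro h; exact hv0 (hinj (by simpa using h))
    set c := ‖T v‖ with hc
    have hcp : 0 < c := norm_pos_iff.2 hTv
    have hvv : inner ℝ v v = 1 := by rw [real_inner_self_eq_norm_sq, hv]; norm_num
    have hμc : μ = - c^2 := by
      have h1 := hT (T v) v
      rw [hμ, inner_smul_left, real_inner_self_eq_norm_sq, real_inner_self_eq_norm_sq, hv] at h1
      simpa using h1
    let w := c⁻¹ • T v
    have hw : ‖w‖ = 1 := by
      simp only [w]; rw [norm_smul, ← hc, norm_inv, Real.norm_of_nonneg hcp.le]; field_simp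
    have hvTv : inner ℝ v (T v) = 0 := by
      have := hT v v; rw [real_inner_comm] at this; linarith
    have hvw : inner ℝ v w = 0 := by simp only [w]; rw [inner_smul_right, hvTv, mul_zero]
    have hTvw : T v = c • w := by simp only [w]; rw [smul_smul, mul_inv_cancel₀ hcp.ne', one_smul]
    have hTw : T w = - c • v := by
      simp only [w]; rw [map_smul, hμ, hμc, smul_smul]; congr 1; field_simp
    let e : Fin 2 → E := ![w, v]
    have he : Orthonormal ℝ e := by
      refine ⟨fun i => ?_, fun i j hij => ?_⟩
      · fin_cases i <;> simp [e, hv, hw]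
      · fin_cases i <;> fin_cases j <;> simp [e] at hij ⊢
        · rw [real_inner_comm]; exact hvw
        · exact hvw
    let U := Submodule.span ℝ (Set.range e)
    let W := Uᗮ
    have hU : Module.finrank ℝ U = 2 := by
      have := finrank_span_eq_card he.linearIndependent; simpa using this
    have hW : Module.finrank ℝ W = 2 * n := by
      have := Submodule.finrank_add_finrank_orthogonal U
      simp only [W]; omega
    have hmem : ∀ x, x ∈ W ↔ inner ℝ w x = 0 ∧ inner ℝ v x = 0 := by
      intro x
      rw [Submodule.mem_orthogonal]
      constructor
      · intro h; exact ⟨h w (Submodule.subset_span ⟨0, rfl⟩), h v (Submodule.subset_span ⟨1, rfl⟩)⟩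
      · rintro ⟨h1, h2⟩ u hu
        induction hu using Submodule.span_induction with
        | mem u hu => obtain ⟨i, rfl⟩ := hu; fin_cases i <;> simpa [e]
        | zero => simp
        | add x y _ _ hx hy => rw [inner_add_left, hx, hy, add_zero]
        | smul r x _ hx => rw [inner_smul_left, hx, mul_zero]
    have hTW : ∀ x ∈ W, T x ∈ W := by
      intro x hx
      obtain ⟨h1, h2⟩ := (hmem x).1 hx
      rw [hmem]
      have e1 := hT w x
      have e2 := hT v x
      rw [hTw, inner_smul_left, h2, mul_zero] at e1
      rw [hTvw, inner_smul_left, h1, mul_zero] at e2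
      exact ⟨by linarith, by linarith⟩
    obtain ⟨b', a', hb', hh⟩ := ih W (T.restrict hTW) (fun x y => hT x y)
      (fun x y h => Subtype.ext (hinj (congrArg Subtype.val h))) hW
    refine ⟨fun p => Fin.cases (e p.2) (fun i => (b' (i, p.2) : E)) p.1, fun i => Fin.cases c a' i, ?_, ?_⟩
    · have hb'' : Orthonormal ℝ (fun p => (b' p : E)) := hb'.comp_linearIsometry W.subtypeₗᵢ
      have hmix : ∀ s q, inner ℝ (e s) (b' q : E) = 0 := by
        intro s q; exact (Submodule.mem_orthogonal _ _).1 (b' q).2 _ (Submodule.subset_span ⟨s, rfl⟩)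
      refine ⟨?_, ?_⟩
      · rintro ⟨i, s⟩
        refine Fin.cases ?_ (fun i => ?_) i
        · exact he.1 s
        · exact hb''.1 (i, s)
      · rintro ⟨i, s⟩ ⟨j, t⟩
        refine Fin.cases ?_ (fun i => ?_) i <;> refine Fin.cases ?_ (fun j => ?_) j
        · intro h; exact he.2 (fun h' => h (by rw [h']))
        · intro _; exact hmix s (j, t)
        · intro _; simp only [Fin.cases_succ, Fin.cases_zero]; rw [real_inner_comm]; exact hmix t (i, s)
        · intro h; exact hb''.2 (i := (i, s)) (j := (j, t)) (fun h' => h (by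
            have h1 : i = j := congrArg Prod.fst h'
            have h2 : s = t := congrArg Prod.snd h'
            rw [h1, h2]))
    · intro i
      refine Fin.cases ?_ (fun i => ?_) i
      · exact ⟨hcp, hTw, hTvw⟩
      · obtain ⟨h1, h2, h3⟩ := hh i
        refine ⟨h1, ?_, ?_⟩
        · exact congrArg Subtype.val h2
        · exact congrArg Subtype.val h3

theorem mat_nf {n : ℕ} (A : Matrix (Io n) (Io n) ℝ) (hA : Aᵀ = -A) (hdet : A.det ≠ 0) :
    ∃ (k : Matrix (Io n) (Io n) ℝ) (a : Fin n → ℝ), kᵀ * k = 1 ∧ k * kᵀ = 1 ∧ (∀ i, 0 < a i) ∧ A = k * Dm a * kᵀ := by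
  let T := Matrix.toEuclideanLin A
  have hTa : ∀ x p, T x p = ∑ q, A p q * x q := fun x p => rfl
  have hs1 : ∀ x y, inner ℝ (T x) y = - inner ℝ x (T y) := by
    intro x y
    rw [PiLp.inner_apply, PiLp.inner_apply]
    simp only [hTa, RCLike.inner_apply, conj_trivial, Finset.mul_sum, Finset.sum_mul]
    rw [Finset.sum_comm, ← Finset.sum_neg_distrib]
    refine Finset.sum_congr rfl fun p _ => ?_
    rw [← Finset.sum_neg_distrib]
    refine Finset.sum_congr rfl fun q _ => ?_
    have : A q p = - A p q := congrFun (congrFun hA p) q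
    rw [this]; ring
  have hs2 : Function.Injective T := by
    intro x y hxy
    have h1 : A *ᵥ x.ofLp = A *ᵥ y.ofLp := by
      ext p; exact congrFun (congrArg WithLp.ofLp hxy) p
    have := Matrix.mulVec_injective_of_isUnit ((Matrix.isUnit_iff_isUnit_det A).2 (isUnit_iff_ne_zero.2 hdet)) h1
    exact WithLp.ofLp_injective 2 this
  have hs3 : Module.finrank ℝ (EuclideanSpace ℝ (Io n)) = 2 * n := by simp [Io, mul_comm]
  obtain ⟨b, a, hb, h⟩ := skew_nf n (EuclideanSpace ℝ (Io n)) T hs1 hs2 hs3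
  let k : Matrix (Io n) (Io n) ℝ := Matrix.of fun p q => b q p
  have hk : kᵀ * k = 1 := by
    ext p q
    have := (orthonormal_iff_ite.1 hb) p q
    rw [PiLp.inner_apply] at this
    rw [Matrix.mul_apply, Matrix.one_apply, ← this]
    refine Finset.sum_congr rfl fun r _ => ?_
    simp [k, mul_comm]
  have hk' := mul_eq_one_comm.1 hk
  refine ⟨k, a, hk, hk', fun i => (h i).1, ?_⟩
  have : A * k = k * Dm a := by
    ext p ⟨j, s⟩
    have e1 : (A * k) p (j, s) = T (b (j, s)) p := by rw [hTa, Matrix.mul_apply]; rfl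
    rw [e1, Matrix.mul_apply, Fintype.sum_prod_type, Finset.sum_eq_single j]
    · fin_cases s
      · have := (h j).2.1
        change T (b (j, 0)) p = _
        rw [this]; simp [Dm, k, mul_comm]
      · have := (h j).2.2
        change T (b (j, 1)) p = _
        rw [this]; simp [Dm, k, mul_comm]
    · intro i _ hij; simp [Dm, hij]
    · simp
  rw [← this, Matrix.mul_assoc, hk', Matrix.mul_one]
end GinP

namespace GinP
open MvPolynomial ProbabilityTheory
variable {n : ℕ}

abbrev fsn {κ : Type*} [Fintype κ] (l : κ → ℕ) : κ →₀ ℕ := Finsupp.equivFunOnFinite.symm l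

lemma monomial_fsn {κ : Type*} [Fintype κ] (l : κ → ℕ) (c : ℝ) : monomial (fsn l) c = C c * ∏ i, (X i : MvPolynomial κ ℝ) ^ l i := by
  rw [monomial_eq, Finsupp.prod_fintype _ _ (by simp)]; rfl

def zz (ta : Fin n → ℝ) (pq : Io n × Io n) : Rg n := C (1/2) * (gX n * (Dm ta).map C * (gX n)ᵀ : Matrix (Io n) (Io n) (Rg n)) pq.1 pq.2

def Qd (ta : Fin n → ℝ) (d : ℕ) : Rg n :=
  ∑ l ∈ Finset.piAntidiag (Finset.univ : Finset (Io n × Io n)) (2*d), monomial (fsn l) (Ex (∏ i, zz ta i ^ l i) / sfac (fsn l))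

lemma sfac_pos {κ : Type*} [Fintype κ] (s : κ →₀ ℕ) : 0 < sfac s := by
  rw [sfac]; exact Finset.prod_pos fun i _ => by positivity

lemma fis_Qd (ta : Fin n → ℝ) (d : ℕ) (F : Rg n) (hF : F.IsHomogeneous (2*d)) : fis F (Qd ta d) = Ex (aeval (zz ta) F) := by
  rw [fis, aeval_def, eval₂_eq', map_sum]
  refine Finset.sum_congr rfl fun s hs => ?_
  have hs2 : ∑ i, s i = 2*d := by
    have := hF (mem_support_iff.1 hs)
    rw [homog_deg, Finsupp.degree_eq_sum] at this; exact this
  have : coeff s (Qd ta d) = Ex (∏ i, zz ta i ^ s i) / sfac s := by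
    rw [Qd, coeff_sum, Finset.sum_eq_single (s : Io n × Io n → ℕ)]
    · have e : fsn (s : Io n × Io n → ℕ) = s := by ext; rfl
      rw [e, coeff_monomial, if_pos rfl]
    · intro l _ hl; rw [coeff_monomial, if_neg]
      intro h; apply hl; rw [← h]; rfl
    · intro h; exfalso; apply h; rw [Finset.mem_piAntidiag]; exact ⟨hs2, by simp⟩
  rw [this, algebraMap_eq, Ex_C_mul, div_mul_cancel₀ _ (sfac_pos s).ne']

lemma eval_Qd (ta : Fin n → ℝ) (d : ℕ) (y : Io n × Io n → ℝ) : (2*d).factorial * eval y (Qd ta d) = Ex ((∑ i, C (y i) * zz ta i) ^ (2*d)) := by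
  rw [Finset.sum_pow_eq_sum_piAntidiag, map_sum, Qd, map_sum, Finset.mul_sum]
  refine Finset.sum_congr rfl fun l hl => ?_
  have hl2 : ∑ i, l i = 2*d := (Finset.mem_piAntidiag.1 hl).1
  have e1 : (Nat.multinomial Finset.univ l : Rg n) * ∏ i, (C (y i) * zz ta i) ^ l i
      = C ((Nat.multinomial Finset.univ l : ℝ) * ∏ i, y i ^ l i) * ∏ i, zz ta i ^ l i := by
    simp_rw [mul_pow, Finset.prod_mul_distrib, map_mul, map_prod, map_pow, map_natCast]; ring
  rw [e1, Ex_C_mul, monomial_fsn]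
  simp only [map_mul, eval_C, map_prod, map_pow, eval_X]
  have e3 : (Nat.multinomial Finset.univ l : ℝ) * sfac (fsn l) = (2*d).factorial := by
    rw [← hl2, ← Nat.multinomial_spec, sfac]; push_cast; rw [mul_comm]; rfl
  rw [← e3]
  have := (sfac_pos (fsn l)).ne'
  field_simp

lemma qf_anti (ta : Fin n → ℝ) (y : Io n × Io n → ℝ) (B : Matrix (Io n) (Io n) ℝ)
    (hB : ∀ p q, B p q = (y (q, p) - y (p, q)) / 2) : ∑ i, C (y i) * zz ta i = qf (Dm ta) B := by
  set M := gX n * (Dm ta).map C * (gX n)ᵀ with hM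
  have hMt : ∀ p q, M q p = - M p q := by
    intro p q
    have : Mᵀ = - M := by
      rw [hM, Matrix.transpose_mul, Matrix.transpose_mul, Matrix.transpose_transpose, ← Matrix.mul_assoc]
      have : ((Dm ta).map C : Matrix (Io n) (Io n) (Rg n))ᵀ = - (Dm ta).map C := by
        rw [← Matrix.transpose_map, Dm_t]; ext1 p q; simp
      rw [this]; simp
    exact congrFun (congrFun this p) q
  rw [qf, ← hM]
  simp only [Matrix.trace, Matrix.diag_apply, Matrix.mul_apply, Matrix.map_apply, hB]
  have e : ∀ p q, M p q * C ((y (p, q) - y (q, p)) / 2) = C (1/2) * (C (y (p, q)) * M p q) - C (1/2) * (C (y (q, p)) * M p q) := by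
    intro p q; rw [sub_div, map_sub, div_eq_mul_one_div, div_eq_mul_one_div (y (q,p)), C_mul, C_mul]; ring
  simp only [e, Finset.sum_sub_distrib]
  rw [Finset.sum_comm (f := fun p q => C (1/2) * (C (y (q, p)) * M p q))]
  have e2 : ∀ p q, C (1/2) * (C (y (q, p)) * M p q) = - (C (1/2) * (C (y (q, p)) * M q p)) := by
    intro p q; rw [hMt q p]; ring
  simp only [e2, Finset.sum_neg_distrib]
  rw [sub_neg_eq_add, ← two_mul, Fintype.sum_prod_type]
  simp only [← Finset.mul_sum]
  rw [← mul_assoc (2 : Rg n), ← mul_assoc, show (C (1/2) * (2 * C (1/2)) : Rg n) = C (1/2) by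
    rw [show (2 : Rg n) = C 2 by simp [map_ofNat], ← C_mul, ← C_mul]; norm_num]
  simp only [Finset.mul_sum]
  refine Finset.sum_congr rfl fun p _ => Finset.sum_congr rfl fun q _ => ?_
  simp only [zz, ← hM]; ring

/-- y is normal-form related to b -/
def Nf (y : Io n × Io n → ℝ) (k : Matrix (Io n) (Io n) ℝ) (b : Fin n → ℝ) : Prop :=
  kᵀ * k = 1 ∧ ∀ p q, (k * Dm b * kᵀ) p q = (y (q, p) - y (p, q)) / 2

lemma eval_Qd_nf (ta : Fin n → ℝ) (d : ℕ) (y : Io n × Io n → ℝ) (k b) (h : Nf y k b) :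
    eval y (Qd ta d) = hS d (fun c : Fin n × Fin n => ta c.2 ^ 2 * b c.1 ^ 2) := by
  have h1 := eval_Qd ta d y
  rw [qf_anti ta y _ h.2, Ex_qf _ _ _ h.1] at h1
  exact mul_left_cancel₀ (by positivity) h1

lemma conj_pow {R ι : Type*} [CommRing R] [Fintype ι] [DecidableEq ι] (k M : Matrix ι ι R) (hk : kᵀ * k = 1) (m : ℕ) :
    (k * M * kᵀ) ^ m = k * M ^ m * kᵀ := by
  have hk' := mul_eq_one_comm.1 hk
  induction m with
  | zero => simp [hk']
  | succ m ih =>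
    rw [pow_succ, ih, pow_succ]
    simp only [Matrix.mul_assoc]; rw [← Matrix.mul_assoc kᵀ k, hk, Matrix.one_mul]

lemma eval_Am (y : Io n × Io n → ℝ) : (Am n).map (eval y) = Matrix.of fun p q => y (p, q) - y (q, p) := by
  ext p q; simp [Am, gX]

lemma eval_Pk (y : Io n × Io n → ℝ) (m : ℕ) : eval y (Pk n m) = trace ((Matrix.of fun p q => y (p, q) - y (q, p)) ^ (2*m)) := by
  rw [Pk, ← eval_Am]
  have : (Am n ^ (2*m)).map (eval y) = ((Am n).map (eval y)) ^ (2*m) :=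
    map_pow (RingHom.mapMatrix (eval y)) (Am n) (2*m)
  rw [← this]; simp only [trace, map_sum, Matrix.diag_apply, Matrix.map_apply]

lemma eval_Pk_nf (y : Io n × Io n → ℝ) (k b) (h : Nf y k b) (m : ℕ) :
    eval y (Pk n m) = 2 * (-4)^m * ∑ j, b j ^ (2*m) := by
  have e : (Matrix.of fun p q => y (p, q) - y (q, p)) = (-2 : ℝ) • (k * Dm b * kᵀ) := by
    ext p q; rw [Matrix.smul_apply, h.2, Matrix.of_apply, smul_eq_mul]; ring
  rw [eval_Pk, e, smul_pow, conj_pow _ _ h.1, trace_smul, Matrix.trace_mul_comm, ← Matrix.mul_assoc, h.1, Matrix.one_mul,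
    tr_Dm, smul_eq_mul, pow_mul, show (-4:ℝ) = 4 * (-1) by norm_num, mul_pow]
  norm_num; ring

def Sy (n : ℕ) : Subalgebra ℝ (Ra n) := Algebra.adjoin ℝ (Set.range fun k => psum (Fin n) ℝ k)

lemma lift_sym (h : Ra n) (hh : h ∈ Sy n) : ∃ G ∈ Al n, ∀ y k b, Nf y k b → eval y G = eval (fun j => b j ^ 2) h := by
  induction hh using Algebra.adjoin_induction with
  | algebraMap r => exact ⟨C r, C_mem r, fun y k b _ => by change _ = eval _ (C r); simp⟩
  | add x y _ _ hx hy =>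
    obtain ⟨G, hG, h1⟩ := hx; obtain ⟨H, hH, h2⟩ := hy
    exact ⟨G + H, add_mem hG hH, fun y k b h => by rw [map_add, map_add, h1 y k b h, h2 y k b h]⟩
  | mul x y _ _ hx hy =>
    obtain ⟨G, hG, h1⟩ := hx; obtain ⟨H, hH, h2⟩ := hy
    exact ⟨G * H, mul_mem hG hH, fun y k b h => by rw [map_mul, map_mul, h1 y k b h, h2 y k b h]⟩
  | mem x hx =>
    obtain ⟨m, rfl⟩ := hx
    refine ⟨C (1 / (2 * (-4)^m)) * Pk n m, mul_mem (C_mem _) (Pk_mem _), fun y k b h => ?_⟩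
    rw [map_mul, eval_C, eval_Pk_nf y k b h]
    simp only [psum, map_sum, map_pow, eval_X, ← pow_mul]
    field_simp

lemma hS_map {R S ι : Type*} [CommRing R] [CommRing S] [Fintype ι] [DecidableEq ι] (f : R →+* S) (d : ℕ) (x : ι → R) :
    f (hS d x) = hS d (fun i => f (x i)) := by simp [hS, map_sum, map_prod]

lemma hS_smul {R ι : Type*} [CommRing R] [Fintype ι] [DecidableEq ι] (c : R) (d : ℕ) (x : ι → R) :
    hS d (fun i => c * x i) = c ^ d * hS d x := by
  rw [hS, hS, Finset.mul_sum]
  refine Finset.sum_congr rfl fun l hl => ?_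
  rw [← (Finset.mem_piAntidiag.1 hl).1, ← Finset.prod_pow_eq_pow_sum, ← Finset.prod_mul_distrib]
  simp [mul_pow]

lemma hS_mem (ta : Fin n → ℝ) (d : ℕ) : hS d (fun c : Fin n × Fin n => C (ta c.2 ^ 2) * (X c.1 : Ra n)) ∈ Sy n := by
  have hC : ∀ c : ℝ, (C c : Ra n) ∈ Sy n := fun c => (Sy n).algebraMap_mem c
  induction d using Nat.strong_induction_on with
  | _ d ih =>
    rcases d with _ | d
    · simp [hS, one_mem]
    · have h := hS_newton (fun c : Fin n × Fin n => C (ta c.2 ^ 2) * (X c.1 : Ra n)) d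
      have hr : ∑ p ∈ Finset.HasAntidiagonal.antidiagonal d, hS p.1 (fun c : Fin n × Fin n => C (ta c.2 ^ 2) * (X c.1 : Ra n)) *
          ∑ i : Fin n × Fin n, (C (ta i.2 ^ 2) * (X i.1 : Ra n)) ^ (p.2 + 1) ∈ Sy n := by
        refine sum_mem fun p hp => mul_mem (ih _ ?_) ?_
        · have := Finset.HasAntidiagonal.mem_antidiagonal.1 hp; omega
        · have : ∑ i : Fin n × Fin n, (C (ta i.2 ^ 2) * (X i.1 : Ra n)) ^ (p.2 + 1) =
              C (∑ i, (ta i ^ 2) ^ (p.2+1)) * psum (Fin n) ℝ (p.2 + 1) := by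
            rw [map_sum, psum, Finset.sum_mul_sum, Fintype.sum_prod_type, Finset.sum_comm]
            simp only [mul_pow, map_pow]
          rw [this]; exact mul_mem (hC _) (Algebra.subset_adjoin ⟨_, rfl⟩)
      have e : hS (d+1) (fun c : Fin n × Fin n => C (ta c.2 ^ 2) * (X c.1 : Ra n)) =
          C (1 / ((d:ℝ) + 1)) * (((d : Ra n) + 1) * hS (d+1) (fun c : Fin n × Fin n => C (ta c.2 ^ 2) * (X c.1 : Ra n))) := by
        rw [← mul_assoc, show ((d : Ra n) + 1) = C ((d:ℝ) + 1) by simp, ← C_mul, one_div, inv_mul_cancel₀ (by positivity)]; simp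
      rw [e, h]; exact mul_mem (hC _) hr

lemma Nf_Dm (x : Fin n → ℝ) : Nf (fun pq : Io n × Io n => 1/2 * Dm x pq.1 pq.2) 1 (fun j => - x j / 2) := by
  refine ⟨by simp, fun p q => ?_⟩
  have h : Dm x q p = - Dm x p q := congrFun (congrFun (Dm_t x) p) q
  have h2 : Dm (fun j => - x j / 2) p q = - Dm x p q / 2 := by
    simp only [Dm, Matrix.of_apply]; split_ifs <;> ring
  simp only [Matrix.one_mul, Matrix.transpose_one, Matrix.mul_one, h2, h]; ring

lemma eval_rho (x : Fin n → ℝ) (F : Rg n) : eval x (rho n F) = eval (fun pq : Io n × Io n => 1/2 * Dm x pq.1 pq.2) F := by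
  have : (eval x).comp (rho n : Rg n →+* Ra n) = eval (fun pq : Io n × Io n => 1/2 * Dm x pq.1 pq.2) := by
    apply MvPolynomial.ringHom_ext
    · intro r; simp
    · intro pq; simp [rho, Dm]; split_ifs <;> simp
      rcases pq with ⟨⟨i, r⟩, ⟨j, s⟩⟩
      fin_cases r <;> fin_cases s <;> simp
  exact congrFun (congrArg DFunLike.coe this) F

lemma det_Am_ne : (Am n).det ≠ 0 := by
  intro h
  have h1 := congrArg (rho n) h
  rw [map_zero, AlgHom.map_det] at h1
  have h2 : (rho n).mapMatrix (Am n) = Dm (fun j => (X j : Ra n)) := rho_Am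
  rw [h2] at h1
  have h3 : (Dm (fun j => (X j : Ra n)) ^ 2).det = 0 := by rw [Matrix.det_pow, h1]; simp
  rw [Dm_sq, Matrix.det_diagonal, Finset.prod_eq_zero_iff] at h3
  obtain ⟨p, _, hp⟩ := h3
  exact X_ne_zero p.1 (pow_eq_zero_iff (two_ne_zero) |>.1 (neg_eq_zero.1 hp))

lemma poly_ext (P Q : Rg n) (h : ∀ y k b, Nf y k b → eval y P = eval y Q) : P = Q := by
  have : (P - Q) * (Am n).det = 0 := by
    apply MvPolynomial.funext
    intro y
    rw [map_mul, map_zero]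
    by_cases hd : eval y (Am n).det = 0
    · rw [hd, mul_zero]
    · rw [RingHom.map_det] at hd
      have e : (eval y).mapMatrix (Am n) = Matrix.of fun p q => y (p, q) - y (q, p) := eval_Am y
      rw [e] at hd
      have hd2 : (Matrix.of fun p q : Io n => (y (q, p) - y (p, q)) / 2).det ≠ 0 := by
        have : (Matrix.of fun p q : Io n => (y (q, p) - y (p, q)) / 2) = (-1/2 : ℝ) • Matrix.of fun p q : Io n => y (p, q) - y (q, p) := by
          ext p q; simp; ring
        rw [this, Matrix.det_smul]
        exact mul_ne_zero (pow_ne_zero _ (by norm_num)) hd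
      obtain ⟨k, a, h1, _, _, h3⟩ := mat_nf _ (by ext p q; simp; ring) hd2
      rw [map_sub, h y k a ⟨h1, fun p q => by rw [← h3]; rfl⟩, sub_self, zero_mul]
  rcases mul_eq_zero.1 this with h | h
  · exact sub_eq_zero.1 h
  · exact absurd h det_Am_ne

lemma Qd_mem (ta : Fin n → ℝ) (d : ℕ) : Qd ta d ∈ Al n := by
  obtain ⟨G, hG, h⟩ := lift_sym _ (hS_mem ta d)
  rw [poly_ext (Qd ta d) G]; · exact hG
  intro y k b hn
  rw [eval_Qd_nf ta d y k b hn, h y k b hn, hS_map]; simp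

lemma rho_Qd (ta : Fin n → ℝ) (d : ℕ) : rho n (Qd ta d) = C ((1/4)^d) * hS d (fun c : Fin n × Fin n => C (ta c.2 ^ 2) * (X c.1 : Ra n) ^ 2) := by
  apply MvPolynomial.funext
  intro x
  rw [eval_rho, eval_Qd_nf ta d _ _ _ (Nf_Dm x), map_mul, hS_map, eval_C, ← hS_smul]
  congr 1; ext c; simp; ring

lemma Qd_homog (ta : Fin n → ℝ) (d : ℕ) : (Qd ta d).IsHomogeneous (2*d) := by
  refine IsHomogeneous.sum _ _ _ fun l hl => isHomogeneous_monomial _ ?_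
  rw [Finsupp.degree_eq_sum]; exact (Finset.mem_piAntidiag.1 hl).1

lemma mom1 (ta : Fin n → ℝ) (d : ℕ) (F : Rg n) (hF : F ∈ Al n) (hFd : F.IsHomogeneous (2*d)) :
    Ex (aeval (zz ta) F) * fis (Del n) (Del n) = fis (Del n * rho n F)
      (Del n * hS d (fun c : Fin n × Fin n => C (ta c.2 ^ 2) * (X c.1 : Ra n) ^ 2)) := by
  rw [← fis_Qd ta d F hFd, fis_rad (2*d) F _ hF (Qd_mem ta d) hFd (Qd_homog ta d), rho_Qd, mul_left_comm, ← smul_eq_C_mul,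
    fis_smul_right, ← mul_assoc, pow_mul, ← mul_pow]
  norm_num
end GinP

namespace GinP
open MvPolynomial ProbabilityTheory
variable {n : ℕ}

lemma esymm_mem (k : ℕ) : esymm (Fin n) ℝ k ∈ Sy n := by
  have hC : ∀ c : ℝ, (C c : Ra n) ∈ Sy n := fun c => (Sy n).algebraMap_mem c
  induction k using Nat.strong_induction_on with
  | _ k ih =>
    rcases k with _ | k
    · rw [esymm_zero]; exact one_mem _
    · have h := mul_esymm_eq_sum (Fin n) ℝ (k+1)
      have e : esymm (Fin n) ℝ (k+1) = C (1 / ((k:ℝ) + 1)) * (((k+1 : ℕ) : Ra n) * esymm (Fin n) ℝ (k+1)) := by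
        rw [← mul_assoc, show ((k+1 : ℕ) : Ra n) = C ((k:ℝ) + 1) by simp, ← C_mul, one_div, inv_mul_cancel₀ (by positivity)]; simp
      have hm : ∀ j, ((-1 : Ra n)^j) ∈ Sy n := fun j => pow_mem (neg_mem (one_mem _)) _
      rw [e, h]
      refine mul_mem (hC _) (mul_mem (hm _) (sum_mem fun a ha => mul_mem (mul_mem (hm _) (ih _ ?_)) (Algebra.subset_adjoin ⟨_, rfl⟩)))
      exact (Finset.mem_filter.1 ha).2

lemma sym_mem (p : Ra n) (hp : p.IsSymmetric) : p ∈ Sy n := by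
  obtain ⟨q, hq⟩ := esymmAlgHom_surjective (σ := Fin n) ℝ (n := n) (by simp) ⟨p, hp⟩
  have h := congrArg Subtype.val hq
  rw [esymmAlgHom_apply] at h
  have h2 : (aeval fun i : Fin n => esymm (Fin n) ℝ (i + 1)) q = p := h
  rw [← h2, aeval_def, eval₂_eq']
  refine sum_mem fun s _ => mul_mem ((Sy n).algebraMap_mem _) (prod_mem fun i _ => pow_mem (esymm_mem _) _)

lemma mem_sym (p : Ra n) (hp : p ∈ Sy n) : p.IsSymmetric := by
  have : Sy n ≤ symmetricSubalgebra (Fin n) ℝ := by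
    refine Algebra.adjoin_le ?_
    rintro _ ⟨k, rfl⟩
    exact psum_isSymmetric _ _ _
  exact this hp

lemma lift_sym4 (h : Ra n) (hh : h ∈ Sy n) : ∃ G ∈ Al n, ∀ y k b, Nf y k b → eval y G = eval (fun j => 4 * b j ^ 2) h := by
  have h2 : aeval (fun j => C 4 * X j) h ∈ Sy n := by
    apply sym_mem
    intro e
    have hs := mem_sym h hh e
    conv_rhs => rw [← hs]
    rw [← AlgHom.comp_apply, ← AlgHom.comp_apply]
    congr 1
    ext1 j; simp [aeval_rename]
  obtain ⟨G, hG, h3⟩ := lift_sym _ h2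
  refine ⟨G, hG, fun y k b hn => ?_⟩
  rw [h3 y k b hn]
  have : ((aeval (fun j => b j ^ 2) : Ra n →ₐ[ℝ] ℝ).comp (aeval (fun j => C 4 * X j))) = (aeval (fun j => 4 * b j ^ 2) : Ra n →ₐ[ℝ] ℝ) := by
    ext1 j; simp
  have h4 := congrFun (congrArg DFunLike.coe this) h
  simpa [MvPolynomial.aeval_eq_eval] using h4

lemma fis_rename (σ : Equiv.Perm (Fin n)) (F G : Ra n) : fis (rename σ F) (rename σ G) = fis F G := by
  classical
  rw [fis, fis, support_rename_of_injective σ.injective, Finset.sum_image]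
  · refine Finset.sum_congr rfl fun s _ => ?_
    rw [coeff_rename_mapDomain _ σ.injective, coeff_rename_mapDomain _ σ.injective]
    congr 2
    rw [sfac, sfac, ← Equiv.prod_comp σ]
    refine Finset.prod_congr rfl fun i _ => ?_
    rw [Finsupp.mapDomain_apply σ.injective]
  · intro a _ b _ h; exact Finsupp.mapDomain_injective σ.injective h

lemma rename_Del (σ : Equiv.Perm (Fin n)) : rename σ (Del n) = ((Equiv.Perm.sign σ : ℤ) : ℝ) • Del n := by
  rw [Del_alt, alt, AlgHom.map_det]
  have : (rename σ).mapMatrix (Matrix.of fun i j : Fin n => (X i : Ra n) ^ (2 * (j:ℕ))) =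
      (Matrix.of fun i j : Fin n => (X i : Ra n) ^ (2 * (j:ℕ))).submatrix σ id := by
    ext1 i j; simp
  rw [this, Matrix.det_permute, smul_eq_C_mul, map_intCast]

lemma rho_ex (F : Rg n) (hF : F ∈ Al n) : ∃ q ∈ Sy n, rho n F = expand 2 q := by
  induction hF using Algebra.adjoin_induction with
  | algebraMap r => exact ⟨C r, (Sy n).algebraMap_mem r, by rw [expand_C]; exact rho_C r⟩
  | add x y _ _ hx hy =>
    obtain ⟨G, hG, h1⟩ := hx; obtain ⟨H, hH, h2⟩ := hy
    exact ⟨G + H, add_mem hG hH, by rw [map_add, map_add, h1, h2]⟩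
  | mul x y _ _ hx hy =>
    obtain ⟨G, hG, h1⟩ := hx; obtain ⟨H, hH, h2⟩ := hy
    exact ⟨G * H, mul_mem hG hH, by rw [map_mul, map_mul, h1, h2]⟩
  | mem x hx =>
    obtain ⟨m, rfl⟩ := hx
    refine ⟨C (2*(-1)^m) * psum (Fin n) ℝ m, mul_mem ((Sy n).algebraMap_mem _) (Algebra.subset_adjoin ⟨_, rfl⟩), ?_⟩
    rw [rho_Pk', map_mul (expand 2), expand_C, psum, map_sum, qk]
    congr 1; refine Finset.sum_congr rfl fun j _ => ?_
    rw [map_pow, expand_X, pow_mul]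

def lamc (ta : Fin n → ℝ) (s : Fin n →₀ ℕ) : ℝ := ∏ j, ((s j).factorial * ta j ^ s j)

def Lam (ta : Fin n → ℝ) : Ra n →ₗ[ℝ] ℝ := (basisMonomials (Fin n) ℝ).constr ℝ (lamc ta)

lemma Lam_monomial (ta : Fin n → ℝ) (s : Fin n →₀ ℕ) (c : ℝ) : Lam ta (monomial s c) = c * lamc ta s := by
  have : (monomial s c : Ra n) = c • basisMonomials (Fin n) ℝ s := by simp [smul_monomial]
  rw [this, map_smul, Lam, Module.Basis.constr_basis, smul_eq_mul]

lemma fis_Lam (ta : Fin n → ℝ) (N : ℕ) (P : Ra n) (hP : P.IsHomogeneous (2*N)) (hev : ∀ s ∈ P.support, ∀ i, 2 ∣ s i) :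
    fis P (hS N (fun i => X i ^ 2 * C (ta i ^ 2))) = Lam ta P := by
  conv_rhs => rw [← P.support_sum_monomial_coeff]
  rw [fis, map_sum]
  refine Finset.sum_congr rfl fun s hs => ?_
  rw [Lam_monomial]; congr 1
  have hd : ∑ i, s i = 2*N := by
    have := hP (mem_support_iff.1 hs)
    rw [homog_deg, Finsupp.degree_eq_sum] at this; exact this
  choose l hl using hev s hs
  have hlN : ∑ i, l i = N := by
    have : ∑ i, s i = 2 * ∑ i, l i := by rw [Finset.mul_sum]; exact Finset.sum_congr rfl fun i _ => hl i
    omega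
  have hco : coeff s (hS N (fun i => (X i : Ra n) ^ 2 * C (ta i ^ 2))) = ∏ j, ta j ^ s j := by
    have e : ∀ l : Fin n → ℕ, ∏ i, ((X i : Ra n) ^ 2 * C (ta i ^ 2)) ^ l i = monomial (fsn fun i => 2 * l i) (∏ i, ta i ^ (2 * l i)) := by
      intro l; rw [monomial_fsn, map_prod, ← Finset.prod_mul_distrib]
      refine Finset.prod_congr rfl fun i _ => ?_
      rw [mul_pow, ← pow_mul, ← C_pow, ← pow_mul, mul_comm]
    rw [hS, coeff_sum, Finset.sum_eq_single l]
    · rw [e, coeff_monomial, if_pos]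
      · exact Finset.prod_congr rfl fun i _ => by rw [hl i]
      · ext i; exact (hl i).symm
    · intro l' _ hl'
      rw [e, coeff_monomial, if_neg]
      intro h; apply hl'; ext i
      have h1 : 2 * l' i = s i := by rw [← h]; rfl
      have := hl i; omega
    · intro h; exfalso; apply h; rw [Finset.mem_piAntidiag]; exact ⟨hlN, by simp⟩
  rw [hco, sfac, lamc, Finset.prod_mul_distrib, mul_comm]

lemma Del_ex : Del n = expand 2 (vdm fun j => (X j : Ra n)) := by
  rw [Del, ← AlgHom.coe_toRingHom, vdm_map]
  congr 1; ext1 j; simp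

lemma ntri_homog : (Del n).IsHomogeneous (2 * ntri n) := by
  rw [Del, vdm, ntri, Finset.card_eq_sum_ones, Finset.mul_sum]
  refine IsHomogeneous.prod _ _ _ fun p _ => ?_
  exact (isHomogeneous_X_pow _ _).sub (isHomogeneous_X_pow _ _)

lemma mom2 (ta : Fin n → ℝ) (d : ℕ) (F : Rg n) (hF : F ∈ Al n) (hFd : F.IsHomogeneous (2*d)) :
    (vdm fun j => ta j ^ 2) * fis (Del n) (Del n) * Ex (aeval (zz ta) F) = n.factorial * Lam ta (Del n * rho n F) := by
  obtain ⟨q, hq, hr⟩ := rho_ex F hF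
  have hP : (Del n * rho n F).IsHomogeneous (2 * (d + ntri n)) := by
    rw [show 2 * (d + ntri n) = 2 * ntri n + 2 * d by ring]
    exact ntri_homog.mul (rho_homog F _ hFd)
  have hev : ∀ s ∈ (Del n * rho n F).support, ∀ i, 2 ∣ s i := by
    intro s hs i
    by_contra h
    apply mem_support_iff.1 hs
    rw [Del_ex, hr, ← map_mul]
    exact coeff_expand_of_not_dvd _ h
  have hc := cauchy_id (fun j => (X j : Ra n)^2) (fun j => C (ta j ^ 2)) d
  have hv : (vdm fun j => (C (ta j ^ 2) : Ra n)) = C (vdm fun j => ta j ^ 2) := (vdm_map C _).symm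
  rw [hv] at hc
  have h1 := mom1 ta d F hF hFd
  have h2 : (vdm fun j => ta j ^ 2) * fis (Del n * rho n F)
      (Del n * hS d (fun c : Fin n × Fin n => C (ta c.2 ^ 2) * (X c.1 : Ra n) ^ 2)) = n.factorial * Lam ta (Del n * rho n F) := by
    rw [← fis_smul_right, smul_eq_C_mul]
    have e : C (vdm fun j => ta j ^ 2) * (Del n * hS d (fun c : Fin n × Fin n => C (ta c.2 ^ 2) * (X c.1 : Ra n) ^ 2)) =
        ∑ σ : Equiv.Perm (Fin n), (Equiv.Perm.sign σ : ℤ) • hS (d + ntri n) (fun i => (X (σ i) : Ra n)^2 * C (ta i ^ 2)) := by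
      rw [← hc, Del]
      simp only [mul_comm (C _) ((X _ : Ra n)^2)]; ring
    rw [e, fis_sum_right]
    have : ∀ σ : Equiv.Perm (Fin n), fis (Del n * rho n F) ((Equiv.Perm.sign σ : ℤ) • hS (d + ntri n) (fun i => (X (σ i) : Ra n)^2 * C (ta i ^ 2)))
        = Lam ta (Del n * rho n F) := by
      intro σ
      rw [← Int.cast_smul_eq_zsmul ℝ, fis_smul_right, ← fis_Lam ta _ _ hP hev]
      conv_rhs => rw [← fis_rename σ, map_mul, rename_Del, hr, rename_expand, mem_sym q hq, ← hr, smul_mul_assoc, fis_smul_left]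
      congr 2
      rw [← AlgHom.coe_toRingHom, hS_map]
      congr 1; ext1 i; simp
    simp only [this, Finset.sum_const, Finset.card_univ, Fintype.card_perm, Fintype.card_fin, nsmul_eq_mul]
  rw [← h2, ← h1]; ring

lemma Pk_homog (k : ℕ) : (Pk n k).IsHomogeneous (2 * k) := by
  have hA : ∀ p q, (Am n p q).IsHomogeneous 1 := by
    intro p q
    simp only [Am, gX, Matrix.sub_apply, Matrix.transpose_apply, Matrix.of_apply]
    exact (isHomogeneous_X _ _).sub (isHomogeneous_X _ _)
  have : ∀ m p q, ((Am n ^ m) p q).IsHomogeneous m := by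
    intro m
    induction m with
    | zero =>
      intro p q
      rw [pow_zero, Matrix.one_apply]; split_ifs
      · exact isHomogeneous_one _ _
      · exact isHomogeneous_zero _ _ _
    | succ m ih =>
      intro p q
      rw [pow_succ, Matrix.mul_apply]
      exact IsHomogeneous.sum _ _ _ fun r _ => (ih p r).mul (hA r q)
  exact IsHomogeneous.sum _ _ _ fun r _ => this _ _ _

theorem mom3 (ta : Fin n → ℝ) (F : Rg n) (hF : F ∈ Al n) :
    (vdm fun j => ta j ^ 2) * fis (Del n) (Del n) * Ex (aeval (zz ta) F) = n.factorial * Lam ta (Del n * rho n F) := by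
  have h : F ∈ Subalgebra.toSubmodule (Al n) := hF
  rw [Al, Algebra.adjoin_eq_span] at h
  induction h using Submodule.span_induction with
  | zero => simp
  | add x y hx hy h1 h2 =>
    have hx' : x ∈ Al n := by
      have : x ∈ Subalgebra.toSubmodule (Al n) := by rw [Al, Algebra.adjoin_eq_span]; exact hx
      exact this
    have hy' : y ∈ Al n := by
      have : y ∈ Subalgebra.toSubmodule (Al n) := by rw [Al, Algebra.adjoin_eq_span]; exact hy
      exact this
    rw [map_add, map_add, mul_add, h1 hx', h2 hy', map_add, mul_add, map_add, mul_add]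
  | smul c x hx h1 =>
    have hx' : x ∈ Al n := by
      have : x ∈ Subalgebra.toSubmodule (Al n) := by rw [Al, Algebra.adjoin_eq_span]; exact hx
      exact this
    rw [map_smul, map_smul, map_smul, mul_smul_comm, mul_smul_comm, map_smul, smul_eq_mul, smul_eq_mul, h1 hx']; ring
  | mem x hx =>
    have : ∃ d, x.IsHomogeneous (2 * d) := by
      induction hx using Submonoid.closure_induction with
      | mem x hx => obtain ⟨m, rfl⟩ := hx; exact ⟨m, Pk_homog m⟩
      | one => exact ⟨0, isHomogeneous_one _ _⟩
      | mul x y hx hy h1 h2 =>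
        have hm : ∀ z ∈ Submonoid.closure (Set.range (Pk n)), z ∈ Al n := fun z hz => by
          have : z ∈ Subalgebra.toSubmodule (Al n) := by rw [Al, Algebra.adjoin_eq_span]; exact Submodule.subset_span hz
          exact this
        obtain ⟨a, ha⟩ := h1 (hm _ hx); obtain ⟨b, hb⟩ := h2 (hm _ hy)
        exact ⟨a + b, by rw [mul_add]; exact ha.mul hb⟩
    obtain ⟨d, hd⟩ := this
    exact mom2 ta d x hF hd
end GinP

namespace GinP
open MvPolynomial ProbabilityTheory
variable {n : ℕ}

def mm (n : ℕ) : Measure (Fin n → ℝ) := (volume : Measure (Fin n → ℝ)).restrict {a | ∀ j, 0 < a j}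

lemma mm_eq : mm n = Measure.pi (fun _ : Fin n => (volume : Measure ℝ).restrict (Set.Ioi 0)) := by
  rw [mm, ← Measure.restrict_pi_pi, volume_pi]
  congr 1; ext a; simp

lemma pos_meas : MeasurableSet {a : Fin n → ℝ | ∀ j, 0 < a j} := by
  have : {a : Fin n → ℝ | ∀ j, 0 < a j} = ⋂ j, {a | 0 < a j} := by ext; simp
  rw [this]; exact MeasurableSet.iInter fun j => measurableSet_lt measurable_const (measurable_pi_apply j)

lemma mm_pos : ∀ᵐ a ∂(mm n), ∀ j, 0 < a j := ae_restrict_mem pos_meas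

lemma int1 (t r : ℝ) (ht : 0 < t) (hr : -1 < r) : Integrable (fun x : ℝ => x ^ r * Real.exp (-x / t)) (volume.restrict (Set.Ioi 0)) ∧
    ∫ x in Set.Ioi (0:ℝ), x ^ r * Real.exp (-x / t) = Real.Gamma (r + 1) * t ^ (r + 1) := by
  constructor
  · have := integrableOn_rpow_mul_exp_neg_mul_rpow (p := 1) (s := r) (b := 1/t) hr one_pos (by positivity)
    refine this.congr (ae_of_all _ fun x => ?_)
    simp only [Real.rpow_one]; congr 2; ring
  · have := Real.integral_rpow_mul_exp_neg_mul_Ioi (a := r + 1) (r := 1/t) (by linarith) (by positivity)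
    rw [one_div_one_div, mul_comm, add_sub_cancel_right] at this
    rw [← this]; congr 1; ext x; congr 2; ring

lemma intn (t r : Fin n → ℝ) (ht : ∀ j, 0 < t j) (hr : ∀ j, -1 < r j) :
    Integrable (fun a : Fin n → ℝ => ∏ j, (a j ^ r j * Real.exp (-(a j) / t j))) (mm n) ∧
    ∫ a, ∏ j, (a j ^ r j * Real.exp (-(a j) / t j)) ∂(mm n) = ∏ j, Real.Gamma (r j + 1) * t j ^ (r j + 1) := by
  rw [mm_eq]
  constructor
  · exact Integrable.fintype_prod (f := fun j x => x ^ r j * Real.exp (-x / t j)) fun j => (int1 _ _ (ht j) (hr j)).1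
  · rw [integral_fintype_prod_eq_prod (fun j x => x ^ r j * Real.exp (-x / t j))]
    exact Finset.prod_congr rfl fun j _ => (int1 _ _ (ht j) (hr j)).2

def lamr (r : ℝ) (t : Fin n → ℝ) : Ra n →ₗ[ℝ] ℝ :=
  (basisMonomials (Fin n) ℝ).constr ℝ (fun s => ∏ j, Real.Gamma (r + s j + 1) * t j ^ (r + s j + 1))

lemma lamr_monomial (r : ℝ) (t : Fin n → ℝ) (s : Fin n →₀ ℕ) (c : ℝ) :
    lamr r t (monomial s c) = c * ∏ j, Real.Gamma (r + s j + 1) * t j ^ (r + s j + 1) := by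
  have : (monomial s c : Ra n) = c • basisMonomials (Fin n) ℝ s := by simp [smul_monomial]
  rw [this, map_smul, lamr, Module.Basis.constr_basis, smul_eq_mul]

lemma poly_int (t : Fin n → ℝ) (r : ℝ) (ht : ∀ j, 0 < t j) (hr : -1 < r) (P : Ra n) :
    Integrable (fun a : Fin n → ℝ => (∏ j, a j ^ r) * eval a P * ∏ j, Real.exp (-(a j) / t j)) (mm n) ∧
    ∫ a, (∏ j, a j ^ r) * eval a P * ∏ j, Real.exp (-(a j) / t j) ∂(mm n) = lamr r t P := by
  induction P using MvPolynomial.induction_on' with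
  | add p q hp hq =>
    have : (fun a : Fin n → ℝ => (∏ j, a j ^ r) * eval a (p + q) * ∏ j, Real.exp (-(a j) / t j)) =
      fun a => (∏ j, a j ^ r) * eval a p * (∏ j, Real.exp (-(a j) / t j)) + (∏ j, a j ^ r) * eval a q * ∏ j, Real.exp (-(a j) / t j) := by
      ext a; rw [map_add]; ring
    rw [this]
    exact ⟨hp.1.add hq.1, by rw [integral_add hp.1 hq.1, hp.2, hq.2, map_add]⟩
  | monomial s c =>
    have h := intn t (fun j => r + s j) ht (fun j => by have : (0:ℝ) ≤ s j := Nat.cast_nonneg _; linarith)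
    have he : (fun a : Fin n → ℝ => c * ∏ j, (a j ^ (r + s j) * Real.exp (-(a j) / t j))) =ᵐ[mm n]
        (fun a : Fin n → ℝ => (∏ j, a j ^ r) * eval a (monomial s c) * ∏ j, Real.exp (-(a j) / t j)) := by
      filter_upwards [mm_pos] with a ha
      rw [eval_monomial, Finsupp.prod_fintype _ _ (by simp)]
      simp_rw [Real.rpow_add_natCast (ha _).ne', Finset.prod_mul_distrib]; ring
    refine ⟨(h.1.const_mul c).congr he, ?_⟩
    rw [← integral_congr_ae he, integral_const_mul, h.2, lamr_monomial]

lemma eval_Del (a : Fin n → ℝ) : eval a (Del n) = vdm (fun j => a j ^ 2) := by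
  rw [Del, vdm_map]; simp

lemma lamr_Del (r : ℝ) (t : Fin n → ℝ) (ht : ∀ j, 0 < t j) :
    lamr r t (Del n) = (∏ l ∈ Finset.range n, Real.Gamma (r + 2 * l + 1)) * (∏ j, t j ^ (r + 1)) * vdm (fun j => t j ^ 2) := by
  rw [← eval_Del, Del_alt, alt_eq, map_sum, map_sum, Finset.mul_sum]
  refine Finset.sum_congr rfl fun σ _ => ?_
  rw [map_zsmul, map_zsmul, lamr_monomial, eval_monomial, Finsupp.prod_fintype _ _ (by simp), mul_smul_comm]
  congr 1
  simp only [Finsupp.equivFunOnFinite_symm_apply_apply, one_mul, Finset.prod_mul_distrib]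
  rw [← Fin.prod_univ_eq_prod_range (fun l : ℕ => Real.Gamma (r + 2 * l + 1)), mul_assoc, ← Finset.prod_mul_distrib,
    ← Equiv.prod_comp σ.symm (fun i : Fin n => Real.Gamma (r + 2 * (i:ℕ) + 1))]
  rw [← Finset.prod_mul_distrib, ← Finset.prod_mul_distrib]
  refine Finset.prod_congr rfl fun i _ => ?_
  rw [← Real.rpow_add_natCast (ht i).ne']; push_cast; congr 2; ring

lemma lamr_zero (t : Fin n → ℝ) (P : Ra n) : lamr 0 t P = (∏ j, t j) * Lam t P := by
  induction P using MvPolynomial.induction_on' with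
  | add p q hp hq => rw [map_add, map_add, hp, hq, mul_add]
  | monomial s c =>
    rw [lamr_monomial, Lam_monomial, lamc, mul_left_comm, ← Finset.prod_mul_distrib]
    congr 1
    refine Finset.prod_congr rfl fun j _ => ?_
    rw [zero_add, Real.Gamma_nat_eq_factorial, ← Nat.cast_succ, Real.rpow_natCast, pow_succ]; ring

def ee (t a : Fin n → ℝ) : ℝ := ∏ j, Real.exp (-(a j) / t j)

/-- the shifted scale -/
lemma exists_eps (t : Fin n → ℝ) (ht : ∀ j, 0 < t j) : ∃ ε > 0, ∃ t' : Fin n → ℝ, (∀ j, 0 < t' j) ∧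
    ∀ a : Fin n → ℝ, (∀ j, 0 < a j) → Real.exp (ε * ∑ j, |a j|) * ee t a = ee t' a := by
  have hs : 0 < 1 + ∑ j, t j := by have := Finset.sum_nonneg (s := Finset.univ) (f := t) fun j _ => (ht j).le; linarith
  have hε : ∀ j, 0 < 1 / t j - 1 / (1 + ∑ j, t j) := by
    intro j
    have : t j < 1 + ∑ j, t j := by
      have := Finset.single_le_sum (f := t) (fun j _ => (ht j).le) (Finset.mem_univ j); linarith
    have := one_div_lt_one_div_of_lt (ht j) this
    linarith
  refine ⟨1 / (1 + ∑ j, t j), by positivity, fun j => 1 / (1 / t j - 1 / (1 + ∑ j, t j)), fun j => by have := hε j; positivity, fun a ha => ?_⟩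
  rw [ee, ee, ← Real.exp_sum, ← Real.exp_sum, ← Real.exp_add, Finset.mul_sum, ← Finset.sum_add_distrib]
  congr 1; refine Finset.sum_congr rfl fun j _ => ?_
  rw [abs_of_pos (ha j), div_div_eq_mul_div]; ring
end GinP

namespace GinP
open MvPolynomial ProbabilityTheory
variable {n : ℕ}

lemma pow_le_exp (ε x : ℝ) (hε : 0 < ε) (m : ℕ) : |x| ^ m ≤ m.factorial / ε ^ m * Real.exp (ε * |x|) := by
  have h := Real.pow_div_factorial_le_exp (ε * |x|) (by positivity) m
  rw [mul_pow, div_le_iff₀ (by positivity)] at h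
  rw [div_mul_eq_mul_div, le_div_iff₀ (by positivity)]; linarith

lemma mono_int (μ : Measure (Fin n → ℝ)) (ε : ℝ) (hε : 0 < ε)
    (hμ : Integrable (fun a : Fin n → ℝ => Real.exp (ε * ∑ j, |a j|)) μ) (m : Fin n → ℕ) :
    Integrable (fun a : Fin n → ℝ => ∏ j, a j ^ m j) μ := by
  refine (hμ.const_mul (∏ j, ((m j).factorial / ε ^ m j : ℝ))).mono' ?_ (ae_of_all _ fun a => ?_)
  · exact (by fun_prop : Measurable fun a : Fin n → ℝ => ∏ j, a j ^ m j).aestronglyMeasurable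
  · rw [Finset.mul_sum, Real.exp_sum, ← Finset.prod_mul_distrib, Real.norm_eq_abs, Finset.abs_prod]
    refine Finset.prod_le_prod (fun j _ => abs_nonneg _) fun j _ => ?_
    rw [abs_pow]; exact pow_le_exp ε _ hε _

lemma expset (μ : Measure (Fin n → ℝ)) (ε : ℝ) (hε : 0 < ε)
    (hμ : Integrable (fun a : Fin n → ℝ => Real.exp (ε * ∑ j, |a j|)) μ) (t : Fin n → ℝ) :
    0 ∈ interior (integrableExpSet (fun a : Fin n → ℝ => ∑ j, t j * a j) μ) := by
  set T := 1 + ∑ j, |t j| with hT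
  have hT0 : 0 < T := by have := Finset.sum_nonneg (s := Finset.univ) (f := fun j => |t j|) fun j _ => abs_nonneg _; linarith
  refine mem_interior.2 ⟨Set.Ioo (-(ε / T)) (ε / T), ?_, isOpen_Ioo, ⟨neg_lt_zero.2 (div_pos hε hT0), div_pos hε hT0⟩⟩
  intro v hv
  refine hμ.mono' ?_ (ae_of_all _ fun a => ?_)
  · exact (by fun_prop : Measurable fun a : Fin n → ℝ => Real.exp (v * ∑ j, t j * a j)).aestronglyMeasurable
  · rw [Real.norm_eq_abs, Real.abs_exp]
    apply Real.exp_le_exp.2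
    have hv' : |v| ≤ ε / T := abs_le.2 ⟨hv.1.le, hv.2.le⟩
    have h1 : |∑ j, t j * a j| ≤ T * ∑ j, |a j| := by
      refine (Finset.abs_sum_le_sum_abs _ _).trans ?_
      rw [Finset.mul_sum]
      refine Finset.sum_le_sum fun j _ => ?_
      rw [abs_mul]
      refine mul_le_mul_of_nonneg_right ?_ (abs_nonneg _)
      have := Finset.single_le_sum (f := fun j => |t j|) (fun j _ => abs_nonneg _) (Finset.mem_univ j)
      linarith
    calc v * ∑ j, t j * a j ≤ |v| * |∑ j, t j * a j| := by rw [← abs_mul]; exact le_abs_self _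
      _ ≤ (ε / T) * (T * ∑ j, |a j|) := mul_le_mul hv' h1 (abs_nonneg _) (by positivity)
      _ = ε * ∑ j, |a j| := by field_simp

lemma lin_mom (μ : Measure (Fin n → ℝ)) (ε : ℝ) (hε : 0 < ε)
    (hμ : Integrable (fun a : Fin n → ℝ => Real.exp (ε * ∑ j, |a j|)) μ) (t : Fin n → ℝ) (m : ℕ) :
    ∫ a, (∑ j, t j * a j) ^ m ∂μ = ∑ l ∈ Finset.piAntidiag (Finset.univ : Finset (Fin n)) m,
      ((Nat.multinomial Finset.univ l : ℝ) * ∏ j, t j ^ l j) * ∫ a, ∏ j, a j ^ l j ∂μ := by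
  have : ∀ a : Fin n → ℝ, (∑ j, t j * a j) ^ m = ∑ l ∈ Finset.piAntidiag (Finset.univ : Finset (Fin n)) m,
      ((Nat.multinomial Finset.univ l : ℝ) * ∏ j, t j ^ l j) * ∏ j, a j ^ l j := by
    intro a; rw [Finset.sum_pow_eq_sum_piAntidiag]
    refine Finset.sum_congr rfl fun l _ => ?_
    simp_rw [mul_pow, Finset.prod_mul_distrib]; ring
  simp_rw [this]
  rw [integral_finsetSum _ fun l _ => (mono_int μ ε hε hμ l).const_mul _]
  simp_rw [integral_const_mul]

theorem determ (μ ν : Measure (Fin n → ℝ)) [IsFiniteMeasure μ] [IsFiniteMeasure ν] (ε : ℝ) (hε : 0 < ε)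
    (hμ : Integrable (fun a : Fin n → ℝ => Real.exp (ε * ∑ j, |a j|)) μ)
    (hν : Integrable (fun a : Fin n → ℝ => Real.exp (ε * ∑ j, |a j|)) ν)
    (hm : ∀ m : Fin n → ℕ, ∫ a, ∏ j, a j ^ m j ∂μ = ∫ a, ∏ j, a j ^ m j ∂ν) : μ = ν := by
  apply Measure.ext_of_charFunDual
  ext L
  set t : Fin n → ℝ := fun j => L (Pi.single j 1)
  have hL : ∀ a, L a = ∑ j, t j * a j := by
    intro a
    have : a = ∑ j, a j • (Pi.single j (1:ℝ) : Fin n → ℝ) := by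
      ext i; simp [Finset.sum_apply, Pi.single_apply]
    conv_lhs => rw [this]
    rw [map_sum]; refine Finset.sum_congr rfl fun j _ => by rw [map_smul, smul_eq_mul, mul_comm]
  set Xf := fun a : Fin n → ℝ => ∑ j, t j * a j with hX
  have hLX : (L : (Fin n → ℝ) → ℝ) = Xf := funext hL
  rw [charFunDual_eq_charFun_map_one, charFunDual_eq_charFun_map_one, hLX]
  have hXm : Measurable Xf := by fun_prop
  rw [← complexMGF_mul_I hXm.aemeasurable, ← complexMGF_mul_I hXm.aemeasurable]
  have h1 := expset μ ε hε hμ t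
  have h2 := expset ν ε hε hν t
  have e1 : mgf Xf μ =ᶠ[nhds 0] mgf Xf ν := by
    have f1 := hasFPowerSeriesAt_mgf h1
    have f2 := hasFPowerSeriesAt_mgf h2
    have : (FormalMultilinearSeries.ofScalars ℝ (fun n ↦ (μ[fun ω ↦ Xf ω ^ n * Real.exp (0 * Xf ω)] : ℝ) / n.factorial)) =
        (FormalMultilinearSeries.ofScalars ℝ (fun n ↦ (ν[fun ω ↦ Xf ω ^ n * Real.exp (0 * Xf ω)] : ℝ) / n.factorial)) := by
      congr 1; ext k
      simp only [zero_mul, Real.exp_zero, mul_one]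
      rw [lin_mom μ ε hε hμ, lin_mom ν ε hε hν]; simp_rw [hm]
    rw [← hX] at f1 f2
    rw [this] at f1
    obtain ⟨r1, g1⟩ := f1
    obtain ⟨r2, g2⟩ := f2
    have hr : 0 < min r1 r2 := lt_min g1.r_pos g2.r_pos
    have := (g1.mono hr (min_le_left _ _)).unique (g2.mono hr (min_le_right _ _))
    exact this.eventuallyEq_of_mem (Metric.eball_mem_nhds _ hr)
  set I0 := interior (integrableExpSet Xf μ) ∩ interior (integrableExpSet Xf ν) with hI0
  have hconv : Convex ℝ I0 := convex_integrableExpSet.interior.inter convex_integrableExpSet.interior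
  have a1 : AnalyticOnNhd ℂ (complexMGF Xf μ) {z | z.re ∈ I0} := fun z hz => analyticOnNhd_complexMGF z hz.1
  have a2 : AnalyticOnNhd ℂ (complexMGF Xf ν) {z | z.re ∈ I0} := fun z hz => analyticOnNhd_complexMGF z hz.2
  have key : Set.EqOn (complexMGF Xf μ) (complexMGF Xf ν) {z | z.re ∈ I0} := by
    refine AnalyticOnNhd.eqOn_of_preconnected_of_frequently_eq a1 a2
      (hconv.linear_preimage Complex.reLm).isPreconnected (z₀ := ((0:ℝ) : ℂ)) ⟨by simpa using h1, by simpa using h2⟩ ?_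
    have h_real : ∃ᶠ (x : ℝ) in nhdsWithin 0 {0}ᶜ, complexMGF Xf μ x = complexMGF Xf ν x := by
      apply Filter.Eventually.frequently
      filter_upwards [e1.filter_mono nhdsWithin_le_nhds] with x hx
      rw [complexMGF_ofReal, complexMGF_ofReal, hx]
    rw [Filter.frequently_iff_seq_forall] at h_real ⊢
    obtain ⟨xs, hx_tendsto, hx_eq⟩ := h_real
    refine ⟨fun n ↦ xs n, ?_, fun n ↦ ?_⟩
    · rw [tendsto_nhdsWithin_iff] at hx_tendsto ⊢
      constructor
      · rw [Filter.tendsto_ofReal_iff]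
        exact hx_tendsto.1
      · simpa using hx_tendsto.2
    · simp [hx_eq]
  apply key
  simp only [Set.mem_ofPred_eq]
  simpa using ⟨h1, h2⟩
end GinP

namespace GinP
open MvPolynomial ProbabilityTheory
variable {n : ℕ}

def Rb (σ : Equiv.Perm (Fin n)) (ε : Fin n → ℝ) : Matrix (Io n) (Io n) ℝ :=
  Matrix.of fun p q => if q = (σ p.1, p.2) then (if p.2 = 0 then 1 else ε p.1) else 0

lemma Rb_conj (σ : Equiv.Perm (Fin n)) (ε : Fin n → ℝ) (M : Matrix (Io n) (Io n) ℝ) (p q : Io n) :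
    (Rb σ ε * M * (Rb σ ε)ᵀ) p q = (if p.2 = 0 then 1 else ε p.1) * (if q.2 = 0 then 1 else ε q.1) * M (σ p.1, p.2) (σ q.1, q.2) := by
  simp only [Matrix.mul_apply, Rb, Matrix.transpose_apply, Matrix.of_apply, ite_mul, mul_ite, zero_mul, mul_zero,
    Finset.sum_ite_eq', Finset.sum_ite_eq, Finset.mem_univ, if_true]
  ring

lemma Rb_orth (σ : Equiv.Perm (Fin n)) (ε : Fin n → ℝ) (hε : ∀ j, ε j * ε j = 1) : Rb σ ε * (Rb σ ε)ᵀ = 1 := by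
  ext p q
  have := Rb_conj σ ε 1 p q
  rw [Matrix.mul_one] at this
  rw [this, Matrix.one_apply, Matrix.one_apply]
  rcases p with ⟨i, r⟩; rcases q with ⟨j, s⟩
  by_cases h : i = j ∧ r = s
  · obtain ⟨rfl, rfl⟩ := h; simp; split_ifs <;> simp [hε]
  · have h1 : ¬((σ i, r) = (σ j, s)) := by rw [Prod.mk.injEq, σ.injective.eq_iff]; exact h
    have h2 : ¬((i, r) = (j, s)) := by rw [Prod.mk.injEq]; exact h
    simp only [if_neg h1, if_neg h2, mul_zero]

lemma Rb_Dm (σ : Equiv.Perm (Fin n)) (ε a : Fin n → ℝ) : Rb σ ε * Dm a * (Rb σ ε)ᵀ = Dm (fun j => ε j * a (σ j)) := by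
  ext p q
  rw [Rb_conj]
  rcases p with ⟨i, r⟩; rcases q with ⟨j, s⟩
  simp only [Dm, Matrix.of_apply, σ.injective.eq_iff]
  by_cases h : i = j
  · subst h
    fin_cases r <;> fin_cases s <;> simp
  · simp [h]

def Co (n : ℕ) : Set (Fin n → ℝ) := {a | (∀ j, 0 ≤ a j) ∧ Monotone a}

def ec (a : Fin n → ℝ) (m : ℕ) : ℝ := ∏ p : Io n, ((m:ℝ)^2 + a p.1 ^ 2)

def cX (A : Matrix (Io n) (Io n) ℝ) (m : ℕ) : ℝ := (((m:ℝ)^2) • (1 : Matrix (Io n) (Io n) ℝ) - A * A).det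

lemma cX_nf (k : Matrix (Io n) (Io n) ℝ) (a : Fin n → ℝ) (h1 : kᵀ * k = 1) : cX (k * Dm a * kᵀ) = ec a := by
  have h2 := mul_eq_one_comm.1 h1
  ext m
  have e : ((m:ℝ)^2) • (1 : Matrix (Io n) (Io n) ℝ) - (k * Dm a * kᵀ) * (k * Dm a * kᵀ) = k * Matrix.diagonal (fun p : Io n => (m:ℝ)^2 + a p.1 ^ 2) * kᵀ := by
    rw [← pow_two, conj_pow _ _ h1, Dm_sq]
    have : Matrix.diagonal (fun p : Io n => (m:ℝ)^2 + a p.1 ^ 2) = ((m:ℝ)^2) • (1 : Matrix (Io n) (Io n) ℝ) - Matrix.diagonal (fun p : Io n => - a p.1 ^ 2) := by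
      rw [← Matrix.diagonal_one, ← Matrix.diagonal_smul, Matrix.diagonal_sub]; congr 1; ext p; simp
    rw [this, Matrix.mul_sub, Matrix.sub_mul, Matrix.mul_smul, Matrix.smul_mul, Matrix.mul_one, h2]
  rw [cX, e, Matrix.det_mul, Matrix.det_mul, mul_right_comm, ← Matrix.det_mul, h2, Matrix.det_one, one_mul, Matrix.det_diagonal, ec]

lemma ec_sq (a : Fin n → ℝ) (m : ℕ) : ec a m = (∏ j, ((m:ℝ)^2 + a j ^ 2))^2 := by
  rw [ec, Fintype.prod_prod_type, ← Finset.prod_pow]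
  exact Finset.prod_congr rfl fun j _ => by rw [Fin.prod_univ_two]; ring

lemma ec_inj : Set.InjOn (ec (n := n)) (Co n) := by
  intro a ha b hb h
  have h1 : ∀ m : ℕ, ∏ j, ((m:ℝ)^2 + a j ^ 2) = ∏ j, ((m:ℝ)^2 + b j ^ 2) := by
    intro m
    have := congrFun h m
    rw [ec_sq, ec_sq] at this
    exact (pow_left_inj₀ (Finset.prod_nonneg fun j _ => by positivity) (Finset.prod_nonneg fun j _ => by positivity) two_ne_zero).1 this
  have ev : ∀ (a : Fin n → ℝ) (x : ℝ), Polynomial.eval x (((Finset.univ : Finset (Fin n)).val.map (fun j => -(a j)^2)).map (fun r => Polynomial.X - Polynomial.C r)).prod = ∏ j, (x + a j ^ 2) := by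
    intro a x
    rw [Multiset.map_map]
    change Polynomial.eval x (∏ j, (Polynomial.X - Polynomial.C (-(a j)^2))) = _
    rw [Polynomial.eval_prod]; simp
  have hp : (((Finset.univ : Finset (Fin n)).val.map (fun j => -(a j)^2)).map (fun r => Polynomial.X - Polynomial.C r)).prod =
      (((Finset.univ : Finset (Fin n)).val.map (fun j => -(b j)^2)).map (fun r => Polynomial.X - Polynomial.C r)).prod := by
    apply Polynomial.eq_of_infinite_eval_eq
    refine Set.Infinite.mono (s := Set.range fun m : ℕ => (m:ℝ)^2) ?_ ?_
    · rintro _ ⟨m, rfl⟩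
      change Polynomial.eval _ _ = Polynomial.eval _ _
      rw [ev, ev, h1]
    · apply Set.infinite_range_of_injective
      intro x y hxy
      simp only at hxy
      have := (pow_left_inj₀ (Nat.cast_nonneg x) (Nat.cast_nonneg y) two_ne_zero).1 hxy
      exact_mod_cast this
  have hr := congrArg Polynomial.roots hp
  rw [Polynomial.roots_multiset_prod_X_sub_C, Polynomial.roots_multiset_prod_X_sub_C] at hr
  have hr2 := congrArg (Multiset.map (fun x : ℝ => -x)) hr
  rw [Multiset.map_map, Multiset.map_map, Fin.univ_val_map, Fin.univ_val_map, Multiset.coe_eq_coe] at hr2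
  have hmo : ∀ a ∈ Co n, Monotone ((fun x : ℝ => -x) ∘ fun j => -(a j)^2) := by
    intro a ha i j hij
    simp only [Function.comp, neg_neg]
    exact pow_le_pow_left₀ (ha.1 i) (ha.2 hij) 2
  have := List.ofFn_injective (hr2.eq_of_sortedLE (hmo a ha).sortedLE_ofFn (hmo b hb).sortedLE_ofFn)
  ext j
  have h3 := congrFun this j
  simp only [Function.comp, neg_neg] at h3
  exact (pow_left_inj₀ (ha.1 j) (hb.1 j) two_ne_zero).1 h3

lemma sel_exists (n : ℕ) : ∃ S : (ℕ → ℝ) → (Fin n → ℝ), Measurable S ∧ ∀ a ∈ Co n, S (ec a) = a := by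
  have hcl : IsClosed (Co n) := by
    have : Co n = (⋂ j, {a | 0 ≤ a j}) ∩ ⋂ i, ⋂ j, ⋂ (_ : i ≤ j), {a | a i ≤ a j} := by
      ext a; simp [Co, Monotone]
    rw [this]
    refine (isClosed_iInter fun j => isClosed_le continuous_const (continuous_apply j)).inter ?_
    exact isClosed_iInter fun i => isClosed_iInter fun j => isClosed_iInter fun _ => isClosed_le (continuous_apply i) (continuous_apply j)
  have hc : Continuous (ec (n := n)) := by
    refine continuous_pi fun m => ?_
    unfold ec; fun_prop
  have := ContinuousOn.measurableEmbedding hcl.measurableSet hc.continuousOn ec_inj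
  obtain ⟨S, hS, h⟩ := this.exists_measurable_extend (g := Subtype.val) measurable_subtype_coe (fun _ => ⟨0⟩)
  exact ⟨S, hS, fun a ha => congrFun h ⟨a, ha⟩⟩

def selS (n : ℕ) : (ℕ → ℝ) → (Fin n → ℝ) := (sel_exists n).choose
lemma selS_meas : Measurable (selS n) := (sel_exists n).choose_spec.1
lemma selS_ec (a : Fin n → ℝ) (ha : a ∈ Co n) : selS n (ec a) = a := (sel_exists n).choose_spec.2 a ha

lemma sorted_nf (A : Matrix (Io n) (Io n) ℝ) (hA : Aᵀ = -A) (hdet : A.det ≠ 0) :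
    ∃ (k : Matrix (Io n) (Io n) ℝ) (a : Fin n → ℝ), kᵀ * k = 1 ∧ k * kᵀ = 1 ∧ (∀ i, 0 < a i) ∧ a ∈ Co n ∧ A = k * Dm a * kᵀ := by
  obtain ⟨k, a, h1, h2, h3, h4⟩ := mat_nf A hA hdet
  set σ := Tuple.sort a
  set R := Rb σ (fun _ => 1)
  have hR : R * Rᵀ = 1 := Rb_orth _ _ (by simp)
  have hR' : Rᵀ * R = 1 := mul_eq_one_comm.1 hR
  have hD : R * Dm a * Rᵀ = Dm (a ∘ σ) := by rw [Rb_Dm]; simp only [one_mul]; rfl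
  refine ⟨k * Rᵀ, a ∘ σ, ?_, ?_, fun i => h3 _, ⟨fun i => (h3 _).le, Tuple.monotone_sort a⟩, ?_⟩
  · rw [Matrix.transpose_mul, Matrix.transpose_transpose, Matrix.mul_assoc, ← Matrix.mul_assoc kᵀ, h1, Matrix.one_mul, hR]
  · rw [Matrix.transpose_mul, Matrix.transpose_transpose, Matrix.mul_assoc, ← Matrix.mul_assoc Rᵀ, hR', Matrix.one_mul, h2]
  · rw [← hD, h4, Matrix.transpose_mul, Matrix.transpose_transpose]
    have : k * Rᵀ * (R * Dm a * Rᵀ) * (R * kᵀ) = k * (Rᵀ * R) * Dm a * (Rᵀ * R) * kᵀ := by simp only [Matrix.mul_assoc]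
    rw [this, hR']; simp

def gm (u : Io n × Io n → ℝ) : Matrix (Io n) (Io n) ℝ := Matrix.of fun p q => u (p, q)

def Xg (ta : Fin n → ℝ) (u : Io n × Io n → ℝ) : Matrix (Io n) (Io n) ℝ := gm u * Dm ta * (gm u)ᵀ

def sg (ta : Fin n → ℝ) (u : Io n × Io n → ℝ) : Fin n → ℝ := selS n (cX (Xg ta u))

lemma gm_cont : Continuous (gm (n := n)) := by
  refine continuous_pi fun p => continuous_pi fun q => ?_
  exact continuous_apply (p, q)

lemma sg_meas (ta : Fin n → ℝ) : Measurable (sg ta) := by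
  refine selS_meas.comp ?_
  refine Continuous.measurable ?_
  refine continuous_pi fun m => ?_
  unfold cX Xg
  have := gm_cont (n := n)
  fun_prop

lemma Xg_t (ta : Fin n → ℝ) (u : Io n × Io n → ℝ) : (Xg ta u)ᵀ = - Xg ta u := by
  rw [Xg, Matrix.transpose_mul, Matrix.transpose_mul, Matrix.transpose_transpose, Dm_t]; simp [Matrix.mul_assoc]

lemma Dm_det_sq (a : Fin n → ℝ) : (Dm a).det ^ 2 = (∏ j, a j ^ 2)^2 := by
  rw [← Matrix.det_pow, Dm_sq, Matrix.det_diagonal, Fintype.prod_prod_type, ← Finset.prod_pow]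
  exact Finset.prod_congr rfl fun j _ => by rw [Fin.prod_univ_two]; ring

lemma sg_spec (ta : Fin n → ℝ) (hta : ∀ j, 0 < ta j) (u : Io n × Io n → ℝ) (hu : (gm u).det ≠ 0) :
    ∃ k : Matrix (Io n) (Io n) ℝ, kᵀ * k = 1 ∧ k * kᵀ = 1 ∧ (∀ i, 0 < sg ta u i) ∧ Xg ta u = k * Dm (sg ta u) * kᵀ := by
  have hD : (Dm ta).det ≠ 0 := by
    intro h
    have := Dm_det_sq ta
    rw [h] at this
    have h2 : 0 < ∏ j, ta j ^ 2 := Finset.prod_pos fun j _ => by have := hta j; positivity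
    have : 0 < (∏ j, ta j ^ 2)^2 := by positivity
    linarith
  have hX : (Xg ta u).det ≠ 0 := by
    rw [Xg, Matrix.det_mul, Matrix.det_mul, Matrix.det_transpose]; exact mul_ne_zero (mul_ne_zero hu hD) hu
  obtain ⟨k, a, h1, h2, h3, h4, h5⟩ := sorted_nf _ (Xg_t ta u) hX
  have : sg ta u = a := by rw [sg, h5, cX_nf k a h1, selS_ec a h4]
  rw [this]; exact ⟨k, h1, h2, h3, h5⟩

lemma det_null : ∀ᵐ u : Io n × Io n → ℝ, (gm u).det ≠ 0 := by
  set v : Io n × Io n → ℝ := fun pq => if pq.1 = pq.2 then 1 else 0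
  have hg : ∀ u (t : ℝ), gm (u + t • v) = Matrix.scalar (Io n) t - (- gm u) := by
    intro u t; ext p q
    simp [gm, v, Matrix.diagonal_apply, Matrix.scalar_apply]
    split_ifs <;> ring
  set s : Set (ℝ × (Io n × Io n → ℝ)) := {x | (gm (x.2 + x.1 • v)).det = 0}
  have hcont : Continuous fun x : ℝ × (Io n × Io n → ℝ) => (gm (x.2 + x.1 • v)).det := by
    have := gm_cont (n := n)
    fun_prop
  have hs : MeasurableSet s := (isClosed_eq hcont continuous_const).measurableSet
  have h0 : ((volume : Measure ℝ).prod (volume : Measure (Io n × Io n → ℝ))) s = 0 := by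
    rw [← Measure.prod_swap, Measure.map_apply measurable_swap hs, Measure.measure_prod_null (measurable_swap hs)]
    refine ae_of_all _ fun u => ?_
    refine Set.Finite.measure_zero ?_ _
    refine Set.Finite.subset (Polynomial.finite_setOfPred_isRoot (p := (-gm u).charpoly) (Matrix.charpoly_monic _).ne_zero) ?_
    intro t ht
    have ht' : (gm (u + t • v)).det = 0 := ht
    change Polynomial.eval t _ = 0
    rw [Matrix.eval_charpoly, ← hg, ht']
  have h1 := Measure.measure_ae_null_of_prod_null h0
  obtain ⟨t, ht⟩ := h1.exists
  have h2 : volume ((fun u : Io n × Io n → ℝ => u + t • v) ⁻¹' {u | (gm u).det = 0}) = 0 := ht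
  rw [measure_preimage_add_right] at h2
  rw [ae_iff]; simpa using h2
end GinP

namespace GinP
open MvPolynomial ProbabilityTheory
variable {n : ℕ}

abbrev Bn (n : ℕ) := (Fin n → ℤˣ) × Equiv.Perm (Fin n)

def act (g : Bn n) (a : Fin n → ℝ) : Fin n → ℝ := fun j => ((g.1 j : ℤ) : ℝ) * a (g.2 j)

lemma act_meas (g : Bn n) : Measurable (act g) := by
  unfold act; fun_prop

lemma act_abs (g : Bn n) (a : Fin n → ℝ) : ∑ j, |act g a j| = ∑ j, |a j| := by
  have : ∀ j, |act g a j| = |a (g.2 j)| := by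
    intro j
    rw [act, abs_mul]
    rcases Int.units_eq_one_or (g.1 j) with h | h <;> simp [h]
  simp_rw [this]
  exact Equiv.sum_comp g.2 (fun j => |a j|)

def symM (κ : Measure (Fin n → ℝ)) : Measure (Fin n → ℝ) := ∑ g : Bn n, κ.map (act g)

instance (κ : Measure (Fin n → ℝ)) [IsFiniteMeasure κ] : IsFiniteMeasure (symM κ) := by
  unfold symM; infer_instance

lemma symM_int (κ : Measure (Fin n → ℝ)) (ε : ℝ)
    (hκ : Integrable (fun a : Fin n → ℝ => Real.exp (ε * ∑ j, |a j|)) κ) :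
    Integrable (fun a : Fin n → ℝ => Real.exp (ε * ∑ j, |a j|)) (symM κ) := by
  rw [symM, integrable_finsetSum_measure]
  intro g _
  rw [integrable_map_measure (by fun_prop : Measurable _).aestronglyMeasurable (act_meas g).aemeasurable]
  refine hκ.congr (ae_of_all _ fun a => ?_)
  simp only [Function.comp, act_abs]

lemma symM_inv (κ : Measure (Fin n → ℝ)) (s : Set (Fin n → ℝ)) (hs : MeasurableSet s) (h : ∀ g : Bn n, act g ⁻¹' s = s) :
    symM κ s = (Fintype.card (Bn n) : ENNReal) * κ s := by
  rw [symM, Measure.finsetSum_apply]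
  simp_rw [Measure.map_apply (act_meas _) hs, h]
  simp

lemma unit_sum (m : ℕ) : ∑ e : ℤˣ, (((e : ℤ) : ℝ)) ^ m = if Even m then 2 else 0 := by
  have : (Finset.univ : Finset ℤˣ) = {1, -1} := rfl
  rw [this, Finset.sum_insert (by decide), Finset.sum_singleton]
  split_ifs with h
  · simp [h.neg_one_pow]; norm_num
  · rw [Nat.not_even_iff_odd] at h
    simp [h.neg_one_pow]

lemma symM_mom (κ : Measure (Fin n → ℝ)) (ε : ℝ) (hε : 0 < ε)
    (hκ : Integrable (fun a : Fin n → ℝ => Real.exp (ε * ∑ j, |a j|)) κ) (m : Fin n → ℕ) :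
    ∫ a, ∏ j, a j ^ m j ∂(symM κ) = (∏ j, if Even (m j) then (2:ℝ) else 0) * ∫ a, ∑ σ : Equiv.Perm (Fin n), ∏ j, a (σ j) ^ m j ∂κ := by
  have h1 := mono_int _ ε hε (symM_int κ ε hκ) m
  rw [symM, integrable_finsetSum_measure] at h1
  rw [symM, integral_finsetSum_measure h1]
  have hi : ∀ σ : Equiv.Perm (Fin n), Integrable (fun a : Fin n → ℝ => ∏ j, a (σ j) ^ m j) κ := by
    intro σ
    have := mono_int κ ε hε hκ (fun j => m (σ.symm j))
    refine this.congr (ae_of_all _ fun a => ?_)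
    simp only
    rw [← Equiv.prod_comp σ]; simp
  have h2 : ∀ g : Bn n, ∫ a, ∏ j, a j ^ m j ∂(κ.map (act g)) = (∏ j, ((g.1 j : ℤ) : ℝ) ^ m j) * ∫ a, ∏ j, a (g.2 j) ^ m j ∂κ := by
    intro g
    rw [integral_map (act_meas g).aemeasurable (by fun_prop : Measurable _).aestronglyMeasurable, ← integral_const_mul]
    refine integral_congr_ae (ae_of_all _ fun a => ?_)
    simp only [act, mul_pow, Finset.prod_mul_distrib]
  simp_rw [h2]
  rw [Fintype.sum_prod_type, integral_finsetSum _ fun σ _ => hi σ]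
  simp_rw [← Finset.mul_sum]
  rw [← Finset.sum_mul]
  congr 1
  simp_rw [← unit_sum]
  rw [Finset.prod_univ_sum, Fintype.piFinset_univ]

theorem symM_eq (κ₁ κ₂ : Measure (Fin n → ℝ)) [IsFiniteMeasure κ₁] [IsFiniteMeasure κ₂] (ε : ℝ) (hε : 0 < ε)
    (h₁ : Integrable (fun a : Fin n → ℝ => Real.exp (ε * ∑ j, |a j|)) κ₁)
    (h₂ : Integrable (fun a : Fin n → ℝ => Real.exp (ε * ∑ j, |a j|)) κ₂)
    (hm : ∀ h ∈ Sy n, ∫ a, eval (fun j => a j ^ 2) h ∂κ₁ = ∫ a, eval (fun j => a j ^ 2) h ∂κ₂) : symM κ₁ = symM κ₂ := by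
  refine determ _ _ ε hε (symM_int _ ε h₁) (symM_int _ ε h₂) fun m => ?_
  rw [symM_mom _ ε hε h₁, symM_mom _ ε hε h₂]
  by_cases hev : ∀ j, Even (m j)
  · congr 1
    choose l hl using hev
    have hs : (∑ σ : Equiv.Perm (Fin n), ∏ j, (X (σ j) : Ra n) ^ l j) ∈ Sy n := by
      apply sym_mem
      intro e
      simp only [map_sum, map_prod, map_pow, rename_X]
      exact Fintype.sum_equiv (Equiv.mulLeft e) _ _ fun σ => by simp
    have := hm _ hs
    have e : ∀ a : Fin n → ℝ, eval (fun j => a j ^ 2) (∑ σ : Equiv.Perm (Fin n), ∏ j, (X (σ j) : Ra n) ^ l j) = ∑ σ : Equiv.Perm (Fin n), ∏ j, a (σ j) ^ m j := by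
      intro a
      simp only [map_sum, map_prod, map_pow, eval_X]
      refine Finset.sum_congr rfl fun σ _ => Finset.prod_congr rfl fun j _ => ?_
      rw [hl j, ← pow_mul, two_mul]
    simpa only [e] using this
  · push Not at hev
    obtain ⟨j, hj⟩ := hev
    rw [Finset.prod_eq_zero (Finset.mem_univ j) (if_neg hj), zero_mul, zero_mul]

theorem map_eq (κ₁ κ₂ : Measure (Fin n → ℝ)) [IsFiniteMeasure κ₁] [IsFiniteMeasure κ₂] (h : symM κ₁ = symM κ₂)
    (F : (Fin n → ℝ) → ℝ) (hF : Measurable F) (hi : ∀ g : Bn n, ∀ a, F (act g a) = F a) : κ₁.map F = κ₂.map F := by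
  ext s hs
  rw [Measure.map_apply hF hs, Measure.map_apply hF hs]
  have hinv : ∀ g : Bn n, act g ⁻¹' (F ⁻¹' s) = F ⁻¹' s := by
    intro g; ext a; simp [hi]
  have h1 := symM_inv κ₁ _ (hF hs) hinv
  have h2 := symM_inv κ₂ _ (hF hs) hinv
  rw [h, h2] at h1
  exact ((ENNReal.mul_right_inj (by exact_mod_cast Fintype.card_ne_zero) (ENNReal.natCast_ne_top _)).1 h1).symm
end GinP

namespace GinP
open MvPolynomial ProbabilityTheory
variable {n : ℕ}

section
variable {κ : Type*} [Fintype κ]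

def gd (u : κ → ℝ) : ℝ := ∏ i, gaussianPDFReal 0 1 (u i)

lemma gd_pos (u : κ → ℝ) : 0 < gd u := Finset.prod_pos fun _ _ => gaussianPDFReal_pos _ _ _ one_ne_zero

lemma gd_meas : Measurable (gd (κ := κ)) := by
  unfold gd
  exact Finset.measurable_prod _ fun i _ => (measurable_gaussianPDFReal 0 1).comp (measurable_pi_apply i)

lemma gam_dens : gam κ = (volume : Measure (κ → ℝ)).withDensity (fun u => ENNReal.ofReal (gd u)) := by
  refine Measure.pi_eq fun s hs => ?_
  rw [withDensity_apply _ (MeasurableSet.univ_pi hs), volume_pi, Measure.restrict_pi_pi, ← ofReal_integral_eq_lintegral_ofReal]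
  · unfold gd
    rw [integral_fintype_prod_eq_prod (fun i x => gaussianPDFReal 0 1 x),
      ENNReal.ofReal_prod_of_nonneg fun i _ => integral_nonneg fun x => gaussianPDFReal_nonneg 0 1 x]
    exact Finset.prod_congr rfl fun i _ => (gaussianReal_apply_eq_integral 0 one_ne_zero _).symm
  · exact Integrable.fintype_prod fun i => (integrable_gaussianPDFReal 0 1).restrict
  · exact ae_of_all _ fun u => (gd_pos u).le

lemma gam_integrable (f : (κ → ℝ) → ℝ) : Integrable f (gam κ) ↔ Integrable (fun u => f u * gd u) := by
  rw [gam_dens, integrable_withDensity_iff (gd_meas.ennreal_ofReal) (ae_of_all _ fun u => ENNReal.ofReal_lt_top)]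
  simp_rw [ENNReal.toReal_ofReal (gd_pos _).le]

lemma gam_integral (f : (κ → ℝ) → ℝ) : ∫ u, f u ∂(gam κ) = ∫ u, f u * gd u := by
  rw [gam_dens, integral_withDensity_eq_integral_toReal_smul (gd_meas.ennreal_ofReal) (ae_of_all _ fun u => ENNReal.ofReal_lt_top)]
  simp_rw [ENNReal.toReal_ofReal (gd_pos _).le, smul_eq_mul, mul_comm]

lemma gd_eq (u : κ → ℝ) : gd u = ((√(2 * Real.pi))⁻¹) ^ (Fintype.card κ) * Real.exp (-(∑ i, u i ^ 2) / 2) := by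
  unfold gd gaussianPDFReal
  rw [Finset.prod_mul_distrib, ← Real.exp_sum, Finset.prod_const, Finset.card_univ]
  simp [← Finset.sum_div, Finset.sum_neg_distrib]

lemma gam_exp : Integrable (fun u : κ → ℝ => Real.exp ((1/4) * ∑ i, u i ^ 2)) (gam κ) := by
  rw [gam_integrable]
  have h := integrable_exp_neg_mul_sq (b := 1/4) (by norm_num)
  have := (Integrable.fintype_prod (ι := κ) (μ := fun _ => volume) (f := fun _ x => Real.exp (-(1/4) * x^2)) fun i => h).const_mul (((√(2 * Real.pi))⁻¹) ^ (Fintype.card κ))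
  refine this.congr (ae_of_all _ fun u => ?_)
  simp only
  rw [gd_eq, ← Real.exp_sum, mul_left_comm, ← Real.exp_add, ← Finset.mul_sum]
  congr 2; ring

lemma gam_ac : gam κ ≪ volume := by rw [gam_dens]; exact withDensity_absolutelyContinuous _ _
end

lemma gam_det : ∀ᵐ u ∂(gam (Io n × Io n)), (gm u).det ≠ 0 := gam_ac.ae_le det_null

lemma hDm (h : Matrix (Io n) (Io n) ℝ) (a : Fin n → ℝ) (p q : Io n) :
    (h * Dm a * hᵀ) p q = ∑ i, a i * (h p (i,0) * h q (i,1) - h p (i,1) * h q (i,0)) := by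
  simp only [Matrix.mul_apply, Fintype.sum_prod_type, Dm, Matrix.of_apply, Fin.sum_univ_two, Matrix.transpose_apply, Matrix.cons_val', Matrix.cons_val_zero, Matrix.cons_val_one, Matrix.cons_val_fin_one, mul_ite, ite_mul, mul_zero, zero_mul, Finset.sum_ite_eq', Finset.sum_ite_eq, Finset.mem_univ, if_true, Finset.sum_add_distrib, add_zero, zero_add, ← Finset.sum_add_distrib]
  refine Finset.sum_congr rfl fun i _ => ?_
  simp
  ring

lemma tr_gm (u : Io n × Io n → ℝ) : (gm u * (gm u)ᵀ).trace = ∑ i, u i ^ 2 := by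
  rw [Fintype.sum_prod_type]
  simp [Matrix.trace, Matrix.mul_apply, gm, pow_two]

lemma sg_bound (ta : Fin n → ℝ) (hta : ∀ j, 0 < ta j) (u : Io n × Io n → ℝ) (hu : (gm u).det ≠ 0) :
    ∑ j, |sg ta u j| ≤ (∑ i, ta i) * ∑ i, u i ^ 2 := by
  obtain ⟨k, h1, h2, h3, h4⟩ := sg_spec ta hta u hu
  set h := kᵀ * gm u
  have hX : h * Dm ta * hᵀ = Dm (sg ta u) := by
    have : h * Dm ta * hᵀ = kᵀ * Xg ta u * k := by
      simp only [h, Xg, Matrix.transpose_mul, Matrix.transpose_transpose, Matrix.mul_assoc]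
    rw [this, h4]
    have : kᵀ * (k * Dm (sg ta u) * kᵀ) * k = (kᵀ * k) * Dm (sg ta u) * (kᵀ * k) := by simp only [Matrix.mul_assoc]
    rw [this, h1]; simp
  have htr : ∑ p, ∑ q, h p q ^ 2 = ∑ i, u i ^ 2 := by
    rw [← tr_gm]
    have e : (h * hᵀ).trace = (gm u * (gm u)ᵀ).trace := by
      have : h * hᵀ = kᵀ * (gm u * (gm u)ᵀ * k) := by
        simp only [h, Matrix.transpose_mul, Matrix.transpose_transpose, Matrix.mul_assoc]
      rw [this, Matrix.trace_mul_comm, Matrix.mul_assoc, h2, Matrix.mul_one]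
    rw [← e]
    simp [Matrix.trace, Matrix.mul_apply, pow_two]
  have hj : ∀ j, |sg ta u j| ≤ (∑ i, ta i) * ((∑ q, h (j,0) q ^ 2) + ∑ q, h (j,1) q ^ 2) := by
    intro j
    have e : sg ta u j = ∑ i, ta i * (h (j,0) (i,0) * h (j,1) (i,1) - h (j,0) (i,1) * h (j,1) (i,0)) := by
      rw [← hDm, hX]; simp [Dm]
    rw [e, Finset.sum_mul]
    refine (Finset.abs_sum_le_sum_abs _ _).trans (Finset.sum_le_sum fun i _ => ?_)
    rw [abs_mul, abs_of_pos (hta i)]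
    refine mul_le_mul_of_nonneg_left ?_ (hta i).le
    have b : ∀ p : Io n, h p (i,0) ^ 2 + h p (i,1)^2 ≤ ∑ q, h p q ^ 2 := by
      intro p
      rw [Fintype.sum_prod_type]
      refine le_trans ?_ (Finset.single_le_sum (f := fun i => ∑ y, h p (i, y)^2) (fun i _ => Finset.sum_nonneg fun _ _ => sq_nonneg _) (Finset.mem_univ i))
      simp [Fin.sum_univ_two]
    have b0 := b (j,0); have b1 := b (j,1)
    rw [abs_le]
    constructor
    · nlinarith [sq_nonneg (h (j,0) (i,0) + h (j,1) (i,1)), sq_nonneg (h (j,0) (i,1) - h (j,1) (i,0)), sq_nonneg (h (j,0) (i,0)), sq_nonneg (h (j,0) (i,1)), sq_nonneg (h (j,1) (i,0)), sq_nonneg (h (j,1) (i,1))]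
    · nlinarith [sq_nonneg (h (j,0) (i,0) - h (j,1) (i,1)), sq_nonneg (h (j,0) (i,1) + h (j,1) (i,0)), sq_nonneg (h (j,0) (i,0)), sq_nonneg (h (j,0) (i,1)), sq_nonneg (h (j,1) (i,0)), sq_nonneg (h (j,1) (i,1))]
  refine (Finset.sum_le_sum fun j _ => hj j).trans (le_of_eq ?_)
  rw [← Finset.mul_sum, ← htr, Fintype.sum_prod_type]
  congr 1
  refine Finset.sum_congr rfl fun j _ => ?_
  rw [Fin.sum_univ_two]

lemma sg_exp (ta : Fin n → ℝ) (hta : ∀ j, 0 < ta j) (ε : ℝ) (hε : 0 ≤ ε) (hε2 : ε * (∑ i, ta i) ≤ 1/4) :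
    Integrable (fun a : Fin n → ℝ => Real.exp (ε * ∑ j, |a j|)) ((gam (Io n × Io n)).map (sg ta)) := by
  have hm : Measurable (fun a : Fin n → ℝ => Real.exp (ε * ∑ j, |a j|)) := by fun_prop
  rw [integrable_map_measure hm.aestronglyMeasurable (sg_meas ta).aemeasurable]
  refine gam_exp.mono' (hm.comp (sg_meas ta)).aestronglyMeasurable ?_
  filter_upwards [gam_det] with u hu
  rw [Function.comp, Real.norm_eq_abs, Real.abs_exp, Real.exp_le_exp]
  calc ε * ∑ j, |sg ta u j| ≤ ε * ((∑ i, ta i) * ∑ i, u i ^ 2) := mul_le_mul_of_nonneg_left (sg_bound ta hta u hu) hε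
    _ = (ε * ∑ i, ta i) * ∑ i, u i ^ 2 := by ring
    _ ≤ _ := mul_le_mul_of_nonneg_right hε2 (Finset.sum_nonneg fun _ _ => sq_nonneg _)
end GinP

namespace GinP
open MvPolynomial ProbabilityTheory
variable {n : ℕ}

def cc (ta : Fin n → ℝ) : ℝ := (vdm fun j => ta j ^ 2) * fis (Del n) (Del n) / n.factorial * ∏ j, ta j

def ww (ta a : Fin n → ℝ) : ℝ := eval a (Del n) * ee ta a / cc ta

lemma vdm_ne (x : Fin n → ℝ) (hx : Function.Injective x) : vdm x ≠ 0 := by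
  unfold vdm
  refine Finset.prod_ne_zero_iff.2 fun p hp => ?_
  rw [Finset.mem_filter] at hp
  exact sub_ne_zero.2 fun h => hp.2.ne (hx h).symm

lemma Del_ne (ta : Fin n → ℝ) (hta : ∀ j, 0 < ta j) (hinj : Function.Injective ta) : vdm (fun j => ta j ^ 2) ≠ 0 := by
  refine vdm_ne _ fun i j h => hinj ?_
  exact (pow_left_inj₀ (hta i).le (hta j).le two_ne_zero).1 h

lemma cc_ne (ta : Fin n → ℝ) (hta : ∀ j, 0 < ta j) (hinj : Function.Injective ta) : cc ta ≠ 0 := by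
  have h1 := Del_ne ta hta hinj
  have h2 : fis (Del n) (Del n) ≠ 0 := by
    refine (fis_self_pos _ ?_).ne'
    intro h
    rw [← eval_Del, h] at h1; simp at h1
  have h3 : (n.factorial : ℝ) ≠ 0 := by exact_mod_cast n.factorial_ne_zero
  have h4 : ∏ j, ta j ≠ 0 := Finset.prod_ne_zero_iff.2 fun j _ => (hta j).ne'
  exact mul_ne_zero (div_ne_zero (mul_ne_zero h1 h2) h3) h4

lemma poly_int0 (ta : Fin n → ℝ) (hta : ∀ j, 0 < ta j) (P : Ra n) :
    Integrable (fun a => eval a P * ee ta a) (mm n) ∧ ∫ a, eval a P * ee ta a ∂(mm n) = (∏ j, ta j) * Lam ta P := by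
  have := poly_int ta 0 hta (by norm_num) P
  simp only [Real.rpow_zero, Finset.prod_const_one, one_mul, lamr_zero] at this
  exact this

lemma Nf_u (ta : Fin n → ℝ) (u : Io n × Io n → ℝ) (k : Matrix (Io n) (Io n) ℝ) (b : Fin n → ℝ) (h1 : kᵀ * k = 1) (h2 : Xg ta u = k * Dm b * kᵀ) :
    Nf (fun pq => eval u (zz ta pq)) k (fun j => - b j / 2) := by
  refine ⟨h1, fun p q => ?_⟩
  have e : ∀ pq : Io n × Io n, eval u (zz ta pq) = 1/2 * Xg ta u pq.1 pq.2 := by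
    intro pq
    simp only [zz, Xg, map_mul, eval_C, Matrix.mul_apply, map_sum, gX, gm, Matrix.of_apply, Matrix.transpose_apply, Matrix.map_apply, eval_X]
  have hD : Dm (fun j => - b j / 2) = (-(1/2 : ℝ)) • Dm b := by
    ext p q
    simp only [Dm, Matrix.of_apply, Matrix.smul_apply, smul_eq_mul]
    split_ifs <;> ring
  simp only [e]
  rw [hD, Matrix.mul_smul, Matrix.smul_mul, ← h2]
  have ht := congrFun (congrFun (Xg_t ta u) p) q
  simp only [Matrix.transpose_apply, Matrix.neg_apply] at ht
  simp only [Matrix.smul_apply, smul_eq_mul, ht]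
  ring

lemma mom_sym (ta : Fin n → ℝ) (hta : ∀ j, 0 < ta j) (hinj : Function.Injective ta) (h : Ra n) (hh : h ∈ Sy n) :
    Integrable (fun u => eval (fun j => sg ta u j ^ 2) h) (gam (Io n × Io n)) ∧
    Integrable (fun a : Fin n → ℝ => eval (fun j => a j ^ 2) h * ww ta a) (mm n) ∧
    ∫ u, eval (fun j => sg ta u j ^ 2) h ∂(gam (Io n × Io n)) = ∫ a, eval (fun j => a j ^ 2) h * ww ta a ∂(mm n) := by
  obtain ⟨G, hG, hGe⟩ := lift_sym4 h hh
  have e1 : ∀ᵐ u ∂(gam (Io n × Io n)), eval u (aeval (zz ta) G) = eval (fun j => sg ta u j ^ 2) h := by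
    filter_upwards [gam_det] with u hu
    obtain ⟨k, h1, h2, h3, h4⟩ := sg_spec ta hta u hu
    have := hGe _ _ _ (Nf_u ta u k _ h1 h4)
    have e : (eval u) (aeval (zz ta) G) = eval (fun pq => eval u (zz ta pq)) G := by
      have : ((eval u).comp (aeval (zz ta) : Rg n →ₐ[ℝ] Rg n).toRingHom) = eval (fun pq => eval u (zz ta pq)) := by
        apply MvPolynomial.ringHom_ext
        · intro r; simp
        · intro i; simp
      exact RingHom.congr_fun this G
    rw [e, this]
    congr 2; ext j; ring
  have e2 : ∀ a : Fin n → ℝ, eval a (rho n G) = eval (fun j => a j ^ 2) h := by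
    intro a
    rw [eval_rho, hGe _ _ _ (Nf_Dm a)]
    congr 2; ext j; ring
  have e3 : ∀ a : Fin n → ℝ, eval (fun j => a j ^ 2) h * ww ta a = eval a (Del n * rho n G) * ee ta a / cc ta := by
    intro a; rw [ww, map_mul, e2]; ring
  obtain ⟨i1, i2⟩ := poly_int0 ta hta (Del n * rho n G)
  have hc := cc_ne ta hta hinj
  refine ⟨(integrable_poly _).congr e1, ?_, ?_⟩
  · simp_rw [e3]; exact i1.div_const _
  · simp_rw [e3]
    rw [integral_div, i2, ← integral_congr_ae e1, ← Ex_apply, eq_div_iff hc]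
    have := mom3 ta G hG
    have h3 : (n.factorial : ℝ) ≠ 0 := by exact_mod_cast n.factorial_ne_zero
    rw [cc]
    field_simp
    linear_combination (∏ j, ta j) * this

def rp (n : ℕ) (w : (Fin n → ℝ) → ℝ) : Measure (Fin n → ℝ) := (mm n).withDensity (fun a => ENNReal.ofReal (w a))

lemma rp_int (w : (Fin n → ℝ) → ℝ) (hw : Measurable w) (f : (Fin n → ℝ) → ℝ) (hf : Measurable f) (hi : Integrable (fun a => f a * w a) (mm n)) :
    Integrable f (rp n w) := by
  rw [rp, integrable_withDensity_iff hw.ennreal_ofReal (ae_of_all _ fun u => ENNReal.ofReal_lt_top)]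
  refine hi.mono (hf.mul hw.ennreal_ofReal.ennreal_toReal).aestronglyMeasurable (ae_of_all _ fun a => ?_)
  rw [norm_mul, norm_mul]
  refine mul_le_mul_of_nonneg_left ?_ (norm_nonneg _)
  rw [ENNReal.toReal_ofReal', Real.norm_eq_abs, Real.norm_eq_abs, abs_of_nonneg (le_max_right _ _)]
  exact max_le (le_abs_self _) (abs_nonneg _)

lemma rp_diff (w : (Fin n → ℝ) → ℝ) (hw : Measurable w) (f : (Fin n → ℝ) → ℝ) (hf : Measurable f) (hi : Integrable (fun a => f a * w a) (mm n)) :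
    ∫ a, f a ∂(rp n w) = ∫ a, f a ∂(rp n (fun a => - w a)) + ∫ a, f a * w a ∂(mm n) := by
  have hw' : Measurable fun a => - w a := hw.neg
  have h1 := rp_int w hw f hf hi
  have h2 := rp_int (fun a => - w a) hw' f hf (by simpa using hi.neg)
  rw [rp, integrable_withDensity_iff hw.ennreal_ofReal (ae_of_all _ fun u => ENNReal.ofReal_lt_top)] at h1
  rw [rp, integrable_withDensity_iff hw'.ennreal_ofReal (ae_of_all _ fun u => ENNReal.ofReal_lt_top)] at h2
  rw [rp, rp, integral_withDensity_eq_integral_toReal_smul hw.ennreal_ofReal (ae_of_all _ fun u => ENNReal.ofReal_lt_top),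
    integral_withDensity_eq_integral_toReal_smul hw'.ennreal_ofReal (ae_of_all _ fun u => ENNReal.ofReal_lt_top)]
  simp_rw [smul_eq_mul, mul_comm _ (f _)]
  rw [← integral_add h2 hi]
  refine integral_congr_ae (ae_of_all _ fun a => ?_)
  simp only [ENNReal.toReal_ofReal']
  rcases le_total (w a) 0 with h | h
  · rw [max_eq_right h, max_eq_left (by linarith)]; ring
  · rw [max_eq_left h, max_eq_right (by linarith)]; ring

lemma rp_fin (w : (Fin n → ℝ) → ℝ) (hw : Measurable w) (hi : Integrable w (mm n)) : IsFiniteMeasure (rp n w) := by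
  have := rp_int w hw (fun _ => 1) measurable_const (by simpa using hi)
  rw [integrable_const_iff] at this
  simpa using this

lemma ww_meas (ta : Fin n → ℝ) : Measurable (ww ta) := by
  have h1 : Continuous fun a : Fin n → ℝ => eval a (Del n) := MvPolynomial.continuous_eval _
  have h2 : Continuous fun a : Fin n → ℝ => ee ta a := by unfold ee; fun_prop
  exact ((h1.mul h2).div_const _).measurable

theorem transfer (ta : Fin n → ℝ) (hta : ∀ j, 0 < ta j) (hinj : Function.Injective ta)
    (F : (Fin n → ℝ) → ℝ) (hF : Measurable F) (hi : ∀ g : Bn n, ∀ a, F (act g a) = F a)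
    (hFw : Integrable (fun a => F a * ww ta a) (mm n)) :
    Integrable (fun u => F (sg ta u)) (gam (Io n × Io n)) ∧
    ∫ u, F (sg ta u) ∂(gam (Io n × Io n)) = ∫ a, F a * ww ta a ∂(mm n) := by
  have hw := ww_meas ta
  have hw' : Measurable fun a => - ww ta a := hw.neg
  have hwi : Integrable (ww ta) (mm n) := (poly_int0 ta hta (Del n)).1.div_const _
  have := rp_fin _ hw hwi
  have := rp_fin _ hw' (by exact hwi.neg)
  have : IsProbabilityMeasure ((gam (Io n × Io n)).map (sg ta)) := Measure.isProbabilityMeasure_map (sg_meas ta).aemeasurable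
  set μ := (gam (Io n × Io n)).map (sg ta)
  obtain ⟨ε, hε, t', ht', he⟩ := exists_eps ta hta
  have hT : 0 ≤ ∑ i, ta i := Finset.sum_nonneg fun j _ => (hta j).le
  set δ := min ε (1 / (4 * (∑ i, ta i + 1))) with hδ
  have hδ0 : 0 < δ := lt_min hε (by positivity)
  have hδ2 : δ * ∑ i, ta i ≤ 1/4 := by
    calc δ * ∑ i, ta i ≤ (1 / (4 * (∑ i, ta i + 1))) * ∑ i, ta i := mul_le_mul_of_nonneg_right (min_le_right _ _) hT
      _ ≤ 1/4 := by rw [div_mul_eq_mul_div, div_le_iff₀ (by positivity)]; linarith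
  have hexpm : Measurable (fun a : Fin n → ℝ => Real.exp (δ * ∑ j, |a j|)) := by fun_prop
  have hexp : Integrable (fun a : Fin n → ℝ => Real.exp (δ * ∑ j, |a j|) * ww ta a) (mm n) := by
    refine ((poly_int0 t' ht' (Del n)).1.div_const (cc ta)).mono (hexpm.mul hw).aestronglyMeasurable ?_
    filter_upwards [mm_pos] with a ha
    have hs : 0 ≤ ∑ j, |a j| := Finset.sum_nonneg fun j _ => abs_nonneg _
    rw [← he a ha, ww, ← mul_div_assoc, norm_div, norm_div]
    refine div_le_div_of_nonneg_right ?_ (norm_nonneg _)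
    rw [norm_mul, norm_mul, norm_mul, norm_mul, mul_left_comm]
    refine mul_le_mul_of_nonneg_left (mul_le_mul_of_nonneg_right ?_ (norm_nonneg _)) (norm_nonneg _)
    simp only [Real.norm_eq_abs, Real.abs_exp, Real.exp_le_exp]
    exact mul_le_mul_of_nonneg_right (min_le_left _ _) hs
  have hneg : Integrable (fun a : Fin n → ℝ => Real.exp (δ * ∑ j, |a j|) * (- ww ta a)) (mm n) := by simpa using hexp.neg
  have hsym : symM (μ + rp n (fun a => - ww ta a)) = symM (rp n (ww ta)) := by
    refine symM_eq _ _ δ hδ0 ?_ (rp_int _ hw _ hexpm hexp) ?_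
    · exact (sg_exp ta hta δ hδ0.le hδ2).add_measure (rp_int _ hw' _ hexpm hneg)
    · intro h hh
      obtain ⟨i1, i2, i3⟩ := mom_sym ta hta hinj h hh
      have hm : Measurable fun a : Fin n → ℝ => eval (fun j => a j ^ 2) h := by
        have : Continuous fun a : Fin n → ℝ => eval (fun j => a j ^ 2) h := (MvPolynomial.continuous_eval h).comp (by fun_prop)
        exact this.measurable
      rw [rp_diff _ hw _ hm i2, integral_add_measure (μ := μ) ((integrable_map_measure hm.aestronglyMeasurable (sg_meas ta).aemeasurable).2 i1)
        (rp_int _ hw' _ hm (by simpa using i2.neg)), integral_map (sg_meas ta).aemeasurable hm.aestronglyMeasurable, i3, add_comm]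
  have hmap := map_eq _ _ hsym F hF hi
  have j1 := rp_int _ hw F hF hFw
  have j1' : Integrable id ((rp n (ww ta)).map F) := (integrable_map_measure measurable_id.aestronglyMeasurable hF.aemeasurable).2 j1
  rw [← hmap] at j1'
  have j2 := (integrable_map_measure measurable_id.aestronglyMeasurable hF.aemeasurable).1 j1'
  have j3 : Integrable F (μ + rp n (fun a => - ww ta a)) := j2
  have j4 := integrable_add_measure.1 j3
  refine ⟨(integrable_map_measure hF.aestronglyMeasurable (sg_meas ta).aemeasurable).1 j4.1, ?_⟩
  have k1 : ∫ a, F a ∂(μ + rp n (fun a => - ww ta a)) = ∫ a, F a ∂(rp n (ww ta)) := by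
    have := congrArg (fun m : Measure ℝ => ∫ x, id x ∂m) hmap
    beta_reduce at this
    rwa [integral_map hF.aemeasurable measurable_id.aestronglyMeasurable, integral_map hF.aemeasurable measurable_id.aestronglyMeasurable] at this
  rw [integral_add_measure j4.1 j4.2, rp_diff _ hw F hF hFw, add_comm] at k1
  have k2 := add_left_cancel k1
  rwa [integral_map (sg_meas ta).aemeasurable hF.aestronglyMeasurable] at k2
end GinP

namespace GinP
open MvPolynomial ProbabilityTheory
variable {n : ℕ}

def Wt (ν : ℝ) (ta a : Fin n → ℝ) : ℝ := ((∏ j, a j ^ 2) / ∏ j, ta j ^ 2) ^ ν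

lemma det_sg (ta : Fin n → ℝ) (hta : ∀ j, 0 < ta j) (u : Io n × Io n → ℝ) (hu : (gm u).det ≠ 0) :
    (gm u * (gm u)ᵀ).det = (∏ j, sg ta u j ^ 2) / ∏ j, ta j ^ 2 := by
  obtain ⟨k, h1, h2, h3, h4⟩ := sg_spec ta hta u hu
  have hT : 0 < ∏ j, ta j ^ 2 := Finset.prod_pos fun j _ => by have := hta j; positivity
  have e1 : (Xg ta u).det = (Dm (sg ta u)).det := by
    rw [h4, Matrix.det_mul, Matrix.det_mul, mul_right_comm, ← Matrix.det_mul, h2, Matrix.det_one, one_mul]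
  rw [Xg, Matrix.det_mul, Matrix.det_mul, Matrix.det_transpose] at e1
  have e2 := congrArg (fun x => x ^ 2) e1
  simp only [mul_pow, Dm_det_sq] at e2
  rw [Matrix.det_mul, Matrix.det_transpose, eq_div_iff hT.ne']
  refine (pow_left_inj₀ (mul_nonneg (mul_self_nonneg _) hT.le) (Finset.prod_nonneg fun j _ => sq_nonneg _) two_ne_zero).1 ?_
  rw [← e2]; ring

lemma Wt_pos (ν : ℝ) (ta a : Fin n → ℝ) (hta : ∀ j, 0 < ta j) (ha : ∀ j, 0 < a j) :
    Wt ν ta a = (∏ j, a j ^ (2*ν)) / ∏ j, ta j ^ (2*ν) := by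
  have h : ∀ b : Fin n → ℝ, (∀ j, 0 < b j) → (∏ j, b j ^ 2) ^ ν = ∏ j, b j ^ (2*ν) := by
    intro b hb
    rw [← Real.finsetProd_rpow _ _ fun j _ => sq_nonneg _]
    refine Finset.prod_congr rfl fun j _ => ?_
    rw [Real.rpow_mul (hb j).le]; norm_num
  rw [Wt, Real.div_rpow (Finset.prod_nonneg fun j _ => sq_nonneg _) (Finset.prod_nonneg fun j _ => sq_nonneg _), h a ha, h ta hta]

lemma Wt_act (ν : ℝ) (ta a : Fin n → ℝ) (g : Bn n) : Wt ν ta (act g a) = Wt ν ta a := by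
  have : ∀ j, act g a j ^ 2 = a (g.2 j) ^ 2 := by
    intro j
    rw [act, mul_pow]
    rcases Int.units_eq_one_or (g.1 j) with h | h <;> simp [h]
  rw [Wt, Wt]
  simp_rw [this]
  rw [Equiv.prod_comp g.2 (fun j => a j ^ 2)]

def Qf (ν : ℝ) (a : Fin n → ℝ) : ℝ := (∏ j, a j ^ (2*ν)) * vdm (fun j => a j ^ 2)

lemma Q_int (ν : ℝ) (hν : -(1/2:ℝ) < ν) (ta : Fin n → ℝ) (hta : ∀ j, 0 < ta j) :
    Integrable (fun a => Qf ν a * ee ta a) (mm n) ∧ ∫ a, Qf ν a * ee ta a ∂(mm n) =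
      (∏ l ∈ Finset.range n, Real.Gamma (2*ν + 2 * l + 1)) * (∏ j, ta j ^ (2*ν + 1)) * vdm (fun j => ta j ^ 2) := by
  have := poly_int ta (2*ν) hta (by linarith) (Del n)
  rw [lamr_Del _ _ hta] at this
  simp only [eval_Del] at this
  exact this

lemma FQ_int (ν : ℝ) (hν : -(1/2:ℝ) < ν) (ta : Fin n → ℝ) (hta : ∀ j, 0 < ta j) (F : (Fin n → ℝ) → ℝ) (hF : Measurable F) (C : ℝ) (hC : ∀ a, |F a| ≤ C) :
    Integrable (fun a => F a * (Qf ν a * ee ta a)) (mm n) :=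
  (Q_int ν hν ta hta).1.bdd_mul hF.aestronglyMeasurable (ae_of_all _ hC)

theorem core (ν : ℝ) (hν : -(1/2:ℝ) < ν) (ta : Fin n → ℝ) (hta : ∀ j, 0 < ta j) (hinj : Function.Injective ta)
    (F : (Fin n → ℝ) → ℝ) (hF : Measurable F) (hi : ∀ g : Bn n, ∀ a, F (act g a) = F a) (C : ℝ) (hC : ∀ a, |F a| ≤ C) :
    Integrable (fun u => F (sg ta u) * (gm u * (gm u)ᵀ).det ^ ν) (gam (Io n × Io n)) ∧
    ∫ u, F (sg ta u) * (gm u * (gm u)ᵀ).det ^ ν ∂(gam (Io n × Io n)) =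
      (∫ a, F a * (Qf ν a * ee ta a) ∂(mm n)) / ((∏ j, ta j ^ (2*ν)) * cc ta) := by
  have e1 : ∀ᵐ a ∂(mm n), (F a * Wt ν ta a) * ww ta a = F a * (Qf ν a * ee ta a) / ((∏ j, ta j ^ (2*ν)) * cc ta) := by
    filter_upwards [mm_pos] with a ha
    rw [Wt_pos ν ta a hta ha, ww, Qf, eval_Del]
    have h1 : ∏ j, ta j ^ (2*ν) ≠ 0 := Finset.prod_ne_zero_iff.2 fun j _ => (Real.rpow_pos_of_pos (hta j) _).ne'
    have h2 := cc_ne ta hta hinj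
    field_simp
  have e2 : ∀ᵐ u ∂(gam (Io n × Io n)), F (sg ta u) * Wt ν ta (sg ta u) = F (sg ta u) * (gm u * (gm u)ᵀ).det ^ ν := by
    filter_upwards [gam_det] with u hu
    rw [det_sg ta hta u hu, Wt]
  have hW : Measurable (Wt ν ta) := by unfold Wt; fun_prop
  have i1 := (FQ_int ν hν ta hta F hF C hC).div_const ((∏ j, ta j ^ (2*ν)) * cc ta)
  obtain ⟨j1, j2⟩ := transfer ta hta hinj (fun a => F a * Wt ν ta a) (hF.mul hW) (fun g a => by simp only [hi, Wt_act]) (i1.congr (e1.mono fun _ h => h.symm))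
  refine ⟨j1.congr e2, ?_⟩
  rw [← integral_congr_ae e2, j2, integral_congr_ae e1, integral_div]

lemma vdm_perm (x : Fin n → ℝ) (σ : Equiv.Perm (Fin n)) : vdm (fun j => x (σ j)) = (Equiv.Perm.sign σ : ℤ) * vdm x := by
  rw [vdm_eq, vdm_eq, ← Matrix.det_permute]
  rfl

lemma Q_perm (ν : ℝ) (a : Fin n → ℝ) (σ : Equiv.Perm (Fin n)) : Qf ν (fun j => a (σ j)) = (Equiv.Perm.sign σ : ℤ) * Qf ν a := by
  rw [Qf, Qf, vdm_perm (fun j => a j ^ 2) σ, Equiv.prod_comp σ (fun j => a j ^ (2*ν))]; ring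

lemma mm_perm (σ : Equiv.Perm (Fin n)) : MeasurePreserving (MeasurableEquiv.arrowCongr' σ.symm (MeasurableEquiv.refl ℝ)) (mm n) (mm n) := by
  rw [mm_eq]
  exact measurePreserving_arrowCongr' _ _ _ _ fun i => MeasurePreserving.id _

lemma det_int (ν : ℝ) (hν : -(1/2:ℝ) < ν) (ta : Fin n → ℝ) (hta : ∀ j, 0 < ta j)
    (F : (Fin n → ℝ) → ℝ) (hF : Measurable F) (hi : ∀ (σ : Equiv.Perm (Fin n)) a, F (fun j => a (σ j)) = F a) (C : ℝ) (hC : ∀ a, |F a| ≤ C) :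
    ∫ a, F a * (Qf ν a * (Matrix.of fun j k : Fin n => Real.exp (-(a j) / ta k)).det) ∂(mm n) = n.factorial * ∫ a, F a * (Qf ν a * ee ta a) ∂(mm n) := by
  have i0 := FQ_int ν hν ta hta F hF C hC
  have e : ∀ a, F a * (Qf ν a * (Matrix.of fun j k : Fin n => Real.exp (-(a j) / ta k)).det) =
      ∑ σ : Equiv.Perm (Fin n), (fun a => F a * (Qf ν a * ee ta a)) (MeasurableEquiv.arrowCongr' σ.symm (MeasurableEquiv.refl ℝ) a) := by
    intro a
    rw [Matrix.det_apply', Finset.mul_sum, Finset.mul_sum]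
    refine Finset.sum_congr rfl fun σ _ => ?_
    have : (MeasurableEquiv.arrowCongr' σ.symm (MeasurableEquiv.refl ℝ) a) = fun j => a (σ j) := rfl
    rw [this]
    simp only [hi, Q_perm]
    have s2 : (((Equiv.Perm.sign σ : ℤˣ) : ℤ) : ℝ) * ((Equiv.Perm.sign σ : ℤ) : ℝ) = 1 := by
      rcases Int.units_eq_one_or (Equiv.Perm.sign σ) with h | h <;> simp [h]
    simp only [Matrix.of_apply, ee]
    ring
  simp_rw [e]
  rw [integral_finsetSum]
  · have : ∀ σ : Equiv.Perm (Fin n), ∫ a, (fun a => F a * (Qf ν a * ee ta a)) (MeasurableEquiv.arrowCongr' σ.symm (MeasurableEquiv.refl ℝ) a) ∂(mm n) = ∫ a, F a * (Qf ν a * ee ta a) ∂(mm n) :=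
      fun σ => (mm_perm σ).integral_comp' (fun a => F a * (Qf ν a * ee ta a))
    simp_rw [this]
    simp [Finset.card_univ, Fintype.card_perm]
  · intro σ _
    exact (mm_perm σ).integrable_comp_of_integrable i0
end GinP

namespace GinP
open MvPolynomial ProbabilityTheory
variable {n : ℕ}

def eo (n : ℕ) : Io n ≃ Fin (2 * n) := finProdFinEquiv.trans (finCongr (Nat.mul_comm n 2))

lemma eo_val (p : Io n) : (eo n p : ℕ) = p.2 + 2 * p.1 := by simp [eo, finProdFinEquiv]

lemma Dmat_eo (a : Fin n → ℝ) : (Dmat a).submatrix (eo n) (eo n) = Dm a := by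
  ext ⟨i, r⟩ ⟨j, s⟩
  have hd : ∀ (i : Fin n) (r : Fin 2), (eo n (i, r) : ℕ) / 2 = i := by intro i r; rw [eo_val]; have := r.2; simp only; omega
  have hm : ∀ (i : Fin n) (r : Fin 2), (eo n (i, r) : ℕ) % 2 = r := by intro i r; rw [eo_val]; have := r.2; simp only; omega
  simp only [Matrix.submatrix_apply, Dmat, Matrix.of_apply, Dm, hd, hm, Fin.val_inj]
  congr 1
  fin_cases r <;> fin_cases s <;> simp

def Psi (n : ℕ) : (Fin (2*n) → Fin (2*n) → ℝ) ≃ᵐ (Io n × Io n → ℝ) where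
  toFun u := fun pq => u (eo n pq.1) (eo n pq.2)
  invFun v := fun i j => v ((eo n).symm i, (eo n).symm j)
  left_inv u := by ext i j; simp
  right_inv v := by ext pq; simp
  measurable_toFun := by
    refine measurable_pi_iff.2 fun pq => ?_
    exact (measurable_pi_apply (eo n pq.2)).comp (measurable_pi_apply (eo n pq.1))
  measurable_invFun := by
    refine measurable_pi_iff.2 fun i => measurable_pi_iff.2 fun j => ?_
    exact measurable_pi_apply _

lemma Psi_apply (u : Fin (2*n) → Fin (2*n) → ℝ) (pq : Io n × Io n) : Psi n u pq = u (eo n pq.1) (eo n pq.2) := rfl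

lemma Psi_mp : MeasurePreserving (Psi n) volume volume := by
  refine ⟨(Psi n).measurable, ?_⟩
  rw [volume_pi (α := fun _ : Io n × Io n => ℝ)]
  refine (Measure.pi_eq fun s hs => ?_).symm
  rw [MeasurableEquiv.map_apply]
  have : Psi n ⁻¹' (Set.univ.pi s) = Set.univ.pi fun i => Set.univ.pi fun j => s ((eo n).symm i, (eo n).symm j) := by
    ext u
    simp only [Set.mem_preimage, Set.mem_pi, Set.mem_univ, true_implies, Psi_apply]
    constructor
    · intro h i j
      simpa using h ((eo n).symm i, (eo n).symm j)
    · intro h pq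
      simpa using h (eo n pq.1) (eo n pq.2)
  rw [this, volume_pi_pi, Fintype.prod_prod_type, ← Equiv.prod_comp (eo n)]
  refine Finset.prod_congr rfl fun p _ => ?_
  rw [volume_pi_pi, ← Equiv.prod_comp (eo n)]
  simp

lemma gm_Psi (u : Fin (2*n) → Fin (2*n) → ℝ) : (Matrix.of u).submatrix (eo n) (eo n) = gm (Psi n u) := rfl

lemma gg_Psi (u : Fin (2*n) → Fin (2*n) → ℝ) : (Matrix.of u * (Matrix.of u)ᵀ).submatrix (eo n) (eo n) = gm (Psi n u) * (gm (Psi n u))ᵀ := by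
  rw [← Matrix.submatrix_mul_equiv _ _ _ (eo n), ← gm_Psi]; rfl

lemma X_Psi (ta : Fin n → ℝ) (u : Fin (2*n) → Fin (2*n) → ℝ) : (Matrix.of u * Dmat ta * (Matrix.of u)ᵀ).submatrix (eo n) (eo n) = Xg ta (Psi n u) := by
  rw [← Matrix.submatrix_mul_equiv _ _ _ (eo n), ← Matrix.submatrix_mul_equiv _ _ _ (eo n), Dmat_eo, Xg, ← gm_Psi]; rfl

def Kc (n : ℕ) : ℝ := (√(2 * Real.pi)) ^ (Fintype.card (Io n × Io n))

lemma Kc_pos : 0 < Kc n := by unfold Kc; have := Real.pi_pos; positivity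

lemma gin_Psi (ν : ℝ) (u : Fin (2*n) → Fin (2*n) → ℝ) :
    ginDens n ν u = Kc n * ((gm (Psi n u) * (gm (Psi n u))ᵀ).det ^ ν * gd (Psi n u)) := by
  have h1 : (Matrix.of u * (Matrix.of u)ᵀ).det = (gm (Psi n u) * (gm (Psi n u))ᵀ).det := by
    rw [← gg_Psi, Matrix.det_submatrix_equiv_self]
  have h2 : (Matrix.of u * (Matrix.of u)ᵀ).trace = (gm (Psi n u) * (gm (Psi n u))ᵀ).trace := by
    rw [← gg_Psi]
    exact (Equiv.sum_comp (eo n) (fun i => (Matrix.of u * (Matrix.of u)ᵀ) i i)).symm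
  rw [ginDens, h1, h2, tr_gm, gd_eq, Kc]
  have h3 : √(2 * Real.pi) ≠ 0 := by have := Real.pi_pos; positivity
  rw [inv_pow]
  field_simp

lemma gin_int (ν : ℝ) (f : (Io n × Io n → ℝ) → ℝ)
    (hf : Integrable (fun v => f v * (gm v * (gm v)ᵀ).det ^ ν) (gam (Io n × Io n))) :
    Integrable (fun u => f (Psi n u) * ginDens n ν u) ∧
    ∫ u, f (Psi n u) * ginDens n ν u = Kc n * ∫ v, f v * (gm v * (gm v)ᵀ).det ^ ν ∂(gam (Io n × Io n)) := by
  have e : ∀ u, f (Psi n u) * ginDens n ν u = (fun v => Kc n * (f v * (gm v * (gm v)ᵀ).det ^ ν * gd v)) (Psi n u) := by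
    intro u; rw [gin_Psi]; ring
  simp_rw [e]
  have h := ((gam_integrable _).1 hf).const_mul (Kc n)
  refine ⟨Psi_mp.integrable_comp_of_integrable h, ?_⟩
  rw [Psi_mp.integral_comp' (fun v => Kc n * (f v * (gm v * (gm v)ᵀ).det ^ ν * gd v)), gam_integral, integral_const_mul]

lemma phi_inv (φ : Matrix (Fin (2*n)) (Fin (2*n)) ℝ → ℝ) (hφ : IsInvTest (2*n) φ) (k X : Matrix (Io n) (Io n) ℝ) (hk : kᵀ * k = 1) (hX : Xᵀ = -X) :
    φ ((k * X * kᵀ).submatrix (eo n).symm (eo n).symm) = φ (X.submatrix (eo n).symm (eo n).symm) := by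
  have hk2 : k * kᵀ = 1 := mul_eq_one_comm.1 hk
  rw [← Matrix.submatrix_mul_equiv _ _ _ (eo n).symm, ← Matrix.submatrix_mul_equiv _ _ _ (eo n).symm, ← Matrix.transpose_submatrix]
  refine hφ.2.2 _ ?_ _ ?_
  · rw [Matrix.transpose_submatrix, hX]; rfl
  · rw [Matrix.mem_orthogonalGroup_iff, Matrix.transpose_submatrix,
      Matrix.submatrix_mul_equiv, hk2, Matrix.submatrix_one_equiv]

def Fp (φ : Matrix (Fin (2*n)) (Fin (2*n)) ℝ → ℝ) (a : Fin n → ℝ) : ℝ := φ (Dmat a)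

lemma Fp_eq (φ : Matrix (Fin (2*n)) (Fin (2*n)) ℝ → ℝ) (a : Fin n → ℝ) : Fp φ a = φ ((Dm a).submatrix (eo n).symm (eo n).symm) := by
  rw [Fp, ← Dmat_eo]; simp

lemma Fp_meas (φ : Matrix (Fin (2*n)) (Fin (2*n)) ℝ → ℝ) (hφ : Measurable φ) : Measurable (Fp φ) := by
  refine hφ.comp ?_
  have : Measurable fun (a : Fin n → ℝ) (i j : Fin (2*n)) => Dmat a i j := by
    refine measurable_pi_iff.2 fun i => measurable_pi_iff.2 fun j => ?_
    simp only [Dmat, Matrix.of_apply]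
    split_ifs <;> fun_prop
  exact this

lemma Fp_act (φ : Matrix (Fin (2*n)) (Fin (2*n)) ℝ → ℝ) (hφ : IsInvTest (2*n) φ) (g : Bn n) (a : Fin n → ℝ) : Fp φ (act g a) = Fp φ a := by
  have hε : ∀ j, (((g.1 j : ℤ) : ℝ)) * ((g.1 j : ℤ) : ℝ) = 1 := by
    intro j; rcases Int.units_eq_one_or (g.1 j) with h | h <;> simp [h]
  rw [Fp_eq, Fp_eq]
  have : Dm (act g a) = Rb g.2 (fun j => ((g.1 j : ℤ) : ℝ)) * Dm a * (Rb g.2 (fun j => ((g.1 j : ℤ) : ℝ)))ᵀ := by rw [Rb_Dm]; rfl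
  rw [this]
  exact phi_inv φ hφ _ _ (mul_eq_one_comm.1 (Rb_orth _ _ hε)) (Dm_t a)

lemma Fp_sg (φ : Matrix (Fin (2*n)) (Fin (2*n)) ℝ → ℝ) (hφ : IsInvTest (2*n) φ) (ta : Fin n → ℝ) (hta : ∀ j, 0 < ta j) (u : Fin (2*n) → Fin (2*n) → ℝ)
    (hu : (gm (Psi n u)).det ≠ 0) : Fp φ (sg ta (Psi n u)) = φ (Matrix.of u * Dmat ta * (Matrix.of u)ᵀ) := by
  obtain ⟨k, h1, h2, h3, h4⟩ := sg_spec ta hta _ hu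
  rw [Fp_eq, ← phi_inv φ hφ k _ h1 (Dm_t _), ← h4, ← X_Psi]
  simp

lemma Psi_det : ∀ᵐ u : Fin (2*n) → Fin (2*n) → ℝ, (gm (Psi n u)).det ≠ 0 :=
  Psi_mp.quasiMeasurePreserving.ae det_null
end GinP

/-- Corollary 4.1: jPDF of the singular values of `g D(ã) gᵀ` for
`g` from the induced real Ginibre ensemble. -/
theorem ginibre_times_fixed_matrix (n : ℕ) (hn : 1 ≤ n)
    (ν : ℝ) (hν : -(1 / 2 : ℝ) < ν)
    (ta : Fin n → ℝ) (hta : ∀ j, 0 < ta j) (hta' : Function.Injective ta) :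
    Integrable (ginDens n ν) ∧
    0 < (∫ u : Fin (2 * n) → Fin (2 * n) → ℝ, ginDens n ν u) ∧
    ∀ φ : Matrix (Fin (2 * n)) (Fin (2 * n)) ℝ → ℝ, IsInvTest (2 * n) φ →
      (1 / (∫ u : Fin (2 * n) → Fin (2 * n) → ℝ, ginDens n ν u)) *
          (∫ u : Fin (2 * n) → Fin (2 * n) → ℝ,
            φ (Matrix.of u * Dmat ta * (Matrix.of u)ᵀ) * ginDens n ν u) =
        ∫ a in {a : Fin n → ℝ | ∀ j, 0 < a j},
          φ (Dmat a) *
            ((1 / (Nat.factorial n : ℝ)) *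
              (∏ l ∈ Finset.range n, 1 / Real.Gamma (2 * ν + 2 * l + 1)) *
              ((vdm fun j => (a j) ^ 2) / (vdm fun j => (ta j) ^ 2)) *
              ((∏ j, (a j) ^ (2 * ν)) / (∏ j, (ta j) ^ (2 * ν + 1))) *
              (Matrix.of fun j k : Fin n => Real.exp (-(a j) / ta k)).det) := by
  obtain ⟨i1, i2⟩ := GinP.core ν hν ta hta hta' (fun _ => 1) measurable_const (fun _ _ => rfl) 1 (fun _ => by simp)
  obtain ⟨j1, j2⟩ := GinP.gin_int ν (fun _ => 1) i1
  simp only [one_mul] at i2 j1 j2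
  have hM0 : (∏ j, ta j ^ (2*ν)) * GinP.cc ta ≠ 0 := mul_ne_zero (Finset.prod_ne_zero_iff.2 fun j _ => (Real.rpow_pos_of_pos (hta j) _).ne') (GinP.cc_ne ta hta hta')
  have hG : ∀ l ∈ Finset.range n, Real.Gamma (2 * ν + 2 * (l:ℝ) + 1) ≠ 0 := fun l _ => (Real.Gamma_pos_of_pos (by have : (0:ℝ) ≤ l := Nat.cast_nonneg l; linarith)).ne'
  have hG' := Finset.prod_ne_zero_iff.2 hG
  have hta1 : ∏ j, ta j ^ (2*ν+1) ≠ 0 := Finset.prod_ne_zero_iff.2 fun j _ => (Real.rpow_pos_of_pos (hta j) _).ne'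
  have hV := GinP.Del_ne ta hta hta'
  have hQ := (GinP.Q_int ν hν ta hta).2
  rw [i2, hQ] at j2
  have hK := (GinP.Kc_pos (n := n)).ne'
  have hZ : (∫ u : Fin (2 * n) → Fin (2 * n) → ℝ, ginDens n ν u) ≠ 0 := by
    rw [j2]
    exact mul_ne_zero hK (div_ne_zero (mul_ne_zero (mul_ne_zero hG' hta1) hV) hM0)
  refine ⟨j1, lt_of_le_of_ne (integral_nonneg fun u => ?_) hZ.symm, ?_⟩
  · rw [ginDens, Matrix.det_mul, Matrix.det_transpose]
    exact mul_nonneg (Real.rpow_nonneg (mul_self_nonneg _) _) (Real.exp_pos _).le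
  intro φ hφ
  obtain ⟨C, hC⟩ := hφ.2.1
  have hFm := GinP.Fp_meas φ hφ.1
  have hFC : ∀ a, |GinP.Fp φ a| ≤ C := fun a => hC _
  obtain ⟨k1, k2⟩ := GinP.core ν hν ta hta hta' (GinP.Fp φ) hFm (GinP.Fp_act φ hφ) C hFC
  obtain ⟨l1, l2⟩ := GinP.gin_int ν (fun v => GinP.Fp φ (GinP.sg ta v)) k1
  have e1 : ∫ u : Fin (2 * n) → Fin (2 * n) → ℝ, φ (Matrix.of u * Dmat ta * (Matrix.of u)ᵀ) * ginDens n ν u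
      = ∫ u, GinP.Fp φ (GinP.sg ta (GinP.Psi n u)) * ginDens n ν u := by
    refine integral_congr_ae ?_
    filter_upwards [GinP.Psi_det] with u hu
    rw [GinP.Fp_sg φ hφ ta hta u hu]
  have hperm : ∀ (σ : Equiv.Perm (Fin n)) a, GinP.Fp φ (fun j => a (σ j)) = GinP.Fp φ a := by
    intro σ a
    rw [← GinP.Fp_act φ hφ (1, σ) a]
    congr 1; ext j; simp [GinP.act]
  have hd := GinP.det_int ν hν ta hta (GinP.Fp φ) hFm hperm C hFC
  have hf : (n.factorial : ℝ) ≠ 0 := by exact_mod_cast n.factorial_ne_zero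
  set A := ∫ a, GinP.Fp φ a * (GinP.Qf ν a * GinP.ee ta a) ∂(GinP.mm n) with hA
  set L := (∏ l ∈ Finset.range n, Real.Gamma (2*ν + 2 * (l:ℝ) + 1)) * (∏ j, ta j ^ (2*ν + 1)) * vdm (fun j => ta j ^ 2) with hL
  have hL0 : L ≠ 0 := mul_ne_zero (mul_ne_zero hG' hta1) hV
  have er : ∀ a : Fin n → ℝ, φ (Dmat a) *
            ((1 / (Nat.factorial n : ℝ)) *
              (∏ l ∈ Finset.range n, 1 / Real.Gamma (2 * ν + 2 * l + 1)) *
              ((vdm fun j => (a j) ^ 2) / (vdm fun j => (ta j) ^ 2)) *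
              ((∏ j, (a j) ^ (2 * ν)) / (∏ j, (ta j) ^ (2 * ν + 1))) *
              (Matrix.of fun j k : Fin n => Real.exp (-(a j) / ta k)).det) =
        (1 / (n.factorial * L)) * (GinP.Fp φ a * (GinP.Qf ν a * (Matrix.of fun j k : Fin n => Real.exp (-(a j) / ta k)).det)) := by
    intro a
    rw [GinP.Fp, GinP.Qf, hL, Finset.prod_div_distrib, Finset.prod_const_one]
    field_simp
  simp_rw [er]
  rw [integral_const_mul]
  change _ = _ * ∫ a, GinP.Fp φ a * (GinP.Qf ν a * (Matrix.of fun j k : Fin n => Real.exp (-(a j) / ta k)).det) ∂(GinP.mm n)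
  rw [hd, e1, l2, k2, j2]
  clear_value A L
  generalize (∏ j, ta j ^ (2*ν)) * GinP.cc ta = M at hM0 ⊢
  field_simp

end
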